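/- Let G be a connected planar graph on n ≥ 5 vertices and let r ∈ V(G) be a vertex of degree exactly 4 such that at most one neighbour of r has degree greater than 5. Then sn₂(G, r) > n/6 − 1. -/

import Mathlib

/-- The set of vertices on fire after `t` fire-spread rounds, when the fire breaks out
at `v` and the firefighters protect the vertices of `P s` in round `s + 1` (protection
happens just before the `s`-th spread step and is permanent). -/
def burnedSet {V : Type*} (G : SimpleGraph V) (v : V) (P : ℕ → Set V) : ℕ → Set V
  | 0 => {v}
  | t + 1 => burnedSet G v P t ∪
      {w | (∃ u ∈ burnedSet G v P t, G.Adj u w) ∧ ∀ s ≤ t, w ∉ P s}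

/-- A strategy `P` is valid for the per-round budgets `b` if in each round it protects
at most `b t` vertices, none of which are already on fire. -/
def ValidStrategy {V : Type*} (G : SimpleGraph V) (b : ℕ → ℕ) (v : V) (P : ℕ → Set V) : Prop :=
  ∀ t, (P t).Finite ∧ (P t).ncard ≤ b t ∧ Disjoint (P t) (burnedSet G v P t)

/-- `sn G b v` is the maximum number of vertices that can be saved (i.e. that never
catch fire) when the fire breaks out at `v` and the firefighters may protect at most
`b t` vertices in round `t + 1`. -/
noncomputable def sn {V : Type*} (G : SimpleGraph V) (b : ℕ → ℕ) (v : V) : ℕ :=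
  sSup {m | ∃ P, ValidStrategy G b v P ∧
    m = Nat.card {w : V | ∀ t, w ∉ burnedSet G v P t}}

/-- The surviving rate of `G` with per-round budgets `b` : the expected fraction of
vertices that can be saved when the starting vertex is chosen uniformly at random. -/
noncomputable def survivingRate {V : Type*} [Fintype V] (G : SimpleGraph V) (b : ℕ → ℕ) : ℝ :=
  (∑ v : V, (sn G b v : ℝ)) / (Fintype.card V : ℝ) ^ 2

/-- A plane embedding of a simple graph: vertices are points of the plane and edges are
simple arcs between their endpoints, such that arcs avoid all other vertices and two
arcs of distinct edges meet only in common endpoints. -/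
structure PlaneEmbedding {V : Type*} (G : SimpleGraph V) where
  pos : V → ℝ × ℝ
  arc : V → V → ℝ → ℝ × ℝ
  pos_inj : Function.Injective pos
  arc_cont : ∀ ⦃u v⦄, G.Adj u v → Continuous (arc u v)
  arc_injOn : ∀ ⦃u v⦄, G.Adj u v → Set.InjOn (arc u v) (Set.Icc 0 1)
  arc_zero : ∀ ⦃u v⦄, G.Adj u v → arc u v 0 = pos u
  arc_one : ∀ ⦃u v⦄, G.Adj u v → arc u v 1 = pos v
  arc_symm : ∀ ⦃u v⦄, G.Adj u v → ∀ t, arc v u t = arc u v (1 - t)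
  arc_avoid : ∀ ⦃u v⦄, G.Adj u v → ∀ w : V, pos w ∉ arc u v '' Set.Ioo 0 1
  arc_meet : ∀ ⦃u v x y⦄, G.Adj u v → G.Adj x y → s(u, v) ≠ s(x, y) →
      arc u v '' Set.Icc 0 1 ∩ arc x y '' Set.Icc 0 1 ⊆
        ({pos u, pos v} : Set (ℝ × ℝ)) ∩ {pos x, pos y}

/-- A graph is planar if it admits a plane embedding. -/
def IsPlanar {V : Type*} (G : SimpleGraph V) : Prop :=
  Nonempty (PlaneEmbedding G)

/-!
Fix a breadth-first search tree rooted at `r`. A tree path has one vertex at each distance from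
`r`, so two firefighters can protect the *fence* of two vertices `x` and `z`, the union of their
paths to `r`, always ahead of the fire. This saves every union of components off the fence that
contains no neighbour of `r`. If `x` and `z` lie in the same branch, one firefighter is idle in the
first round and can take care of one neighbour of `r`. Since `r` has only four neighbours, all but
one of them of degree at most five, two components off the same fence cannot both be too large to
be dealt with in this way; delaying the protection of one branch until the second round is what
makes this work, and a `K₃,₃` minor is what appears if it fails.

Suppose `n > 6 sn₂ + 1`. Then some component off some fence is *critical*, that is, too large. Take
such a component `B` off the fence of `x` and `z` with `B` minimal. As no `K₃,₃` or `K₅` is a minor,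
there is an edge `b b'` with an end in `B` such that every component of what is left of `B` after
the removal of the paths of `b` and `b'` is attached to the fence of `b` and `b'`, to that of `x`
and `b`, or to that of `z` and `b'`. By minimality none of these components is critical. Hence
`V ∖ {r}` splits into the outside of `B` and three parts of `B`, each with at most `2 sn₂` vertices,
and with at most `sn₂` vertices unless it contains a neighbour of `r` off its fence. As the fences
already use two of the four neighbours of `r`, at most two of the four parts exceed `sn₂`, so
`n - 1 ≤ 6 sn₂`.

Planarity enters through the excluded minors only. In a drawing of `K₃,₃` or `K₅` by curves in the
plane, the turns of each curve around a vertex, counted as multiples of a full turn from a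
continuous choice of angles, are symmetric for disjoint edges; summed over all pairs of disjoint
edges they give a contradiction modulo 2.
-/

namespace Firefighter

/-! ### Winding numbers and loose drawings -/

section ContinuousLogarithm

open Complex

theorem exists_continuous_log {X : Type*} [TopologicalSpace X] [LocallyPathConnectedSpace X]
    [SimplyConnectedSpace X] {g : X → ℂ} (hg : Continuous g) (h0 : ∀ x, g x ≠ 0) :
    ∃ f : X → ℂ, Continuous f ∧ ∀ x, exp (f x) = g x := by
  obtain ⟨x₀⟩ : Nonempty X := inferInstance
  obtain ⟨F, ⟨-, hF⟩, -⟩ := isCoveringMapOn_exp.existsUnique_continuousMap_lifts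
    ⟨g, hg⟩ (a₀ := x₀) (exp_log (h0 x₀)) (by simpa using h0)
  exact ⟨F, F.continuous, congrFun hF⟩

theorem sub_eq_sub_of_exp_eq {X : Type*} [TopologicalSpace X] [PreconnectedSpace X]
    {f f' : X → ℂ} (hf : Continuous f) (hf' : Continuous f')
    (h : ∀ x, exp (f x) = exp (f' x)) (x y : X) : f x - f y = f' x - f' y := by
  obtain ⟨k, hk⟩ := exp_eq_exp_iff_exists_int.1 (h y)
  have hcover := isCoveringMapOn_exp.isCoveringMap_restrictPreimage
  have hlift := hcover.eq_of_comp_eq (g₁ := fun x => ⟨f x, exp_ne_zero _⟩)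
    (g₂ := fun x => ⟨f' x + k * (2 * Real.pi * I), exp_ne_zero _⟩) (by fun_prop) (by fun_prop)
    (funext fun x => Subtype.ext <|
      (h x).trans (exp_eq_exp_iff_exists_int.2 ⟨-k, by push_cast; ring⟩)) y (Subtype.ext hk)
  have hfx : f x = f' x + k * (2 * Real.pi * I) := congrArg Subtype.val (congrFun hlift x)
  rw [hfx, hk]
  ring

open Classical in
/-- The total change `f 1 - f 0` of a continuous logarithm `f` of `g` along the unit interval; it
does not depend on `f`. The value is `0` if `g` has no continuous logarithm. -/
noncomputable def logIncrement (g : ℝ → ℂ) : ℂ :=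
  if h : ∃ f : ℝ → ℂ, Continuous f ∧ ∀ x, exp (f x) = g x then h.choose 1 - h.choose 0 else 0

theorem logIncrement_eq {g f : ℝ → ℂ} (hf : Continuous f) (h : ∀ x, exp (f x) = g x) :
    logIncrement g = f 1 - f 0 := by
  have hlog : ∃ f : ℝ → ℂ, Continuous f ∧ ∀ x, exp (f x) = g x := ⟨f, hf, h⟩
  rw [logIncrement, dif_pos hlog]
  exact sub_eq_sub_of_exp_eq hlog.choose_spec.1 hf (fun x => by rw [hlog.choose_spec.2, h]) _ _

theorem exp_logIncrement {g : ℝ → ℂ} (hg : Continuous g) (h0 : ∀ x, g x ≠ 0) :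
    exp (logIncrement g) = g 1 / g 0 := by
  obtain ⟨f, hf, h⟩ := exists_continuous_log hg h0
  rw [logIncrement_eq hf h, exp_sub, h, h]

-- The four increments go around the boundary of the unit square, on which
-- `(s, t) ↦ e s - f t` has a continuous logarithm.
theorem logIncrement_square {e f : ℝ → ℂ} (he : Continuous e) (hf : Continuous f)
    (hne : ∀ s t, e s ≠ f t) :
    logIncrement (fun s => e s - f 0) + logIncrement (fun t => f t - e 1)
      - logIncrement (fun s => e s - f 1) - logIncrement (fun t => f t - e 0) = 0 := by
  obtain ⟨H, hH, hexp⟩ := exists_continuous_log (X := ℝ × ℝ) (g := fun x => e x.1 - f x.2)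
    (by fun_prop) (fun x => sub_ne_zero.2 (hne _ _))
  have horizontal (c : ℝ) : logIncrement (fun s => e s - f c) = H (1, c) - H (0, c) :=
    logIncrement_eq (f := fun s => H (s, c)) (by fun_prop) fun s => hexp (s, c)
  have vertical (c : ℝ) : logIncrement (fun t => f t - e c) = H (c, 1) - H (c, 0) := by
    rw [logIncrement_eq (f := fun t => H (c, t) + Real.pi * I) (by fun_prop) fun t => ?_]
    · ring
    · rw [exp_add, hexp, exp_pi_mul_I]
      ring
  rw [horizontal, horizontal, vertical, vertical]
  ring

end ContinuousLogarithm

/-- A drawing of `H` in the complex plane in which arcs of vertex-disjoint edges do not meet. Arcs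
of edges with a common end may cross, which makes such drawings easy to obtain from minors of a
plane graph. -/
structure LooseDrawing {ι : Type*} (H : SimpleGraph ι) where
  pos : ι → ℂ
  arc : ι → ι → ℝ → ℂ
  pos_injective : Function.Injective pos
  continuous_arc : ∀ {a b}, H.Adj a b → Continuous (arc a b)
  arc_zero : ∀ {a b}, H.Adj a b → arc a b 0 = pos a
  arc_one : ∀ {a b}, H.Adj a b → arc a b 1 = pos b
  arc_ne : ∀ {a b c d}, H.Adj a b → H.Adj c d → a ≠ c → a ≠ d → b ≠ c → b ≠ d →
    ∀ s t, arc a b s ≠ arc c d t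

/-- The sign `1` if `a < b`, and `-1` otherwise; it records which of the two logarithms of
`pos b - pos a` and `pos a - pos b` is the larger by `πi`. -/
def orderSign {ι : Type*} [LinearOrder ι] (a b : ι) : ℤ := if a < b then 1 else -1

namespace LooseDrawing

open Complex

variable {ι : Type*} {H : SimpleGraph ι}

/-- A logarithm of `pos w - pos v` for `v ≠ w`, such that exchanging `v < w` adds `πi`. -/
noncomputable def logDiff [LinearOrder ι] (D : LooseDrawing H) (v w : ι) : ℂ :=
  if v < w then log (D.pos w - D.pos v) else log (D.pos v - D.pos w) + Real.pi * I

theorem exp_logDiff [LinearOrder ι] (D : LooseDrawing H) {v w : ι} (h : v ≠ w) :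
    exp (D.logDiff v w) = D.pos w - D.pos v := by
  unfold logDiff
  split_ifs
  · exact exp_log (sub_ne_zero.2 (D.pos_injective.ne h.symm))
  · rw [exp_add, exp_log (sub_ne_zero.2 (D.pos_injective.ne h)), exp_pi_mul_I]
    ring

theorem logDiff_swap [LinearOrder ι] (D : LooseDrawing H) {v w : ι} (h : v ≠ w) :
    D.logDiff w v - D.logDiff v w = (orderSign v w : ℂ) * (Real.pi * I) := by
  unfold logDiff orderSign
  rcases lt_or_gt_of_ne h with h | h
  · rw [if_pos h, if_neg h.not_gt, if_pos h]
    push_cast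
    ring
  · rw [if_pos h, if_neg h.not_gt, if_neg h.not_gt]
    push_cast
    ring

theorem exists_logIncrement_eq [LinearOrder ι] (D : LooseDrawing H) (v a b : ι) :
    ∃ k : ℤ, H.Adj a b → v ≠ a → v ≠ b → (∀ t, D.arc a b t ≠ D.pos v) →
      logIncrement (fun t => D.arc a b t - D.pos v) =
        D.logDiff v b - D.logDiff v a + k * (2 * Real.pi * I) := by
  by_cases h : H.Adj a b ∧ v ≠ a ∧ v ≠ b ∧ ∀ t, D.arc a b t ≠ D.pos v
  · obtain ⟨hab, hva, hvb, harc⟩ := h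
    have hexp := exp_logIncrement (g := fun t => D.arc a b t - D.pos v)
      ((D.continuous_arc hab).sub continuous_const) (fun t => sub_ne_zero.2 (harc t))
    rw [D.arc_zero hab, D.arc_one hab, ← D.exp_logDiff hvb, ← D.exp_logDiff hva,
      ← exp_sub, exp_eq_exp_iff_exists_int] at hexp
    obtain ⟨k, hk⟩ := hexp
    exact ⟨k, fun _ _ _ _ => hk⟩
  · exact ⟨0, fun hab hva hvb harc => absurd ⟨hab, hva, hvb, harc⟩ h⟩

-- `n v a b` is the number of turns of the arc `ab` around `pos v`, relative to `logDiff`.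
theorem exists_turns [LinearOrder ι] (D : LooseDrawing H) :
    ∃ n : ι → ι → ι → ℤ, ∀ a b c d, H.Adj a b → H.Adj c d → a ≠ c → a ≠ d → b ≠ c → b ≠ d →
      2 * (n c a b + n b c d - n d a b - n a c d) +
        (orderSign b c + orderSign d b + orderSign a d + orderSign c a) = 0 := by
  choose n hn using D.exists_logIncrement_eq
  refine ⟨n, fun a b c d hab hcd hac had hbc hbd => ?_⟩
  have hne := D.arc_ne hab hcd hac had hbc hbd
  have hsq := logIncrement_square (D.continuous_arc hab) (D.continuous_arc hcd) hne
  rw [D.arc_zero hab, D.arc_one hab, D.arc_zero hcd, D.arc_one hcd,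
    hn c a b hab hac.symm hbc.symm fun t => D.arc_zero hcd ▸ hne _ _,
    hn d a b hab had.symm hbd.symm fun t => D.arc_one hcd ▸ hne _ _,
    hn a c d hcd hac had fun t => D.arc_zero hab ▸ (hne _ _).symm,
    hn b c d hcd hbc hbd fun t => D.arc_one hab ▸ (hne _ _).symm] at hsq
  have hmul : ((2 * (n c a b + n b c d - n d a b - n a c d) +
      (orderSign b c + orderSign d b + orderSign a d + orderSign c a) : ℤ) : ℂ) *
        (Real.pi * I) = 0 := by
    push_cast
    linear_combination hsq - D.logDiff_swap hbc - D.logDiff_swap hbd.symm - D.logDiff_swap had -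
      D.logDiff_swap hac.symm
  exact_mod_cast (mul_eq_zero.1 hmul).resolve_right (by simp [Real.pi_ne_zero])

-- Summed over all pairs of disjoint edges, the turns cancel modulo 2, but the signs do not.
theorem isEmpty_completeBipartiteGraph :
    IsEmpty (LooseDrawing (completeBipartiteGraph (Fin 3) (Fin 3))) := by
  refine ⟨fun D => ?_⟩
  let _ : LinearOrder (Fin 3 ⊕ Fin 3) := inferInstanceAs (LinearOrder (Fin 3 ⊕ₗ Fin 3))
  obtain ⟨n, hn⟩ := D.exists_turns
  have hn' (a c b d : Fin 3) (hac : a ≠ c) (hbd : b ≠ d) :=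
    hn (.inl a) (.inr b) (.inl c) (.inr d) (by simp) (by simp) (by simpa) (by simp) (by simp)
      (by simpa)
  have sign_lr (a b : Fin 3) : orderSign (Sum.inl a : Fin 3 ⊕ Fin 3) (.inr b) = 1 := by
    revert a b; decide
  have sign_rl (a b : Fin 3) : orderSign (Sum.inr a : Fin 3 ⊕ Fin 3) (.inl b) = -1 := by
    revert a b; decide
  have sign_rr (a b : Fin 3) : orderSign (Sum.inr a : Fin 3 ⊕ Fin 3) (.inr b) = orderSign a b := by
    revert a b; decide
  have sign_ll (a b : Fin 3) : orderSign (Sum.inl a : Fin 3 ⊕ Fin 3) (.inl b) = orderSign a b := by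
    revert a b; decide
  simp only [sign_lr, sign_rl, sign_rr, sign_ll] at hn'
  have pair (a c b d : Fin 3) (hac : a < c) (hbd : b < d) :
      n (.inl c) (.inl a) (.inr b) + n (.inr b) (.inl c) (.inr d) -
          n (.inr d) (.inl a) (.inr b) - n (.inl a) (.inl c) (.inr d) = 1 ∧
        n (.inl c) (.inl a) (.inr d) + n (.inr d) (.inl c) (.inr b) -
          n (.inr b) (.inl a) (.inr d) - n (.inl a) (.inl c) (.inr b) = 0 := by
    have h₁ := hn' a c b d hac.ne hbd.ne
    have h₂ := hn' a c d b hac.ne hbd.ne'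
    simp only [orderSign, hac.not_gt, hbd, hbd.not_gt, if_true, if_false] at h₁ h₂
    omega
  have pairs (b d : Fin 3) (hbd : b < d) :=
    And.intro (pair 0 1 b d (by decide) hbd)
      (And.intro (pair 0 2 b d (by decide) hbd) (pair 1 2 b d (by decide) hbd))
  have h01 := pairs 0 1 (by decide)
  have h02 := pairs 0 2 (by decide)
  have h12 := pairs 1 2 (by decide)
  omega

theorem isEmpty_completeGraph_five : IsEmpty (LooseDrawing (⊤ : SimpleGraph (Fin 5))) := by
  refine ⟨fun D => ?_⟩
  obtain ⟨n, hn⟩ := D.exists_turns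
  have quad (a b c d : Fin 5) (hab : a < b) (hbc : b < c) (hcd : c < d) :
      n c a b + n b c d - n d a b - n a c d = 0 ∧
        n b a c + n c b d - n d a c - n a b d = 1 ∧
        n b a d + n d b c - n c a d - n a b c = 0 := by
    have hac := hab.trans hbc
    have hbd := hbc.trans hcd
    have had := hac.trans hcd
    have h₁ := hn a b c d hab.ne hcd.ne hac.ne had.ne hbc.ne hbd.ne
    have h₂ := hn a c b d hac.ne hbd.ne hab.ne had.ne hbc.ne' hcd.ne
    have h₃ := hn a d b c had.ne hbc.ne hab.ne hac.ne hbd.ne' hcd.ne'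
    simp only [orderSign, hbc, hcd, hac, hab.not_gt, hbc.not_gt, hcd.not_gt, hac.not_gt,
      hbd.not_gt, had, if_true, if_false] at h₁ h₂ h₃
    omega
  have h0123 := quad 0 1 2 3 (by decide) (by decide) (by decide)
  have h0124 := quad 0 1 2 4 (by decide) (by decide) (by decide)
  have h0134 := quad 0 1 3 4 (by decide) (by decide) (by decide)
  have h0234 := quad 0 2 3 4 (by decide) (by decide) (by decide)
  have h1234 := quad 1 2 3 4 (by decide) (by decide) (by decide)
  omega

end LooseDrawing

/-! ### Connected sets, components and minors -/

/-- `S` is a nonempty set of vertices inducing a connected subgraph of `G`. -/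
def IsConnectedSet {V : Type*} (G : SimpleGraph V) (S : Set V) : Prop :=
  (G.induce S).Connected

/-- Some edge of `G` joins `S` to `T`. -/
def Touches {V : Type*} (G : SimpleGraph V) (S T : Set V) : Prop :=
  ∃ a ∈ S, ∃ b ∈ T, G.Adj a b

/-- `K` is the vertex set of a connected component of `G - X`. -/
def IsComponent {V : Type*} (G : SimpleGraph V) (X K : Set V) : Prop :=
  IsConnectedSet G K ∧ (∀ a ∈ K, a ∉ X) ∧ ∀ a ∈ K, ∀ b, G.Adj a b → b ∉ X → b ∈ K

/-- `H` is a minor of `G`: the sets `X i` are the branch sets of a minor model. -/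
def IsMinor {ι V : Type*} (H : SimpleGraph ι) (G : SimpleGraph V) : Prop :=
  ∃ X : ι → Set V, (∀ i, IsConnectedSet G (X i)) ∧ Pairwise (Function.onFun Disjoint X) ∧
    ∀ i j, H.Adj i j → Touches G (X i) (X j)

section ConnectedSets

variable {V : Type*} {G : SimpleGraph V} {S T S' T' X K K' : Set V}

theorem Touches.symm (h : Touches G S T) : Touches G T S := by
  obtain ⟨a, ha, b, hb, hab⟩ := h
  exact ⟨b, hb, a, ha, hab.symm⟩

theorem Touches.mono (h : Touches G S T) (hS : S ⊆ S') (hT : T ⊆ T') : Touches G S' T' := by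
  obtain ⟨a, ha, b, hb, hab⟩ := h
  exact ⟨a, hS ha, b, hT hb, hab⟩

theorem isConnectedSet_iff :
    IsConnectedSet G S ↔ S.Nonempty ∧ ∀ A : Set V, (A ∩ S).Nonempty →
      (∀ a ∈ A ∩ S, ∀ b ∈ S, G.Adj a b → b ∈ A) → S ⊆ A := by
  constructor
  · intro h
    refine ⟨Set.nonempty_coe_sort.1 h.nonempty, ?_⟩
    rintro A ⟨a, haA, haS⟩ hclosed b hb
    have hab := (SimpleGraph.reachable_iff_reflTransGen _ _).1 (h.preconnected ⟨a, haS⟩ ⟨b, hb⟩)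
    suffices ∀ w : S, Relation.ReflTransGen (G.induce S).Adj ⟨a, haS⟩ w → w.1 ∈ A from this _ hab
    intro w haw
    induction haw with
    | refl => exact haA
    | @tail u v _ huv ih => exact hclosed u ⟨ih, u.2⟩ v v.2 huv
  · rintro ⟨⟨a, ha⟩, h⟩
    rw [IsConnectedSet, SimpleGraph.connected_iff_exists_forall_reachable]
    refine ⟨⟨a, ha⟩, fun ⟨b, hb⟩ => ?_⟩
    obtain ⟨_, hab⟩ := h {w | ∃ hw : w ∈ S, (G.induce S).Reachable ⟨a, ha⟩ ⟨w, hw⟩}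
      ⟨a, ⟨ha, .refl _⟩, ha⟩
      (fun u ⟨⟨hu, hau⟩, _⟩ v hv huv => ⟨hv, hau.trans (SimpleGraph.Adj.reachable huv)⟩) hb
    exact hab

theorem IsConnectedSet.nonempty (hS : IsConnectedSet G S) : S.Nonempty :=
  (isConnectedSet_iff.1 hS).1

theorem IsConnectedSet.subset_of_closed {A : Set V} (hS : IsConnectedSet G S)
    (hne : (A ∩ S).Nonempty) (hclosed : ∀ a ∈ A ∩ S, ∀ b ∈ S, G.Adj a b → b ∈ A) : S ⊆ A :=
  (isConnectedSet_iff.1 hS).2 A hne hclosed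

theorem IsConnectedSet.singleton (v : V) : IsConnectedSet G {v} :=
  .of_subsingleton

theorem IsConnectedSet.union_of_inter (hS : IsConnectedSet G S) (hT : IsConnectedSet G T)
    (h : (S ∩ T).Nonempty) : IsConnectedSet G (S ∪ T) :=
  SimpleGraph.induce_union_connected hS.preconnected hT.preconnected h

theorem IsConnectedSet.union (hS : IsConnectedSet G S) (hT : IsConnectedSet G T)
    (h : Touches G S T) : IsConnectedSet G (S ∪ T) := by
  obtain ⟨a, ha, b, hb, hab⟩ := h
  exact SimpleGraph.connected_induce_union hS.preconnected hT.preconnected ha hb hab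

theorem exists_isComponent (G : SimpleGraph V) {v : V} (hv : v ∉ X) :
    ∃ K, IsComponent G X K ∧ v ∈ K := by
  set K : Set V := {w | ∃ hw : w ∉ X, (G.induce Xᶜ).Reachable ⟨v, hv⟩ ⟨w, hw⟩}
  have hstep : ∀ a ∈ K, ∀ b, G.Adj a b → b ∉ X → b ∈ K := fun a ⟨_, hva⟩ b hab hb =>
    ⟨hb, hva.trans (SimpleGraph.Adj.reachable hab)⟩
  refine ⟨K, ⟨isConnectedSet_iff.2 ⟨⟨v, hv, .refl _⟩, ?_⟩, fun _ ⟨ha, _⟩ => ha, hstep⟩,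
    hv, .refl _⟩
  rintro A ⟨a, haA, haX, hva⟩ hclosed b ⟨hbX, hvb⟩
  have hab := (SimpleGraph.reachable_iff_reflTransGen _ _).1 (hva.symm.trans hvb)
  suffices ∀ w : (Xᶜ : Set V), Relation.ReflTransGen (G.induce Xᶜ).Adj ⟨a, haX⟩ w →
      w.1 ∈ A ∩ K from (this _ hab).1
  intro w haw
  induction haw with
  | refl => exact ⟨haA, haX, hva⟩
  | @tail u w _ huw ih =>
    have hw := hstep u ih.2 w huw w.2
    exact ⟨hclosed u ih w hw huw, hw⟩

theorem IsComponent.subset (hK : IsComponent G X K) (hS : IsConnectedSet G S)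
    (hd : ∀ a ∈ S, a ∉ X) (h : (S ∩ K).Nonempty) : S ⊆ K :=
  hS.subset_of_closed (Set.inter_comm S K ▸ h) fun a ha b hb hab => hK.2.2 a ha.1 b hab (hd b hb)

theorem IsComponent.eq_of_mem (hK : IsComponent G X K) (hK' : IsComponent G X K') {v : V}
    (h : v ∈ K) (h' : v ∈ K') : K = K' :=
  (hK'.subset hK.1 hK.2.1 ⟨v, h, h'⟩).antisymm (hK.subset hK'.1 hK'.2.1 ⟨v, h', h⟩)

theorem isMinor_completeBipartiteGraph {X₁ X₂ X₃ Y₁ Y₂ Y₃ : Set V}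
    (hconn : ∀ S ∈ [X₁, X₂, X₃, Y₁, Y₂, Y₃], IsConnectedSet G S)
    (hdisj : [X₁, X₂, X₃, Y₁, Y₂, Y₃].Pairwise Disjoint)
    (htouch : ∀ S ∈ [X₁, X₂, X₃], ∀ T ∈ [Y₁, Y₂, Y₃], Touches G S T) :
    IsMinor (completeBipartiteGraph (Fin 3) (Fin 3)) G := by
  have htouch' (i j : Fin 3) : Touches G (![X₁, X₂, X₃] i) (![Y₁, Y₂, Y₃] j) :=
    htouch _ (by fin_cases i <;> simp) _ (by fin_cases j <;> simp)
  simp only [List.pairwise_cons, List.forall_mem_cons] at hdisj hconn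
  refine ⟨Sum.elim ![X₁, X₂, X₃] ![Y₁, Y₂, Y₃], ?_, ?_, ?_⟩
  · rintro (i | i) <;> fin_cases i <;> simp_all
  · rintro (i | i) (j | j) hij <;> fin_cases i <;> fin_cases j <;>
      simp_all [Function.onFun, disjoint_comm]
  · rintro (i | i) (j | j) hij
    · simp at hij
    · exact htouch' i j
    · exact (htouch' j i).symm
    · simp at hij

theorem isMinor_completeGraph_five {X₁ X₂ X₃ X₄ X₅ : Set V}
    (hconn : ∀ S ∈ [X₁, X₂, X₃, X₄, X₅], IsConnectedSet G S)
    (hdisj : [X₁, X₂, X₃, X₄, X₅].Pairwise Disjoint)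
    (htouch : [X₁, X₂, X₃, X₄, X₅].Pairwise (Touches G)) :
    IsMinor (⊤ : SimpleGraph (Fin 5)) G := by
  have hsymm : ∀ {S T}, Touches G S T → Touches G T S := Touches.symm
  simp only [List.pairwise_cons, List.forall_mem_cons] at hdisj hconn htouch
  refine ⟨![X₁, X₂, X₃, X₄, X₅], ?_, ?_, ?_⟩
  · intro i
    fin_cases i <;> simp_all
  · intro i j hij
    fin_cases i <;> fin_cases j <;> simp_all [Function.onFun, disjoint_comm]
  · intro i j hij
    fin_cases i <;> fin_cases j <;> first | exact absurd rfl hij.ne | simp_all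

end ConnectedSets

section Drawings

variable {V : Type*} {G : SimpleGraph V} (D : PlaneEmbedding G)

/-- The points of the plane on the drawing `D` of the subgraph of `G` induced by `S`. -/
def drawnSubgraph (S : Set V) : Set (ℝ × ℝ) :=
  {x | (∃ a ∈ S, x = D.pos a) ∨
    ∃ a ∈ S, ∃ b ∈ S, G.Adj a b ∧ ∃ t ∈ Set.Icc (0 : ℝ) 1, x = D.arc a b t}

theorem eq_or_eq_of_pos_eq_arc {u v w : V} (h : G.Adj u v) {t : ℝ} (ht : t ∈ Set.Icc (0 : ℝ) 1)
    (he : D.pos w = D.arc u v t) : w = u ∨ w = v := by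
  rcases eq_or_lt_of_le ht.1 with rfl | h0
  · exact .inl (D.pos_inj (he.trans (D.arc_zero h)))
  rcases eq_or_lt_of_le ht.2 with rfl | h1
  · exact .inr (D.pos_inj (he.trans (D.arc_one h)))
  · exact absurd ⟨t, ⟨h0, h1⟩, he.symm⟩ (D.arc_avoid h w)

theorem mem_of_pos_mem_drawnSubgraph {S : Set V} {w : V} (h : D.pos w ∈ drawnSubgraph D S) :
    w ∈ S := by
  rcases h with ⟨a, ha, hwa⟩ | ⟨a, ha, b, hb, hab, t, ht, hwt⟩
  · exact D.pos_inj hwa ▸ ha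
  · rcases eq_or_eq_of_pos_eq_arc D hab ht hwt with rfl | rfl <;> assumption

theorem disjoint_drawnSubgraph {S T : Set V} (h : Disjoint S T) :
    Disjoint (drawnSubgraph D S) (drawnSubgraph D T) := by
  rw [Set.disjoint_left] at h ⊢
  intro x hxS hxT
  have hpos (w : V) (hw : x = D.pos w) : False :=
    h (mem_of_pos_mem_drawnSubgraph D (hw ▸ hxS)) (mem_of_pos_mem_drawnSubgraph D (hw ▸ hxT))
  rcases hxS with ⟨a, -, hxa⟩ | ⟨a, ha, b, -, hab, t, ht, hxt⟩
  · exact hpos a hxa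
  rcases hxT with ⟨c, -, hxc⟩ | ⟨c, hc, d, hd, hcd, t', ht', hxt'⟩
  · exact hpos c hxc
  have hne : s(a, b) ≠ s(c, d) := by
    rw [Ne, Sym2.eq_iff]
    rintro (⟨rfl, -⟩ | ⟨rfl, -⟩)
    · exact h ha hc
    · exact h ha hd
  rcases (D.arc_meet hab hcd hne ⟨⟨t, ht, hxt.symm⟩, ⟨t', ht', hxt'.symm⟩⟩).1 with hx | hx
  · exact hpos a hx
  · exact hpos b hx

theorem IsConnectedSet.joinedIn_drawnSubgraph {S : Set V} (hS : IsConnectedSet G S) {a b : V}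
    (ha : a ∈ S) (hb : b ∈ S) : JoinedIn (drawnSubgraph D S) (D.pos a) (D.pos b) := by
  refine hS.subset_of_closed (A := {c | JoinedIn (drawnSubgraph D S) (D.pos a) (D.pos c)})
    ⟨a, .refl (.inl ⟨a, ha, rfl⟩), ha⟩ ?_ hb
  rintro c ⟨hac, hc⟩ d hd hcd
  refine hac.trans (.ofLine (D.arc_cont hcd).continuousOn (D.arc_zero hcd) (D.arc_one hcd) ?_)
  rintro _ ⟨t, ht, rfl⟩
  exact .inr ⟨c, hc, d, hd, hcd, t, ht, rfl⟩

theorem IsMinor.nonempty_looseDrawing {ι : Type*} {H : SimpleGraph ι} (hH : IsMinor H G)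
    (D : PlaneEmbedding G) : Nonempty (LooseDrawing H) := by
  classical
  obtain ⟨X, hX, hdisj, htouch⟩ := hH
  choose q hq using fun i => (hX i).nonempty
  have hjoin {i j} (h : H.Adj i j) :
      JoinedIn (drawnSubgraph D (X i ∪ X j)) (D.pos (q i)) (D.pos (q j)) :=
    ((hX i).union (hX j) (htouch i j h)).joinedIn_drawnSubgraph D (.inl (hq i)) (.inr (hq j))
  have hmem {i j} (h : H.Adj i j) (t : ℝ) :
      (hjoin h).somePath.extend t ∈ drawnSubgraph D (X i ∪ X j) :=
    (hjoin h).somePath_mem _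
  let φ := Complex.equivRealProdCLM.symm
  refine ⟨{
    pos i := φ (D.pos (q i))
    arc i j t := if h : H.Adj i j then φ ((hjoin h).somePath.extend t) else 0
    pos_injective := fun i j hij => ?_
    continuous_arc := fun h => ?_
    arc_zero := fun h => by simp [h]
    arc_one := fun h => by simp [h]
    arc_ne := fun {a b c d} hab hcd hac had hbc hbd s t hst => ?_ }⟩
  · by_contra hne
    have hqij := D.pos_inj (φ.injective hij)
    exact Set.disjoint_left.1 (hdisj hne) (hq i) (hqij ▸ hq j)
  · simp only [h, dif_pos]
    exact φ.continuous.comp (Path.continuous_extend _)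
  · simp only [hab, hcd, dif_pos] at hst
    refine (disjoint_drawnSubgraph D ?_).ne_of_mem (hmem hab s) (hmem hcd t) (φ.injective hst)
    rw [Set.disjoint_union_left, Set.disjoint_union_right, Set.disjoint_union_right]
    exact ⟨⟨hdisj hac, hdisj had⟩, ⟨hdisj hbc, hdisj hbd⟩⟩

theorem not_isMinor_completeBipartiteGraph (hG : IsPlanar G) :
    ¬ IsMinor (completeBipartiteGraph (Fin 3) (Fin 3)) G := fun hminor =>
  (hG.elim hminor.nonempty_looseDrawing).elim LooseDrawing.isEmpty_completeBipartiteGraph.elim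

theorem not_isMinor_completeGraph_five (hG : IsPlanar G) :
    ¬ IsMinor (⊤ : SimpleGraph (Fin 5)) G := fun hminor =>
  (hG.elim hminor.nonempty_looseDrawing).elim LooseDrawing.isEmpty_completeGraph_five.elim

end Drawings

/-! ### Firefighting strategies -/

section Strategies

variable {V : Type*} {G : SimpleGraph V} {r : V}

/-- The number of vertices that two firefighters per round can save from a fire at `r`. -/
noncomputable abbrev snTwo (G : SimpleGraph V) (r : V) : ℕ :=
  sn G (fun _ => 2) r

theorem dist_le_of_adj {a b : V} (h : G.Adj a b) : G.dist r b ≤ G.dist r a + 1 := by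
  have := h.diff_dist_adj (u := r)
  lia

theorem burnedSet_mono (f : ℕ → Set V) : Monotone (burnedSet G r f) :=
  monotone_nat_of_le_succ fun _ => Set.subset_union_left

theorem dist_le_of_mem_burnedSet (f : ℕ → Set V) {t : ℕ} {w : V} (hw : w ∈ burnedSet G r f t) :
    G.dist r w ≤ t := by
  induction t generalizing w with
  | zero =>
    obtain rfl : w = r := hw
    exact SimpleGraph.dist_self.le
  | succ t ih =>
    rcases hw with hw | ⟨⟨u, hu, huw⟩, -⟩
    · exact (ih hw).trans t.le_succ
    · exact (dist_le_of_adj huw).trans (Nat.succ_le_succ (ih hu))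

theorem notMem_burnedSet_of_protected {f : ℕ → Set V}
    (hf : ∀ t, Disjoint (f t) (burnedSet G r f t)) {w : V} {s : ℕ} (hw : w ∈ f s) (t : ℕ) :
    w ∉ burnedSet G r f t := by
  induction t with
  | zero => exact fun h => (hf s).notMem_of_mem_left hw (burnedSet_mono f s.zero_le h)
  | succ t ih =>
    intro h
    rcases le_or_gt s t with hst | hts
    · exact h.elim ih fun h => h.2 s hst hw
    · exact (hf s).notMem_of_mem_left hw (burnedSet_mono f hts h)

theorem ncard_le_sn [Finite V] {b : ℕ → ℕ} {f : ℕ → Set V} (hf : ValidStrategy G b r f)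
    {S : Set V} (hS : ∀ s ∈ S, ∀ t, s ∉ burnedSet G r f t) : S.ncard ≤ sn G b r := by
  have hsaved : S.ncard ≤ Nat.card {w : V | ∀ t, w ∉ burnedSet G r f t} := by
    rw [Nat.card_coe_set_eq]
    exact Set.ncard_le_ncard hS
  refine hsaved.trans (le_csSup ⟨Nat.card V, ?_⟩ ⟨f, hf, rfl⟩)
  rintro m ⟨P, -, rfl⟩
  exact Nat.card_le_card_of_injective _ Subtype.val_injective

theorem ncard_le_sn_of_closed [Finite V] {b : ℕ → ℕ} {f : ℕ → Set V}
    (hf : ValidStrategy G b r f) {S : Set V} (hr : r ∉ S)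
    (hS : ∀ s ∈ S, (∃ t, s ∈ f t) ∨ ∀ w, G.Adj s w → w ∈ S ∨ ∃ t, w ∈ f t) :
    S.ncard ≤ sn G b r := by
  have hprot {w : V} (h : ∃ t, w ∈ f t) (t : ℕ) : w ∉ burnedSet G r f t :=
    h.elim fun _ hs => notMem_burnedSet_of_protected (fun t => (hf t).2.2) hs t
  refine ncard_le_sn hf fun s hs t => ?_
  induction t generalizing s with
  | zero => exact fun h => hr ((show s = r from h) ▸ hs)
  | succ t ih =>
    rcases hS s hs with hs' | hnbr
    · exact hprot hs' _
    · rintro (h | ⟨⟨u, hu, hus⟩, -⟩)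
      · exact ih s hs h
      · exact (hnbr u hus.symm).elim (fun h => ih u h hu) fun h => hprot h t hu

theorem ncard_union_le_two {S T : Set V} (hS : S.Subsingleton) (hT : T.Subsingleton) :
    (S ∪ T).ncard ≤ 2 :=
  have := hS.finite.to_subtype
  have := hT.finite.to_subtype
  (Set.ncard_union_le S T).trans (add_le_add (Set.ncard_le_one_iff_subsingleton.2 hS)
    (Set.ncard_le_one_iff_subsingleton.2 hT))

-- The vertices of `Q₁ ∪ Q₂` at distance `t + 1` from `r` are protected in round `t + 1`.
theorem ncard_le_snTwo_of_injOn_dist [Finite V] (hc : G.Connected) {Q₁ Q₂ S : Set V}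
    (hr₁ : r ∉ Q₁) (hr₂ : r ∉ Q₂) (h₁ : Q₁.InjOn (G.dist r)) (h₂ : Q₂.InjOn (G.dist r))
    (hr : r ∉ S)
    (hS : ∀ s ∈ S, s ∈ Q₁ ∪ Q₂ ∨ ∀ w, G.Adj s w → w ∈ S ∪ (Q₁ ∪ Q₂)) : S.ncard ≤ snTwo G r := by
  set f : ℕ → Set V := fun t => {a ∈ Q₁ | G.dist r a = t + 1} ∪ {a ∈ Q₂ | G.dist r a = t + 1}
  have hprot {w : V} (hw : w ∈ Q₁ ∪ Q₂) : ∃ t, w ∈ f t := by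
    have hwr : w ≠ r := by
      rintro rfl
      exact hw.elim hr₁ hr₂
    have hpos := hc.pos_dist_of_ne hwr.symm
    exact ⟨G.dist r w - 1, hw.imp (⟨·, by lia⟩) (⟨·, by lia⟩)⟩
  have hlevel {Q : Set V} (hQ : Q.InjOn (G.dist r)) (t : ℕ) :
      {a ∈ Q | G.dist r a = t + 1}.Subsingleton :=
    fun a ha b hb => hQ ha.1 hb.1 (ha.2.trans hb.2.symm)
  refine ncard_le_sn_of_closed (f := f) (fun t => ⟨?_, ?_, ?_⟩) hr fun s hs =>
    (hS s hs).imp hprot fun h w hw => (h w hw).imp id hprot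
  · exact Set.toFinite _
  · exact ncard_union_le_two (hlevel h₁ t) (hlevel h₂ t)
  · refine Set.disjoint_left.2 fun a ha hb => ?_
    have hle := dist_le_of_mem_burnedSet f hb
    rcases ha with ha | ha <;> have := ha.2 <;> lia

end Strategies

/-! ### Breadth-first search trees -/

/-- A breadth-first search tree of `G` rooted at `r`: every vertex other than `r` has a parent,
which is a neighbour at smaller distance from `r`. The parent of `r` is `r`. -/
structure BFSTree {V : Type*} (G : SimpleGraph V) (r : V) where
  parent : V → V
  parent_root : parent r = r
  adj_parent : ∀ v ≠ r, G.Adj (parent v) v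
  dist_parent : ∀ v ≠ r, G.dist r (parent v) + 1 = G.dist r v

namespace BFSTree

variable {V : Type*} {G : SimpleGraph V} {r : V} (T : BFSTree G r)

/-- The vertices of the tree path from `v` to the root. -/
def path (v : V) : Set V :=
  {a | ∃ k, T.parent^[k] v = a}

/-- The vertex on `T.path v` adjacent to the root; a junk value for `v = r`. -/
noncomputable def branch (v : V) : V :=
  T.parent^[G.dist r v - 1] v

variable {T} {a b v : V}

theorem mem_path_self (v : V) : v ∈ T.path v :=
  ⟨0, rfl⟩

theorem path_subset_of_mem (h : a ∈ T.path v) : T.path a ⊆ T.path v := by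
  obtain ⟨j, rfl⟩ := h
  rintro _ ⟨k, rfl⟩
  exact ⟨k + j, Function.iterate_add_apply _ _ _ _⟩

theorem parent_mem_path (h : a ∈ T.path v) : T.parent a ∈ T.path v :=
  path_subset_of_mem h ⟨1, rfl⟩

theorem iterate_parent_root (k : ℕ) : T.parent^[k] r = r :=
  Function.iterate_fixed T.parent_root k

theorem eq_root_of_mem_path_root (h : a ∈ T.path r) : a = r := by
  obtain ⟨k, rfl⟩ := h
  exact iterate_parent_root k

theorem dist_iterate_parent (k : ℕ) : G.dist r (T.parent^[k] v) = G.dist r v - k := by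
  induction k generalizing v with
  | zero => rfl
  | succ k ih =>
    rw [Function.iterate_succ_apply, ih]
    by_cases hv : v = r
    · rw [hv, T.parent_root, SimpleGraph.dist_self, Nat.zero_sub, Nat.zero_sub]
    · have := T.dist_parent v hv
      lia

theorem ne_root_of_dist_pos (G : SimpleGraph V) (h : 0 < G.dist r v) : v ≠ r := by
  rintro rfl
  exact h.ne' SimpleGraph.dist_self

theorem dist_pos (T : BFSTree G r) (hv : v ≠ r) : 0 < G.dist r v := by
  have := T.dist_parent v hv
  lia

theorem dist_eq_zero_iff (T : BFSTree G r) : G.dist r v = 0 ↔ v = r :=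
  ⟨fun h => by_contra fun hv => (T.dist_pos hv).ne' h, fun h => h ▸ SimpleGraph.dist_self⟩

theorem exists_mem_path_dist_eq (T : BFSTree G r) {m : ℕ} (h : m ≤ G.dist r v) :
    ∃ a ∈ T.path v, G.dist r a = m :=
  ⟨_, ⟨G.dist r v - m, rfl⟩, by rw [dist_iterate_parent]; lia⟩

theorem root_mem_path (v : V) : r ∈ T.path v := by
  obtain ⟨a, ha, h⟩ := T.exists_mem_path_dist_eq (v := v) (Nat.zero_le _)
  exact T.dist_eq_zero_iff.1 h ▸ ha

theorem dist_le_of_mem_path (h : a ∈ T.path v) : G.dist r a ≤ G.dist r v := by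
  obtain ⟨k, rfl⟩ := h
  exact (dist_iterate_parent k).trans_le (Nat.sub_le _ _)

theorem eq_of_mem_path_of_le (ha : a ∈ T.path v) (h : G.dist r v ≤ G.dist r a) : a = v := by
  obtain ⟨k, rfl⟩ := ha
  rw [dist_iterate_parent] at h
  by_cases hv : v = r
  · rw [hv, iterate_parent_root]
  · have := T.dist_pos hv
    obtain rfl : k = 0 := by lia
    rfl

theorem mem_path_of_dist_le (ha : a ∈ T.path v) (hb : b ∈ T.path v)
    (h : G.dist r a ≤ G.dist r b) : a ∈ T.path b := by
  obtain ⟨k, rfl⟩ := ha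
  obtain ⟨j, rfl⟩ := hb
  rcases le_total j k with hjk | hkj
  · refine ⟨k - j, ?_⟩
    rw [← Function.iterate_add_apply, Nat.sub_add_cancel hjk]
  · obtain ⟨i, rfl⟩ := Nat.exists_eq_add_of_le' hkj
    rw [Function.iterate_add_apply] at h ⊢
    rw [eq_of_mem_path_of_le ⟨i, rfl⟩ h]
    exact mem_path_self _

theorem injOn_path (T : BFSTree G r) (v : V) : (T.path v).InjOn (G.dist r) := fun _ ha _ hb h =>
  eq_of_mem_path_of_le (mem_path_of_dist_le ha hb h.le) h.ge

theorem eq_or_mem_path_parent (h : a ∈ T.path v) : a = v ∨ v ≠ r ∧ a ∈ T.path (T.parent v) := by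
  obtain ⟨_ | k, rfl⟩ := h
  · exact .inl rfl
  · by_cases hv : v = r
    · subst hv
      exact .inl (iterate_parent_root _)
    · exact .inr ⟨hv, k, rfl⟩

theorem isConnectedSet_of_parent_mem (T : BFSTree G r) {S : Set V} (ha : a ∈ S)
    (hS : ∀ d ∈ S, d ≠ a → d ≠ r ∧ T.parent d ∈ S) : IsConnectedSet G S := by
  rw [IsConnectedSet, SimpleGraph.connected_iff_exists_forall_reachable]
  refine ⟨⟨a, ha⟩, fun ⟨d, hd⟩ => ?_⟩
  induction hn : G.dist r d using Nat.strong_induction_on generalizing d with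
  | _ n ih =>
    by_cases hda : d = a
    · subst hda
      rfl
    · obtain ⟨hdr, hpS⟩ := hS d hd hda
      have hlt := T.dist_parent d hdr
      refine (ih _ (by lia) _ hpS rfl).trans (SimpleGraph.Adj.reachable ?_)
      exact T.adj_parent d hdr

theorem connected (T : BFSTree G r) : G.Connected := by
  have := T.isConnectedSet_of_parent_mem (Set.mem_univ r) fun d _ hd => ⟨hd, Set.mem_univ _⟩
  exact (SimpleGraph.induceUnivIso G).connected_iff.1 this

theorem isConnectedSet_of_interval {S : Set V} (hne : S.Nonempty) (hS : S ⊆ T.path v)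
    (hconv : ∀ a ∈ S, ∀ b ∈ S, ∀ d ∈ T.path v,
      G.dist r a ≤ G.dist r d → G.dist r d ≤ G.dist r b → d ∈ S) : IsConnectedSet G S := by
  obtain ⟨a, ha, hmin⟩ := exists_minimalFor_of_wellFoundedLT (· ∈ S) (G.dist r) hne
  refine T.isConnectedSet_of_parent_mem ha fun d hd hda => ?_
  have had : G.dist r a < G.dist r d := lt_of_not_ge fun h =>
    hda (T.injOn_path v (hS hd) (hS ha) (le_antisymm h (hmin hd h)))
  have hdr : d ≠ r := ne_root_of_dist_pos G (by lia)
  have hpar := T.dist_parent d hdr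
  exact ⟨hdr, hconv a ha d hd _ (parent_mem_path (hS hd)) (by lia) (by lia)⟩

theorem branch_mem_path (v : V) : T.branch v ∈ T.path v :=
  ⟨_, rfl⟩

theorem dist_branch (hv : v ≠ r) : G.dist r (T.branch v) = 1 := by
  have := T.dist_pos hv
  rw [branch, dist_iterate_parent]
  lia

theorem adj_branch (hv : v ≠ r) : G.Adj r (T.branch v) :=
  SimpleGraph.dist_eq_one_iff_adj.1 (dist_branch hv)

theorem eq_branch (ha : a ∈ T.path v) (h : G.dist r a = 1) : a = T.branch v := by
  have := dist_le_of_mem_path ha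
  have hv : v ≠ r := ne_root_of_dist_pos G (by lia)
  exact T.injOn_path v ha (branch_mem_path v) (h.trans (dist_branch hv).symm)

theorem branch_eq_of_mem_path (ha : a ∈ T.path v) (h : a ≠ r) : T.branch a = T.branch v :=
  eq_branch (path_subset_of_mem ha (branch_mem_path a)) (dist_branch h)

theorem eq_root_of_branch_ne {x z : V} (h : T.branch x ≠ T.branch z) (hx : a ∈ T.path x)
    (hz : a ∈ T.path z) : a = r :=
  by_contra fun ha => h ((branch_eq_of_mem_path hx ha).symm.trans (branch_eq_of_mem_path hz ha))

/-- The union of the tree paths from `x` and from `z` to the root. Two firefighters can protect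
all of it except the root, one vertex of each path per round. -/
abbrev fence (T : BFSTree G r) (x z : V) : Set V :=
  T.path x ∪ T.path z

theorem ncard_le_snTwo_of_fence [Finite V] (x z : V) {S : Set V} (hr : r ∉ S)
    (hS : ∀ s ∈ S, s ∉ T.fence x z → G.dist r s ≠ 1 ∧
      ∀ w, G.Adj s w → w ∈ S ∪ T.fence x z) : S.ncard ≤ snTwo G r := by
  have hfence {w : V} (hwr : w ≠ r) (hw : w ∈ T.fence x z) : w ∈ T.path x \ {r} ∪ T.path z \ {r} :=
    hw.imp (⟨·, hwr⟩) (⟨·, hwr⟩)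
  refine ncard_le_snTwo_of_injOn_dist T.connected (Q₁ := T.path x \ {r}) (Q₂ := T.path z \ {r})
    (by simp) (by simp) ((T.injOn_path x).mono Set.sdiff_subset)
    ((T.injOn_path z).mono Set.sdiff_subset) hr fun s hs => ?_
  by_cases hsC : s ∈ T.fence x z
  · exact .inl (hfence (ne_of_mem_of_not_mem hs hr) hsC)
  · obtain ⟨hs1, hnbr⟩ := hS s hs hsC
    refine .inr fun w hw => (hnbr w hw).imp id (hfence ?_)
    rintro rfl
    exact hs1 (SimpleGraph.dist_eq_one_iff_adj.2 hw.symm)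

-- The neighbour `v` of the root is protected in the first round in place of `T.branch x`.
theorem ncard_le_snTwo_of_fence_of_neighbor [Finite V] {x z v : V} {S : Set V} (hr : r ∉ S)
    (hv : G.dist r v = 1)
    (hS : ∀ s ∈ S, s ∉ T.fence x z → (G.dist r s = 1 → s = v) ∧
      ∀ w, G.Adj s w → w ∈ S ∪ T.fence x z)
    (h : T.branch x = T.branch z ∨ T.branch x ∉ S ∧
      ∀ s ∈ S, s ∉ T.fence x z → ¬ G.Adj s (T.branch x)) : S.ncard ≤ snTwo G r := by
  have hvr : v ≠ r := ne_root_of_dist_pos G (by lia)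
  have hne : ∀ a ∈ T.path x \ {r, T.branch x}, G.dist r a ≠ G.dist r v := fun a ha hav =>
    ha.2 (.inr (eq_branch ha.1 (hav.trans hv)))
  have hcover {w : V} (hw : w ∈ T.fence x z) (hwr : w ≠ r)
      (hbranch : w = T.branch x → T.branch x = T.branch z) :
      w ∈ (T.path x \ {r, T.branch x} ∪ {v}) ∪ T.path z \ {r} := by
    by_cases hwb : w = T.branch x
    · exact .inr ⟨hwb ▸ hbranch hwb ▸ branch_mem_path z, hwr⟩
    · exact hw.imp (fun hw => .inl ⟨hw, by simp [hwr, hwb]⟩) (⟨·, hwr⟩)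
  refine ncard_le_snTwo_of_injOn_dist T.connected (Q₁ := T.path x \ {r, T.branch x} ∪ {v})
    (Q₂ := T.path z \ {r}) (by simp [hvr.symm]) (by simp) ?_
    ((T.injOn_path z).mono Set.sdiff_subset) hr fun s hs => ?_
  · rintro a (ha | rfl) b (hb | rfl) hab
    · exact T.injOn_path x ha.1 hb.1 hab
    · exact (hne a ha hab).elim
    · exact (hne b hb hab.symm).elim
    · rfl
  by_cases hsC : s ∈ T.fence x z
  · exact .inl (hcover hsC (ne_of_mem_of_not_mem hs hr) fun hsb =>
      h.resolve_right fun h => h.1 (hsb ▸ hs))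
  · obtain ⟨hs1, hnbr⟩ := hS s hs hsC
    by_cases hsv : s = v
    · exact .inl (.inl (.inr hsv))
    refine .inr fun w hw => (hnbr w hw).imp id fun hwC => hcover hwC ?_ fun hwb =>
      h.resolve_right fun h => h.2 s hs hsC (hwb ▸ hw)
    rintro rfl
    exact hsv (hs1 (SimpleGraph.dist_eq_one_iff_adj.2 hw.symm))

theorem root_notMem_of_isComponent {x z : V} {K : Set V} (hK : IsComponent G (T.fence x z) K) :
    r ∉ K :=
  fun h => hK.2.1 r h (.inl (root_mem_path x))

end BFSTree

namespace BFSTree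

variable {V : Type*} {G : SimpleGraph V} {r a v : V} {T : BFSTree G r}

theorem dist_add_dist_le_of_mem_path (ha : a ∈ T.path v) :
    G.dist a v + G.dist r a ≤ G.dist r v := by
  obtain ⟨k, rfl⟩ := ha
  induction k generalizing v with
  | zero => simp
  | succ k ih =>
    rw [Function.iterate_succ_apply]
    by_cases hv : v = r
    · subst hv
      rw [T.parent_root, T.iterate_parent_root]
      simp
    · have hpar := T.dist_parent v hv
      have hle := dist_le_of_adj (r := T.parent^[k] (T.parent v)) (T.adj_parent v hv)
      have := ih (v := T.parent v)
      lia

theorem dist_branch_lt_of_mem_path (ha : a ∈ T.path v) (har : a ≠ r) :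
    G.dist (T.branch v) a < G.dist r a := by
  have hle := dist_add_dist_le_of_mem_path (T.branch_mem_path a)
  rw [T.dist_branch har, T.branch_eq_of_mem_path ha har] at hle
  lia

/-- The vertices of the path of `v` whose distance from the root lies in `I`. -/
def segment (T : BFSTree G r) (v : V) (I : Set ℕ) : Set V :=
  {a ∈ T.path v | G.dist r a ∈ I}

theorem isConnectedSet_segment {I : Set ℕ} (hI : I.OrdConnected) (hne : (T.segment v I).Nonempty) :
    IsConnectedSet G (T.segment v I) :=
  T.isConnectedSet_of_interval hne (Set.sep_subset _ _) fun _ ha _ hb _ hd had hdb =>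
    ⟨hd, hI.out ha.2 hb.2 ⟨had, hdb⟩⟩

theorem branch_mem_segment (T : BFSTree G r) {z : V} (hz : z ≠ r) :
    T.branch z ∈ T.segment z (Set.Ici 1) :=
  ⟨T.branch_mem_path z, (T.dist_branch hz).ge⟩

theorem fence_comm (T : BFSTree G r) (x z : V) : T.fence x z = T.fence z x :=
  Set.union_comm _ _

theorem mem_or_mem_fence_of_adj {x z s w : V} {K : Set V} (hK : IsComponent G (T.fence x z) K)
    (hs : s ∈ K) (hw : G.Adj s w) : w ∈ K ∨ w ∈ T.fence x z :=
  or_iff_not_imp_right.2 (hK.2.2 s hs w hw)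

end BFSTree

/-! ### The structure of the graph around a root of degree four -/

/-- The standing assumptions on the graph `G` and the root `r`: a breadth-first search tree, the
exclusion of the two Kuratowski minors, and a root of degree four. The neighbours of `r` are ranked
so that all but the last one have degree at most five, and the tree puts every vertex in the branch
of smallest rank that contains a geodesic from `r` to that vertex. -/
structure Setting {V : Type*} (G : SimpleGraph V) (r : V) extends BFSTree G r where
  rank : V → ℕ
  rank_injOn : (G.neighborSet r).InjOn rank
  ncard_neighborSet_le : ∀ a ∈ G.neighborSet r, ∀ b ∈ G.neighborSet r, rank a < rank b →
    (G.neighborSet a).ncard ≤ 5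
  rank_branch_le : ∀ v ≠ r, ∀ w, G.Adj r w → G.dist w v < G.dist r v →
    rank (toBFSTree.branch v) ≤ rank w
  not_isMinor_bipartite : ¬ IsMinor (completeBipartiteGraph (Fin 3) (Fin 3)) G
  not_isMinor_five : ¬ IsMinor (⊤ : SimpleGraph (Fin 5)) G
  ncard_neighborSet_root : (G.neighborSet r).ncard = 4

/-- `R` is a connected set that avoids `X` and joins `v` to `q`, with at most one vertex at each
distance from `r` and no vertex further from `r` than `q`. -/
structure IsLevelPath {V : Type*} (G : SimpleGraph V) (r : V) (X : Set V) (v q : V)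
    (R : Set V) : Prop where
  isConnectedSet : IsConnectedSet G R
  start_mem : v ∈ R
  end_mem : q ∈ R
  notMem : ∀ a ∈ R, a ∉ X
  injOn_dist : R.InjOn (G.dist r)
  one_le_dist : ∀ a ∈ R, 1 ≤ G.dist r a
  dist_le : ∀ a ∈ R, G.dist r a ≤ G.dist r q

namespace IsLevelPath

variable {V : Type*} {G : SimpleGraph V} {r : V} {X : Set V} {v q w : V} {R : Set V}

theorem singleton (hv : v ∉ X) (hv1 : G.dist r v = 1) : IsLevelPath G r X v v {v} where
  isConnectedSet := .singleton v
  start_mem := rfl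
  end_mem := rfl
  notMem := by rintro a rfl; exact hv
  injOn_dist := Set.injOn_singleton _ _
  one_le_dist := by rintro a rfl; exact hv1.ge
  dist_le := by rintro a rfl; exact le_rfl

theorem insert (h : IsLevelPath G r X v q R) (hw : w ∉ X) (hqw : G.Adj q w)
    (hdist : G.dist r w = G.dist r q + 1) : IsLevelPath G r X v w (insert w R) where
  isConnectedSet := (IsConnectedSet.singleton w).union h.isConnectedSet
    ⟨w, rfl, q, h.end_mem, hqw.symm⟩
  start_mem := .inr h.start_mem
  end_mem := .inl rfl
  notMem := Set.forall_mem_insert.2 ⟨hw, h.notMem⟩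
  injOn_dist := (Set.injOn_insert fun hwR => by have := h.dist_le w hwR; lia).2 ⟨h.injOn_dist, by
    rintro ⟨a, ha, haw⟩
    have := h.dist_le a ha
    lia⟩
  one_le_dist := Set.forall_mem_insert.2 ⟨by lia, h.one_le_dist⟩
  dist_le := Set.forall_mem_insert.2 ⟨le_rfl, fun a ha => by have := h.dist_le a ha; lia⟩

end IsLevelPath

namespace Setting

open BFSTree

variable {V : Type*} {G : SimpleGraph V} {r : V}

theorem length_le_four (T : Setting G r) {l : List V} (hl : ∀ a ∈ l, G.dist r a = 1)
    (hnodup : l.Nodup) : l.length ≤ 4 := by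
  classical
  rw [← T.ncard_neighborSet_root, ← List.toFinset_card_of_nodup hnodup, ← Set.ncard_coe_finset]
  refine Set.ncard_le_ncard (fun a ha =>
    SimpleGraph.dist_eq_one_iff_adj.1 (hl a (List.mem_toFinset.1 ha))) (Set.finite_of_ncard_pos ?_)
  simp [T.ncard_neighborSet_root]

theorem mem_of_dist_eq_one (T : Setting G r) {l : List V} (hl : ∀ a ∈ l, G.dist r a = 1)
    (hnodup : l.Nodup) (hlength : l.length = 4) {w : V} (hw : G.dist r w = 1) : w ∈ l := by
  by_contra hwl
  have := T.length_le_four (List.forall_mem_cons.2 ⟨hw, hl⟩) (List.nodup_cons.2 ⟨hwl, hnodup⟩)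
  simp [hlength] at this

theorem exists_dist_eq_one_notMem (T : Setting G r) {l : List V} (hlength : l.length < 4) :
    ∃ w, G.dist r w = 1 ∧ w ∉ l := by
  classical
  have hcard : (l.toFinset : Set V).ncard < (G.neighborSet r).ncard := by
    rw [T.ncard_neighborSet_root, Set.ncard_coe_finset]
    exact l.toFinset_card_le.trans_lt hlength
  obtain ⟨w, hw, hwl⟩ := Set.exists_mem_notMem_of_ncard_lt_ncard hcard
  exact ⟨w, SimpleGraph.dist_eq_one_iff_adj.2 hw, by simpa using hwl⟩

/-- Removing the fence of `x` and `z`, which lie in different branches, leaves two different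
components `K` and `K'` that contain neighbours `v` and `v'` of the root. -/
structure IsSplit (T : Setting G r) (x z v v' : V) (K K' : Set V) : Prop where
  ne_root : x ≠ r
  ne_root' : z ≠ r
  branch_ne : T.branch x ≠ T.branch z
  isComponent : IsComponent G (T.fence x z) K
  isComponent' : IsComponent G (T.fence x z) K'
  ne : K ≠ K'
  mem : v ∈ K
  mem' : v' ∈ K'
  dist_eq_one : G.dist r v = 1
  dist_eq_one' : G.dist r v' = 1

namespace IsSplit

variable {T : Setting G r} {x z v v' : V} {K K' : Set V}

theorem symm (h : T.IsSplit x z v v' K K') : T.IsSplit x z v' v K' K :=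
  ⟨h.1, h.2, h.3, h.5, h.4, h.ne.symm, h.8, h.7, h.10, h.9⟩

theorem adj (h : T.IsSplit x z v v' K K') : G.Adj r v :=
  SimpleGraph.dist_eq_one_iff_adj.1 h.dist_eq_one

theorem swap (h : T.IsSplit x z v v' K K') : T.IsSplit z x v v' K K' :=
  ⟨h.2, h.1, h.3.symm, T.fence_comm x z ▸ h.4, T.fence_comm x z ▸ h.5, h.6, h.7, h.8, h.9, h.10⟩

theorem disjoint (h : T.IsSplit x z v v' K K') : Disjoint K K' :=
  Set.disjoint_left.2 fun _ ha ha' => h.ne (h.isComponent.eq_of_mem h.isComponent' ha ha')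

theorem eq_of_dist_eq_one (h : T.IsSplit x z v v' K K') {w : V} (hw : G.dist r w = 1) :
    w = T.branch x ∨ w = T.branch z ∨ w = v ∨ w = v' := by
  have hv := h.isComponent.2.1 v h.mem
  have hv' := h.isComponent'.2.1 v' h.mem'
  have hx : T.branch x ∈ T.fence x z := .inl (T.branch_mem_path x)
  have hz : T.branch z ∈ T.fence x z := .inr (T.branch_mem_path z)
  have hvv' : v ≠ v' := fun hvv' => h.disjoint.notMem_of_mem_left h.mem (hvv' ▸ h.mem')
  simpa using T.mem_of_dist_eq_one (l := [T.branch x, T.branch z, v, v'])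
    (by simpa using ⟨T.adj_branch h.ne_root, T.adj_branch h.ne_root', h.adj, h.symm.adj⟩)
    (by
      simp only [List.nodup_cons, List.mem_cons, List.not_mem_nil, or_false, not_or]
      exact ⟨⟨h.branch_ne, ne_of_mem_of_not_mem hx hv, ne_of_mem_of_not_mem hx hv'⟩,
        ⟨ne_of_mem_of_not_mem hz hv, ne_of_mem_of_not_mem hz hv'⟩, hvv', not_false, .nil⟩) rfl hw

theorem eq_of_mem_of_dist_eq_one (h : T.IsSplit x z v v' K K') {w : V} (hw : w ∈ K)
    (hw1 : G.dist r w = 1) : w = v := by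
  have hwC := h.isComponent.2.1 w hw
  rcases h.eq_of_dist_eq_one hw1 with rfl | rfl | rfl | rfl
  · exact (hwC (.inl (T.branch_mem_path x))).elim
  · exact (hwC (.inr (T.branch_mem_path z))).elim
  · rfl
  · exact (h.disjoint.notMem_of_mem_left hw h.mem').elim

end IsSplit

end Setting

/-! ### Saving a component by a delayed protection of one branch -/

namespace BFSTree

variable {V : Type*} {G : SimpleGraph V} {r : V}

/-- The neighbours of `T.branch z` in `K` or on the path of `z`, other than `r` and `v`. If
`T.branch z` burns first, then these are the vertices to be protected next. -/
def branchExits (T : BFSTree G r) (z v : V) (K : Set V) : Set V :=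
  {w | G.Adj (T.branch z) w ∧ (w ∈ K ∨ w ∈ T.path z) ∧ w ≠ r ∧ w ≠ v}

/-- The strategy that sacrifices `T.branch z` in order to protect the neighbours `T.branch x` and
`v` of the root and then all exits of `T.branch z`. The path of `z` is then protected just in time
and the path of `x` one round late, up to distance less than `L`. -/
def delayedStrategy (T : BFSTree G r) (x z v : V) (K : Set V) (L : ℕ) : ℕ → Set V
  | 0 => {T.branch x} ∪ {v}
  | 1 => T.branchExits z v K
  | t + 2 => {a ∈ T.path z | G.dist r a = t + 3} ∪
      {a ∈ T.path x | G.dist r a = t + 2 ∧ t + 2 < L}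

/-- `L` is a lower bound on the distances to `r` of those vertices of the path of `x` that can be
reached from `v'` along a level path off the fence. -/
def BoundsContacts (T : BFSTree G r) (x z v' : V) (L : ℕ) : Prop :=
  ∀ p ∈ T.path x, ∀ q R, IsLevelPath G r (T.fence x z) v' q R → G.Adj q p →
    G.dist r p = G.dist r q + 1 → L ≤ G.dist r p

end BFSTree

namespace Setting.IsSplit

open BFSTree

variable {V : Type*} {G : SimpleGraph V} {r : V} {T : Setting G r} {x z v v' : V}
  {K K' : Set V} {L : ℕ}

theorem dist_eq_two_of_mem_branchExits (h : T.IsSplit x z v v' K K') {w : V}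
    (hw : w ∈ T.branchExits z v K) : G.dist r w = 2 := by
  obtain ⟨hadj, hwK, hwr, hwv⟩ := hw
  have hpos := T.dist_pos hwr
  have hle := dist_le_of_adj (r := r) hadj
  have hz := T.dist_branch h.ne_root'
  by_contra hne
  rcases hwK with hwK | hwz
  · exact hwv (h.eq_of_mem_of_dist_eq_one hwK (by lia))
  · exact hadj.ne (T.eq_branch hwz (by lia)).symm

theorem cases_of_mem_burnedSet (h : T.IsSplit x z v v' K K') (hL : T.BoundsContacts x z v' L)
    {t : ℕ} {w : V} (hw : w ∈ burnedSet G r (T.delayedStrategy x z v K L) (t + 1))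
    (hdist : G.dist r w = t + 1) : G.dist (T.branch z) w < G.dist r w ∨
      (∃ R, IsLevelPath G r (T.fence x z) v' w R) ∨ L ≤ G.dist r w := by
  induction t generalizing w with
  | zero =>
    rcases hw with hw | ⟨-, hunprotected⟩
    · have := dist_le_of_mem_burnedSet _ hw
      lia
    · have hw0 : w ∉ ({T.branch x} ∪ {v} : Set V) := hunprotected 0 le_rfl
      rcases h.eq_of_dist_eq_one hdist with rfl | rfl | rfl | rfl
      · exact (hw0 (.inl rfl)).elim
      · exact .inl (by rw [SimpleGraph.dist_self]; lia)
      · exact (hw0 (.inr rfl)).elim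
      · exact .inr (.inl ⟨_, .singleton (h.isComponent'.2.1 w h.mem') hdist⟩)
  | succ t ih =>
    rcases hw with hw | ⟨⟨u, hu, huw⟩, -⟩
    · have := dist_le_of_mem_burnedSet _ hw
      lia
    · have hle := dist_le_of_mem_burnedSet _ hu
      have hadj := dist_le_of_adj (r := r) huw
      rcases ih hu (by lia) with hgeo | ⟨R, hR⟩ | hLu
      · have := dist_le_of_adj (r := T.branch z) huw
        exact .inl (by lia)
      · by_cases hwz : w ∈ T.path z
        · exact .inl (dist_branch_lt_of_mem_path hwz (ne_root_of_dist_pos G (by lia)))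
        by_cases hwx : w ∈ T.path x
        · exact .inr (.inr (hL w hwx u R hR huw (by lia)))
        · exact .inr (.inl ⟨_, hR.insert (fun hw => hw.elim hwx hwz) huw (by lia)⟩)
      · exact .inr (.inr (by lia))

theorem validStrategy_delayedStrategy [Finite V] (h : T.IsSplit x z v v' K K')
    (hrank : T.rank (T.branch z) < T.rank (T.branch x)) (hL : T.BoundsContacts x z v' L)
    (hexits : (T.branchExits z v K).ncard ≤ 2) :
    ValidStrategy G (fun _ => 2) r (T.delayedStrategy x z v K L) := by
  refine fun t => ⟨Set.toFinite _, ?_, Set.disjoint_left.2 fun a ha hburned => ?_⟩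
  · match t with
    | 0 => exact ncard_union_le_two Set.subsingleton_singleton Set.subsingleton_singleton
    | 1 => exact hexits
    | t + 2 =>
      exact ncard_union_le_two
        (fun a ha b hb => T.injOn_path z ha.1 hb.1 (ha.2.trans hb.2.symm))
        (fun a ha b hb => T.injOn_path x ha.1 hb.1 (ha.2.1.trans hb.2.1.symm))
  · have hle := dist_le_of_mem_burnedSet _ hburned
    match t with
    | 0 =>
      have hx := T.dist_branch h.ne_root
      have hv := h.dist_eq_one
      rcases ha with rfl | rfl <;> lia
    | 1 =>
      have := h.dist_eq_two_of_mem_branchExits ha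
      lia
    | t + 2 =>
      rcases ha with ⟨-, ha⟩ | ⟨hax, ha, haL⟩
      · lia
      have har : a ≠ r := ne_root_of_dist_pos G (by lia)
      rcases h.cases_of_mem_burnedSet hL hburned ha with hgeo | ⟨R, hR⟩ | hLa
      · have hpref := T.rank_branch_le a har _ (T.adj_branch h.ne_root') hgeo
        rw [T.branch_eq_of_mem_path hax har] at hpref
        lia
      · exact hR.notMem a hR.end_mem (.inl hax)
      · lia

theorem exists_mem_delayedStrategy (h : T.IsSplit x z v v' K K')
    (hfar : ∀ s ∈ K, ∀ a ∈ T.path x, L ≤ G.dist r a → ¬ G.Adj s a) {s w : V} (hs : s ∈ K)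
    (hsz : ¬ G.Adj s (T.branch z)) (hsw : G.Adj s w) (hw : w ∈ T.fence x z) (hwr : w ≠ r) :
    ∃ t, w ∈ T.delayedStrategy x z v K L t := by
  have hpos := T.dist_pos hwr
  have hw1 : w ∈ T.path z → G.dist r w ≠ 1 := fun hwz hw1 => hsz (T.eq_branch hwz hw1 ▸ hsw)
  by_cases hwz : w ∈ T.path z
  · by_cases hw2 : G.dist r w = 2
    · have hpar := T.dist_parent w hwr
      have hbranch := T.eq_branch (parent_mem_path hwz) (by lia)
      refine ⟨1, hbranch ▸ T.adj_parent w hwr, .inr hwz, hwr, ?_⟩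
      rintro rfl
      have := h.dist_eq_one
      lia
    · have := hw1 hwz
      obtain ⟨t, ht⟩ : ∃ t, G.dist r w = t + 3 := ⟨G.dist r w - 3, by lia⟩
      exact ⟨t + 2, .inl ⟨hwz, ht⟩⟩
  · have hwx := hw.resolve_right hwz
    by_cases hwx1 : G.dist r w = 1
    · exact ⟨0, .inl (T.eq_branch hwx hwx1)⟩
    · obtain ⟨t, ht⟩ : ∃ t, G.dist r w = t + 2 := ⟨G.dist r w - 2, by lia⟩
      exact ⟨t + 2, .inr ⟨hwx, ht, ht ▸ lt_of_not_ge fun hLw => hfar s hs w hwx hLw hsw⟩⟩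

theorem ncard_le_snTwo_of_boundsContacts [Finite V] (h : T.IsSplit x z v v' K K')
    (hrank : T.rank (T.branch z) < T.rank (T.branch x))
    (hexits : (T.branchExits z v K).ncard ≤ 2) (hL : T.BoundsContacts x z v' L)
    (hfar : ∀ s ∈ K, ∀ a ∈ T.path x, L ≤ G.dist r a → ¬ G.Adj s a) : K.ncard ≤ snTwo G r := by
  have hr : r ∉ K := root_notMem_of_isComponent h.isComponent
  refine ncard_le_sn_of_closed (h.validStrategy_delayedStrategy hrank hL hexits) hr fun s hs => ?_
  by_cases hsv : s = v
  · exact .inl ⟨0, .inr hsv⟩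
  by_cases hsz : G.Adj s (T.branch z)
  · exact .inl ⟨1, hsz.symm, .inl hs, ne_of_mem_of_not_mem hs hr, hsv⟩
  refine .inr fun w hw => (T.mem_or_mem_fence_of_adj h.isComponent hs hw).imp_right fun hwC =>
    h.exists_mem_delayedStrategy hfar hs hsz hw hwC ?_
  rintro rfl
  exact hsv (h.eq_of_mem_of_dist_eq_one hs (SimpleGraph.dist_eq_one_iff_adj.2 hw.symm))

end Setting.IsSplit

/-! ### One of two components can be spared -/

namespace BFSTree

variable {V : Type*} {G : SimpleGraph V} {r : V}

/-- A level path `R` off the fence leads from `v'` to a neighbour `q` of the vertex `p` of the path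
of `x`, and `K` has a neighbour on that path beyond `p`. -/
structure IsContact (T : BFSTree G r) (x z v' : V) (K : Set V) (p q : V) (R : Set V) : Prop where
  mem_path : p ∈ T.path x
  isLevelPath : IsLevelPath G r (T.fence x z) v' q R
  adj : G.Adj q p
  dist_eq : G.dist r p = G.dist r q + 1
  touches : Touches G K (T.segment x (Set.Ici (G.dist r p)))

end BFSTree

namespace Setting.IsSplit

open BFSTree

variable {V : Type*} {G : SimpleGraph V} {r : V} {T : Setting G r} {x z v v' : V}
  {K K' : Set V}

theorem exists_isContact [Finite V] (h : T.IsSplit x z v v' K K')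
    (hrank : T.rank (T.branch z) < T.rank (T.branch x))
    (hexits : (T.branchExits z v K).ncard ≤ 2) (hK : snTwo G r < K.ncard) :
    ∃ p q R, T.IsContact x z v' K p q R := by
  have hfar {L : ℕ} (hL : T.BoundsContacts x z v' L) :
      ∃ s ∈ K, ∃ a ∈ T.path x, L ≤ G.dist r a ∧ G.Adj s a := by
    by_contra! hfar
    exact hK.not_ge (h.ncard_le_snTwo_of_boundsContacts hrank hexits hL hfar)
  obtain ⟨p, ⟨hp, q, R, hR, hqp, hdist⟩, hmin⟩ := exists_minimalFor_of_wellFoundedLT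
    (fun p => p ∈ T.path x ∧ ∃ q R, IsLevelPath G r (T.fence x z) v' q R ∧ G.Adj q p ∧
      G.dist r p = G.dist r q + 1) (G.dist r) (by
    by_contra! hnone
    obtain ⟨-, -, a, ha, hlt, -⟩ := hfar (L := G.dist r x + 1) fun p hp q R hR hqp hdist =>
      (hnone p hp q R hR hqp hdist).elim
    exact hlt.not_gt (Nat.lt_succ_of_le (dist_le_of_mem_path ha)))
  obtain ⟨s, hs, a, ha, hle, hsa⟩ := hfar (L := G.dist r p) fun p' hp' q' R' hR' hqp' hdist' =>
    (le_total _ _).elim id (hmin ⟨hp', q', R', hR', hqp', hdist'⟩)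
  exact ⟨p, q, R, hp, hR, hqp, hdist, s, hs, a, ⟨ha, hle⟩, hsa⟩

end Setting.IsSplit

namespace BFSTree.IsContact

variable {V : Type*} {G : SimpleGraph V} {r : V} {T : Setting G r} {x z v v' p q : V}
  {K K' R L : Set V}

theorem subset (h : T.IsContact x z v' K p q R) (hs : T.IsSplit x z v v' K K') : R ⊆ K' :=
  hs.isComponent'.subset h.isLevelPath.isConnectedSet h.isLevelPath.notMem
    ⟨v', h.isLevelPath.start_mem, hs.mem'⟩

theorem ne_root_and_mem_of_adj (h : T.IsContact x z v' K p q R) (hs : T.IsSplit x z v v' K K')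
    (hL : IsComponent G (T.fence x z ∪ R ∪ K) L) {s w : V} (hsL : s ∈ L) (hw : G.Adj s w) :
    w ≠ r ∧ (w ∈ L ∨ w ∈ T.fence x z ∪ R) := by
  have hsX := hL.2.1 s hsL
  refine ⟨?_, or_iff_not_imp_right.2 fun hwC => hL.2.2 s hsL w hw ?_⟩
  · rintro rfl
    refine hsX ?_
    have hs1 := SimpleGraph.dist_eq_one_iff_adj.2 hw.symm
    rcases hs.eq_of_dist_eq_one hs1 with rfl | rfl | rfl | rfl
    · exact .inl (.inl (.inl (T.branch_mem_path x)))
    · exact .inl (.inl (.inr (T.branch_mem_path z)))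
    · exact .inr hs.mem
    · exact .inl (.inr h.isLevelPath.start_mem)
  · rintro (hwC' | hwK)
    · exact hwC hwC'
    · exact hsX (.inr (hs.isComponent.2.2 w hwK s hw.symm fun hsC => hsX (.inl (.inl hsC))))

theorem branch_mem_segment (h : T.IsContact x z v' K p q R) (hx : x ≠ r) :
    T.branch x ∈ T.segment x (Set.Ico 1 (G.dist r p)) := by
  have hpq := h.dist_eq
  have hq := h.isLevelPath.one_le_dist q h.isLevelPath.end_mem
  exact ⟨T.branch_mem_path x, by rw [T.dist_branch hx]; exact ⟨le_rfl, by lia⟩⟩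

theorem mem_segment (h : T.IsContact x z v' K p q R) : p ∈ T.segment x (Set.Ici (G.dist r p)) :=
  ⟨h.mem_path, Set.self_mem_Ici⟩

theorem touches_segment (h : T.IsContact x z v' K p q R) :
    Touches G (T.segment x (Set.Ico 1 (G.dist r p))) (T.segment x (Set.Ici (G.dist r p))) := by
  have hpq := h.dist_eq
  have hq := h.isLevelPath.one_le_dist q h.isLevelPath.end_mem
  have hpr : p ≠ r := ne_root_of_dist_pos G (by lia)
  have hparent := T.dist_parent p hpr
  exact ⟨_, ⟨parent_mem_path h.mem_path, by lia, by lia⟩, p, h.mem_segment, T.adj_parent p hpr⟩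

theorem not_touches_of_touches (h : T.IsContact x z v' K p q R) (hs : T.IsSplit x z v v' K K')
    (hz : Touches G K {T.branch z}) (hL : IsComponent G (T.fence x z ∪ R ∪ K) L)
    (hLz : Touches G L (T.segment z (Set.Ici 1)))
    (hLx : Touches G L (T.segment x (Set.Ico 1 (G.dist r p)))) : ¬ Touches G L R := by
  intro hLR
  have hxmem := h.branch_mem_segment hs.ne_root
  have hzmem := T.branch_mem_segment hs.ne_root'
  refine T.not_isMinor_bipartite (isMinor_completeBipartiteGraph (X₁ := L) (X₂ := {r})
    (X₃ := K ∪ T.segment x (Set.Ici (G.dist r p))) (Y₁ := T.segment x (Set.Ico 1 (G.dist r p)))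
    (Y₂ := T.segment z (Set.Ici 1)) (Y₃ := R) ?_ ?_ ?_)
  · have hx := T.isConnectedSet_segment Set.ordConnected_Ico ⟨_, hxmem⟩
    have hz := T.isConnectedSet_segment Set.ordConnected_Ici ⟨_, hzmem⟩
    have hp := T.isConnectedSet_segment Set.ordConnected_Ici ⟨_, h.mem_segment⟩
    have hKp := hs.isComponent.1.union hp h.touches
    simp only [List.forall_mem_cons]
    exact ⟨hL.1, .singleton r, hKp, hx, hz, h.isLevelPath.1, by simp⟩
  · have hL' := hL.2.1
    have hK' := hs.isComponent.2.1
    have hR := h.isLevelPath.notMem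
    have hRK := h.subset hs
    have hKK' := Set.disjoint_left.1 hs.disjoint
    have hr := T.root_mem_path x
    have hxz := fun a => eq_root_of_branch_ne (a := a) hs.branch_ne
    have hr0 : G.dist r r = 0 := SimpleGraph.dist_self
    have hpq := h.dist_eq
    simp only [Set.mem_union, not_or] at hL' hK' hR
    simp only [List.pairwise_cons, List.forall_mem_cons, List.not_mem_nil, false_imp_iff,
      implies_true, List.Pairwise.nil, and_true, Set.disjoint_left, segment, Set.mem_union,
      Set.mem_singleton_iff, Set.mem_ofPred_eq, Set.mem_Ici, Set.mem_Ico]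
    and_intros <;> intro a ha ha' <;> grind
  · simp only [List.forall_mem_cons]
    exact ⟨⟨hLx, hLz, hLR, by simp⟩, ⟨⟨r, rfl, _, hxmem, T.adj_branch hs.ne_root⟩,
      ⟨r, rfl, _, hzmem, T.adj_branch hs.ne_root'⟩,
      ⟨r, rfl, v', h.isLevelPath.start_mem, hs.symm.adj⟩, by simp⟩,
      ⟨h.touches_segment.symm.mono Set.subset_union_right subset_rfl,
      hz.mono Set.subset_union_left (Set.singleton_subset_iff.2 hzmem),
      ⟨p, .inr h.mem_segment, q, h.isLevelPath.end_mem, h.adj.symm⟩, by simp⟩, by simp⟩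

theorem disjoint_of_not_touches (h : T.IsContact x z v' K p q R) (hs : T.IsSplit x z v v' K K')
    (hL : IsComponent G (T.fence x z ∪ R ∪ K) L) (hLR : ¬ Touches G L R) : Disjoint L K' := by
  rw [Set.disjoint_left]
  intro a ha ha'
  refine hL.2.1 v' (hs.isComponent'.1.subset_of_closed ⟨a, ha, ha'⟩ ?_ hs.mem')
    (.inl (.inr h.isLevelPath.start_mem))
  rintro b ⟨hbL, -⟩ e he hbe
  exact (h.ne_root_and_mem_of_adj hs hL hbL hbe).2.resolve_right fun he' =>
    he'.elim (hs.isComponent'.2.1 e he) fun heR => hLR ⟨b, hbL, e, heR, hbe⟩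

theorem touches_of_touches (h : T.IsContact x z v' K p q R) (hs : T.IsSplit x z v v' K K')
    (hz : Touches G K {T.branch z}) (hz' : Touches G K' {T.branch z})
    (hL : IsComponent G (T.fence x z ∪ R ∪ K) L) (hLz : Touches G L (T.segment z (Set.Ici 1)))
    (hLx : Touches G L (T.segment x (Set.Ico 1 (G.dist r p)))) : Touches G L R := by
  by_contra hLR
  have hxmem := h.branch_mem_segment hs.ne_root
  have hzmem := T.branch_mem_segment hs.ne_root'
  refine T.not_isMinor_bipartite (isMinor_completeBipartiteGraph (X₁ := K) (X₂ := K')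
    (X₃ := T.segment x (Set.Ico 1 (G.dist r p))) (Y₁ := {r})
    (Y₂ := T.segment x (Set.Ici (G.dist r p))) (Y₃ := T.segment z (Set.Ici 1) ∪ L) ?_ ?_ ?_)
  · have hx := T.isConnectedSet_segment Set.ordConnected_Ico ⟨_, hxmem⟩
    have hz := T.isConnectedSet_segment Set.ordConnected_Ici ⟨_, hzmem⟩
    have hp := T.isConnectedSet_segment Set.ordConnected_Ici ⟨_, h.mem_segment⟩
    have hzL := hz.union hL.1 hLz.symm
    simp only [List.forall_mem_cons]
    exact ⟨hs.isComponent.1, hs.isComponent'.1, hx, .singleton r, hp, hzL, by simp⟩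
  · have hL' := hL.2.1
    have hK := hs.isComponent.2.1
    have hK' := hs.isComponent'.2.1
    have hKK' := Set.disjoint_left.1 hs.disjoint
    have hLK' := Set.disjoint_left.1 (h.disjoint_of_not_touches hs hL hLR)
    have hr := T.root_mem_path x
    have hxz := fun a => eq_root_of_branch_ne (a := a) hs.branch_ne
    have hr0 : G.dist r r = 0 := SimpleGraph.dist_self
    have hpq := h.dist_eq
    simp only [Set.mem_union, not_or] at hL' hK hK'
    simp only [List.pairwise_cons, List.forall_mem_cons, List.not_mem_nil, false_imp_iff,
      implies_true, List.Pairwise.nil, and_true, Set.disjoint_left, segment, Set.mem_union,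
      Set.mem_singleton_iff, Set.mem_ofPred_eq, Set.mem_Ici, Set.mem_Ico]
    and_intros <;> intro a ha ha' <;> grind
  · have hq := h.subset hs h.isLevelPath.end_mem
    have hzsub : {T.branch z} ⊆ T.segment z (Set.Ici 1) ∪ L :=
      Set.singleton_subset_iff.2 (.inl hzmem)
    simp only [List.forall_mem_cons]
    exact ⟨⟨⟨v, hs.mem, r, rfl, hs.adj.symm⟩, h.touches, hz.mono subset_rfl hzsub, by simp⟩,
      ⟨⟨v', hs.mem', r, rfl, hs.symm.adj.symm⟩, ⟨q, hq, p, h.mem_segment, h.adj⟩,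
      hz'.mono subset_rfl hzsub, by simp⟩,
      ⟨⟨_, hxmem, r, rfl, (T.adj_branch hs.ne_root).symm⟩, h.touches_segment,
      hLx.symm.mono subset_rfl Set.subset_union_right, by simp⟩, by simp⟩

/-- The part of the graph saved by protecting `S`: the set `S` itself and all components of the
graph without `T.fence x z ∪ R ∪ K` that have no neighbour in `E`. -/
def savedSet (T : BFSTree G r) (x z : V) (R K S E : Set V) : Set V :=
  S ∪ {w | ∃ L, IsComponent G (T.fence x z ∪ R ∪ K) L ∧ w ∈ L ∧ ¬ Touches G L E}

theorem ncard_savedSet_le [Finite V] (h : T.IsContact x z v' K p q R)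
    (hs : T.IsSplit x z v v' K K') {Q₁ Q₂ E : Set V} (hr₁ : r ∉ Q₁) (hr₂ : r ∉ Q₂)
    (h₁ : Q₁.InjOn (G.dist r)) (h₂ : Q₂.InjOn (G.dist r))
    (hE : T.fence x z ∪ R ⊆ {r} ∪ E ∪ (Q₁ ∪ Q₂)) :
    (savedSet T.toBFSTree x z R K (Q₁ ∪ Q₂) E).ncard ≤ snTwo G r := by
  refine ncard_le_snTwo_of_injOn_dist T.connected hr₁ hr₂ h₁ h₂ ?_ ?_
  · rintro (hr | ⟨L, hL, hr, -⟩)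
    · exact hr.elim hr₁ hr₂
    · exact hL.2.1 r hr (.inl (.inl (.inl (T.root_mem_path x))))
  · rintro s (hsQ | ⟨L, hL, hsL, hLE⟩)
    · exact .inl hsQ
    · refine .inr fun w hw => ?_
      obtain ⟨hwr, hwL | hw'⟩ := h.ne_root_and_mem_of_adj hs hL hsL hw
      · exact .inl (.inr ⟨L, hL, hwL, hLE⟩)
      · rcases hE hw' with (hwr' | hwE) | hwQ
        · exact (hwr hwr').elim
        · exact (hLE ⟨s, hsL, w, hwE, hw⟩).elim
        · exact .inr hwQ

theorem root_notMem (h : T.IsContact x z v' K p q R) (hs : T.IsSplit x z v v' K K') : r ∉ R :=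
  fun hr => T.root_notMem_of_isComponent hs.isComponent' (h.subset hs hr)

theorem ncard_savedSet_path_left_le [Finite V] (h : T.IsContact x z v' K p q R)
    (hs : T.IsSplit x z v v' K K') :
    (savedSet T.toBFSTree x z R K (T.path x \ {r} ∪ R) (T.segment z (Set.Ici 1))).ncard ≤
      snTwo G r := by
  refine h.ncard_savedSet_le hs (by simp) (h.root_notMem hs)
    ((T.injOn_path x).mono Set.sdiff_subset) h.isLevelPath.injOn_dist fun w hw => ?_
  by_cases hwr : w = r
  · exact .inl (.inl hwr)
  · rcases hw with (hw | hw) | hw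
    exacts [.inr (.inl ⟨hw, hwr⟩), .inl (.inr ⟨hw, T.dist_pos hwr⟩), .inr (.inr hw)]

theorem ncard_savedSet_path_right_le [Finite V] (h : T.IsContact x z v' K p q R)
    (hs : T.IsSplit x z v v' K K') :
    (savedSet T.toBFSTree x z R K (R ∪ T.segment x (Set.Ici (G.dist r p)) ∪ T.path z \ {r})
      (T.segment x (Set.Ico 1 (G.dist r p)))).ncard ≤ snTwo G r := by
  have hpq := h.dist_eq
  have hlevel := h.isLevelPath.dist_le
  refine h.ncard_savedSet_le hs ?_ (by simp) ?_ ((T.injOn_path z).mono Set.sdiff_subset)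
    fun w hw => ?_
  · rintro (hr | hr)
    · exact h.root_notMem hs hr
    · have := hr.2
      simp only [SimpleGraph.dist_self, Set.mem_Ici] at this
      lia
  · rintro a (ha | ha) b (hb | hb) hab
    · exact h.isLevelPath.injOn_dist ha hb hab
    · have := hb.2
      grind
    · have := ha.2
      grind
    · exact T.injOn_path x ha.1 hb.1 hab
  · by_cases hwr : w = r
    · exact .inl (.inl hwr)
    · rcases hw with (hw | hw) | hw
      · exact (lt_or_ge (G.dist r w) (G.dist r p)).elim
          (fun hwp => .inl (.inr ⟨hw, T.dist_pos hwr, hwp⟩)) fun hwp => .inr (.inl (.inr ⟨hw, hwp⟩))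
      exacts [.inr (.inr ⟨hw, hwr⟩), .inr (.inl (.inl hw))]

theorem ncard_compl_le [Finite V] (h : T.IsContact x z v' K p q R) (hs : T.IsSplit x z v v' K K')
    (hz : Touches G K {T.branch z}) (hz' : Touches G K' {T.branch z}) :
    {w | w ≠ r ∧ w ∉ K}.ncard ≤ 2 * snTwo G r := by
  refine (Set.ncard_le_ncard ?_ (Set.toFinite _)).trans <| (Set.ncard_union_le _ _).trans <|
    (add_le_add (h.ncard_savedSet_path_left_le hs) (h.ncard_savedSet_path_right_le hs)).trans
      (two_mul _).ge
  rintro w ⟨hwr, hwK⟩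
  by_cases hw : w ∈ T.fence x z ∪ R
  · rcases hw with (hw | hw) | hw
    exacts [.inl (.inl (.inl ⟨hw, hwr⟩)), .inr (.inl (.inr ⟨hw, hwr⟩)), .inl (.inl (.inr hw))]
  · obtain ⟨L, hL, hwL⟩ := exists_isComponent G (v := w) (X := T.fence x z ∪ R ∪ K)
      fun h => h.elim hw hwK
    by_cases hLz : Touches G L (T.segment z (Set.Ici 1))
    · exact .inr (.inr ⟨L, hL, hwL, fun hLx => h.not_touches_of_touches hs hz hL hLz hLx
        (h.touches_of_touches hs hz hz' hL hLz hLx)⟩)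
    · exact .inl (.inr ⟨L, hL, hwL, hLz⟩)

end BFSTree.IsContact

namespace Setting.IsSplit

open BFSTree

variable {V : Type*} {G : SimpleGraph V} {r : V} {T : Setting G r} {x z v v' : V}
  {K K' : Set V}

theorem ncard_outside_le [Finite V] (h : T.IsSplit x z v v' K K') :
    {w | w ≠ r ∧ w ∉ K ∧ w ∉ K'}.ncard ≤ snTwo G r := by
  refine T.ncard_le_snTwo_of_fence x z (by simp) ?_
  rintro s ⟨hsr, hsK, hsK'⟩ hs
  constructor
  · intro hs1
    rcases h.eq_of_dist_eq_one hs1 with rfl | rfl | rfl | rfl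
    exacts [hs (.inl (T.branch_mem_path x)), hs (.inr (T.branch_mem_path z)), hsK h.mem,
      hsK' h.mem']
  · intro w hw
    refine or_iff_not_imp_right.2 fun hw' => ⟨?_, fun hwK => ?_, fun hwK => ?_⟩
    · rintro rfl
      exact hw' (.inl (T.root_mem_path x))
    · exact hsK (h.isComponent.2.2 w hwK s hw.symm hs)
    · exact hsK' (h.isComponent'.2.2 w hwK s hw.symm hs)

theorem ncard_compl_le_of_ncard_le [Finite V] (h : T.IsSplit x z v v' K K')
    (hK : K.ncard ≤ snTwo G r) : {w | w ≠ r ∧ w ∉ K'}.ncard ≤ 2 * snTwo G r := by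
  have hsub : {w | w ≠ r ∧ w ∉ K'} ⊆ {w | w ≠ r ∧ w ∉ K ∧ w ∉ K'} ∪ K := by
    rintro w ⟨hwr, hwK'⟩
    exact (em (w ∈ K)).elim .inr fun hwK => .inl ⟨hwr, hwK, hwK'⟩
  have := Set.ncard_le_ncard hsub (Set.toFinite _)
  have := Set.ncard_union_le {w | w ≠ r ∧ w ∉ K ∧ w ∉ K'} K
  have := h.ncard_outside_le
  lia

theorem ncard_le_of_not_touches [Finite V] (h : T.IsSplit x z v v' K K')
    (hz : ¬ Touches G K {T.branch z}) : K.ncard ≤ snTwo G r := by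
  have hK := T.fence_comm x z ▸ h.isComponent
  refine T.ncard_le_snTwo_of_fence_of_neighbor (x := z) (z := x)
    (T.root_notMem_of_isComponent h.isComponent) h.dist_eq_one (fun s hs _ => ⟨?_, ?_⟩)
    (.inr ⟨fun hz' => hK.2.1 _ hz' (.inl (T.branch_mem_path z)), fun s hs _ hsz =>
      hz ⟨s, hs, _, rfl, hsz⟩⟩)
  · exact h.eq_of_mem_of_dist_eq_one hs
  · exact fun w hw => T.mem_or_mem_fence_of_adj hK hs hw

theorem ncard_branchExits_add_le [Finite V] (h : T.IsSplit x z v v' K K')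
    (hrank : T.rank (T.branch z) < T.rank (T.branch x)) :
    (T.branchExits z v K).ncard + (T.branchExits z v' K').ncard ≤ 5 := by
  have hzr := T.adj_branch h.ne_root'
  have hinter : (T.branchExits z v K ∩ T.branchExits z v' K').ncard ≤ 1 := by
    rw [Set.ncard_le_one (Set.toFinite _)]
    have hpath : ∀ a ∈ T.branchExits z v K ∩ T.branchExits z v' K',
        a ∈ T.path z ∧ G.dist r a = 2 := fun a ha =>
      ⟨ha.1.2.1.elim (fun haK => ha.2.2.1.resolve_left (Set.disjoint_left.1 h.disjoint haK)) id,
        h.dist_eq_two_of_mem_branchExits ha.1⟩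
    exact fun a ha b hb => T.injOn_path z (hpath a ha).1 (hpath b hb).1
      ((hpath a ha).2.trans (hpath b hb).2.symm)
  have hr : r ∉ T.branchExits z v K ∪ T.branchExits z v' K' := by
    rintro (hr | hr) <;> exact hr.2.2.1 rfl
  have hsub : insert r (T.branchExits z v K ∪ T.branchExits z v' K') ⊆
      G.neighborSet (T.branch z) := by
    rintro w (rfl | hw | hw)
    exacts [hzr.symm, hw.1, hw.1]
  have hunion := (Set.ncard_le_ncard hsub (Set.toFinite _)).trans
    (T.ncard_neighborSet_le _ hzr _ (T.adj_branch h.ne_root) hrank)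
  rw [Set.ncard_insert_of_notMem hr (Set.toFinite _)] at hunion
  have := Set.ncard_union_add_ncard_inter (T.branchExits z v K) (T.branchExits z v' K')
  lia

theorem ncard_compl_le_of_ncard_branchExits_le [Finite V] (h : T.IsSplit x z v v' K K')
    (hrank : T.rank (T.branch z) < T.rank (T.branch x)) (hz : Touches G K {T.branch z})
    (hz' : Touches G K' {T.branch z}) (hexits : (T.branchExits z v K).ncard ≤ 2) :
    {w | w ≠ r ∧ w ∉ K}.ncard ≤ 2 * snTwo G r ∨ {w | w ≠ r ∧ w ∉ K'}.ncard ≤ 2 * snTwo G r := by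
  rcases le_or_gt K.ncard (snTwo G r) with hK | hK
  · exact .inr (h.ncard_compl_le_of_ncard_le hK)
  · obtain ⟨p, q, R, hcontact⟩ := h.exists_isContact hrank hexits hK
    exact .inl (hcontact.ncard_compl_le h hz hz')

theorem ncard_compl_le_of_rank_lt [Finite V] (h : T.IsSplit x z v v' K K')
    (hrank : T.rank (T.branch z) < T.rank (T.branch x)) :
    {w | w ≠ r ∧ w ∉ K}.ncard ≤ 2 * snTwo G r ∨ {w | w ≠ r ∧ w ∉ K'}.ncard ≤ 2 * snTwo G r := by
  by_cases hz : Touches G K {T.branch z}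
  · by_cases hz' : Touches G K' {T.branch z}
    · rcases le_or_gt (T.branchExits z v K).ncard 2 with hexits | hexits
      · exact h.ncard_compl_le_of_ncard_branchExits_le hrank hz hz' hexits
      · have := h.ncard_branchExits_add_le hrank
        exact (h.symm.ncard_compl_le_of_ncard_branchExits_le hrank hz' hz (by lia)).symm
    · exact .inl (h.symm.ncard_compl_le_of_ncard_le (h.symm.ncard_le_of_not_touches hz'))
  · exact .inr (h.ncard_compl_le_of_ncard_le (h.ncard_le_of_not_touches hz))

theorem ncard_compl_le_or [Finite V] (h : T.IsSplit x z v v' K K') :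
    {w | w ≠ r ∧ w ∉ K}.ncard ≤ 2 * snTwo G r ∨ {w | w ≠ r ∧ w ∉ K'}.ncard ≤ 2 * snTwo G r := by
  rcases lt_trichotomy (T.rank (T.branch z)) (T.rank (T.branch x)) with hrank | hrank | hrank
  · exact h.ncard_compl_le_of_rank_lt hrank
  · exact (h.branch_ne (T.rank_injOn (T.adj_branch h.ne_root') (T.adj_branch h.ne_root)
      hrank).symm).elim
  · exact h.swap.ncard_compl_le_of_rank_lt hrank

end Setting.IsSplit

/-! ### Critical components -/

namespace BFSTree

variable {V : Type*} {G : SimpleGraph V} {r x z : V} {T : BFSTree G r}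

/-- The neighbours of `r` in `S` that are not on the fence of `x` and `z`. -/
def rootNeighbors (T : BFSTree G r) (x z : V) (S : Set V) : Set V :=
  {v ∈ S | v ∉ T.fence x z ∧ G.dist r v = 1}

/-- The vertices, other than `r`, that are not in a component off the fence containing a neighbour
of `r`. -/
def rootlessPart (T : BFSTree G r) (x z : V) : Set V :=
  {w | w ≠ r ∧ ∀ K, IsComponent G (T.fence x z) K → w ∈ K → T.rootNeighbors x z K = ∅}

/-- A component `K` off the fence is critical if it cannot be saved cheaply: it contains two
neighbours of `r` when `x` and `z` lie in the same branch, and otherwise it contains one and is,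
together with the rootless part, larger than two strategies can save. -/
structure IsCritical (T : BFSTree G r) (x z : V) (K : Set V) : Prop where
  nontrivial_of_branch_eq : T.branch x = T.branch z → (T.rootNeighbors x z K).Nontrivial
  nonempty : (T.rootNeighbors x z K).Nonempty
  lt_ncard_of_branch_ne : T.branch x ≠ T.branch z →
    2 * snTwo G r < (K ∪ T.rootlessPart x z).ncard

/-- The set `Q` is saved by one strategy, or by two strategies provided that `x`, `z` and some
vertex of `Q` account for three different neighbours of `r`. -/
def IsCheap (T : BFSTree G r) (x z : V) (Q : Set V) : Prop :=
  Q.ncard ≤ snTwo G r ∨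
    Q.ncard ≤ 2 * snTwo G r ∧ T.branch x ≠ T.branch z ∧ (T.rootNeighbors x z Q).Nonempty

theorem mem_union_fence_of_adj {Q : Set V}
    (hQ : ∀ K, IsComponent G (T.fence x z) K → (K ∩ Q).Nonempty → K ⊆ Q) {s w : V} (hs : s ∈ Q)
    (hsf : s ∉ T.fence x z) (hw : G.Adj s w) : w ∈ Q ∪ T.fence x z := by
  obtain ⟨K, hK, hsK⟩ := exists_isComponent G hsf
  exact (T.mem_or_mem_fence_of_adj hK hsK hw).imp (fun hwK => hQ K hK ⟨s, hsK, hs⟩ hwK) id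

theorem ncard_le_snTwo_of_rootNeighbors_eq_empty [Finite V] {Q : Set V} (hr : r ∉ Q)
    (hclosed : ∀ s ∈ Q, s ∉ T.fence x z → ∀ w, G.Adj s w → w ∈ Q ∪ T.fence x z)
    (hQ : T.rootNeighbors x z Q = ∅) : Q.ncard ≤ snTwo G r :=
  T.ncard_le_snTwo_of_fence x z hr fun s hs hsf =>
    ⟨fun hs1 => (Set.eq_empty_iff_forall_notMem.1 hQ s ⟨hs, hsf, hs1⟩).elim, hclosed s hs hsf⟩

theorem ncard_le_snTwo_of_subsingleton_rootNeighbors [Finite V]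
    (hbranch : T.branch x = T.branch z) {Q : Set V} (hr : r ∉ Q)
    (hclosed : ∀ s ∈ Q, s ∉ T.fence x z → ∀ w, G.Adj s w → w ∈ Q ∪ T.fence x z)
    (hQ : (T.rootNeighbors x z Q).Subsingleton) : Q.ncard ≤ snTwo G r := by
  obtain hempty | ⟨v, hv⟩ := (T.rootNeighbors x z Q).eq_empty_or_nonempty
  · exact ncard_le_snTwo_of_rootNeighbors_eq_empty hr hclosed hempty
  · exact T.ncard_le_snTwo_of_fence_of_neighbor (x := x) (z := z) hr hv.2.2
      (fun s hs hsf => ⟨fun hs1 => hQ ⟨hs, hsf, hs1⟩ hv, hclosed s hs hsf⟩) (.inl hbranch)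

theorem ncard_le_snTwo_of_isComponent [Finite V] {K : Set V} (hK : IsComponent G (T.fence x z) K)
    (hbranch : T.branch x = T.branch z) (hsub : (T.rootNeighbors x z K).Subsingleton) :
    K.ncard ≤ snTwo G r :=
  ncard_le_snTwo_of_subsingleton_rootNeighbors hbranch (T.root_notMem_of_isComponent hK)
    (fun _ hs _ _ hw => T.mem_or_mem_fence_of_adj hK hs hw) hsub

theorem subsingleton_of_not_isCritical {K : Set V} (hK : ¬ T.IsCritical x z K)
    (hbranch : T.branch x = T.branch z) : (T.rootNeighbors x z K).Subsingleton := by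
  by_contra! hnontrivial
  exact hK ⟨fun _ => hnontrivial, hnontrivial.nonempty, fun hne => (hne hbranch).elim⟩

theorem ncard_union_rootlessPart_le {K : Set V} (hK : ¬ T.IsCritical x z K)
    (hbranch : T.branch x ≠ T.branch z) (hne : (T.rootNeighbors x z K).Nonempty) :
    (K ∪ T.rootlessPart x z).ncard ≤ 2 * snTwo G r := by
  by_contra! hlt
  exact hK ⟨fun heq => (hbranch heq).elim, hne, fun _ => hlt⟩

end BFSTree

theorem card_le_ncard_add_one {V : Type*} {r : V} {Q : Set V}
    (hQ : ∀ w, w ≠ r → w ∈ Q) : Nat.card V ≤ Q.ncard + 1 := by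
  have huniv : insert r Q = Set.univ :=
    Set.eq_univ_of_forall fun w => (eq_or_ne w r).imp id (hQ w)
  rw [← Set.ncard_univ, ← huniv]
  exact Set.ncard_insert_le r Q

namespace Setting

open BFSTree

variable {V : Type*} {G : SimpleGraph V} {r x z : V} {T : Setting G r} {K K' : Set V}

theorem disjoint_of_isComponent {X : Set V} (hK : IsComponent G X K) (hK' : IsComponent G X K')
    (hne : K ≠ K') : Disjoint K K' :=
  Set.disjoint_left.2 fun _ ha ha' => hne (hK.eq_of_mem hK' ha ha')

theorem isSplit (hx : x ≠ r) (hz : z ≠ r) (hbranch : T.branch x ≠ T.branch z)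
    (hK : IsComponent G (T.fence x z) K) (hK' : IsComponent G (T.fence x z) K') (hne : K ≠ K')
    {v v' : V} (hv : v ∈ T.rootNeighbors x z K) (hv' : v' ∈ T.rootNeighbors x z K') :
    T.IsSplit x z v v' K K' :=
  ⟨hx, hz, hbranch, hK, hK', hne, hv.1, hv'.1, hv.2.2, hv'.2.2⟩

theorem rootlessPart_subset (hK : IsComponent G (T.fence x z) K)
    (hne : (T.rootNeighbors x z K).Nonempty) : T.rootlessPart x z ⊆ {w | w ≠ r ∧ w ∉ K} :=
  fun _ hw => ⟨hw.1, fun hwK => hne.ne_empty (hw.2 K hK hwK)⟩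

theorem isComponent_subset_compl (hK : IsComponent G (T.fence x z) K)
    (hK' : IsComponent G (T.fence x z) K') (hne : K ≠ K') : K' ⊆ {w | w ≠ r ∧ w ∉ K} :=
  fun _ hw => ⟨ne_of_mem_of_not_mem hw (T.root_notMem_of_isComponent hK'),
    fun hwK => hne (hK.eq_of_mem hK' hwK hw)⟩

theorem eq_of_isCritical [Finite V] (hx : x ≠ r) (hz : z ≠ r)
    (hK : IsComponent G (T.fence x z) K) (hK' : IsComponent G (T.fence x z) K')
    (hcrit : T.IsCritical x z K) (hcrit' : T.IsCritical x z K') : K = K' := by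
  by_contra hne
  have hdisj := Set.disjoint_left.1 (disjoint_of_isComponent hK hK' hne)
  by_cases hbranch : T.branch x = T.branch z
  · obtain ⟨v₁, ⟨hv₁, hvf₁, hvd₁⟩, v₂, ⟨hv₂, hvf₂, hvd₂⟩, hne₁₂⟩ :=
      hcrit.nontrivial_of_branch_eq hbranch
    obtain ⟨v₃, ⟨hv₃, hvf₃, hvd₃⟩, v₄, ⟨hv₄, hvf₄, hvd₄⟩, hne₃₄⟩ :=
      hcrit'.nontrivial_of_branch_eq hbranch
    have hmem : T.branch x ∈ T.fence x z := .inl (T.branch_mem_path x)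
    have hlength := T.length_le_four (l := [T.branch x, v₁, v₂, v₃, v₄])
      (by
        simp only [List.forall_mem_cons]
        exact ⟨T.dist_branch hx, hvd₁, hvd₂, hvd₃, hvd₄, by simp⟩) (by
        simp only [List.nodup_cons, List.mem_cons, List.not_mem_nil, or_false, not_or]
        grind)
    simp at hlength
  · obtain ⟨v, hv⟩ := hcrit.nonempty
    obtain ⟨v', hv'⟩ := hcrit'.nonempty
    rcases (isSplit hx hz hbranch hK hK' hne hv hv').ncard_compl_le_or with hle | hle
    · refine ((hcrit'.lt_ncard_of_branch_ne hbranch).trans_le (Set.ncard_le_ncard ?_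
        (Set.toFinite _))).not_ge hle
      exact Set.union_subset (isComponent_subset_compl hK hK' hne) (rootlessPart_subset hK ⟨v, hv⟩)
    · refine ((hcrit.lt_ncard_of_branch_ne hbranch).trans_le (Set.ncard_le_ncard ?_
        (Set.toFinite _))).not_ge hle
      exact Set.union_subset (isComponent_subset_compl hK' hK (Ne.symm hne))
        (rootlessPart_subset hK' ⟨v', hv'⟩)

theorem card_le_of_branch_eq [Finite V] (hx : x ≠ r) (hbranch : T.branch x = T.branch z)
    (hK : IsComponent G (T.fence x z) K) (hK' : IsComponent G (T.fence x z) K') (hne : K ≠ K')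
    {v v' : V} (hv : v ∈ T.rootNeighbors x z K) (hv' : v' ∈ T.rootNeighbors x z K')
    (hsub : (T.rootNeighbors x z K).Subsingleton)
    (hsub' : (T.rootNeighbors x z K').Subsingleton) : Nat.card V ≤ 6 * snTwo G r + 1 := by
  have hdisj := Set.disjoint_left.1 (disjoint_of_isComponent hK hK' hne)
  have hxf : T.branch x ∈ T.fence x z := .inl (T.branch_mem_path x)
  obtain ⟨u, hu, hul⟩ := T.exists_dist_eq_one_notMem (l := [T.branch x, v, v']) (by simp)
  have hnbrs {w : V} (hw : G.dist r w = 1) := T.mem_of_dist_eq_one (l := [u, T.branch x, v, v'])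
    (by
      simp only [List.forall_mem_cons]
      exact ⟨hu, T.dist_branch hx, hv.2.2, hv'.2.2, by simp⟩) (by
      have h₁ := hv.2.1
      have h₂ := hv'.2.1
      have h₃ := hv.1
      have h₄ := hv'.1
      simp only [List.nodup_cons, List.mem_cons, List.not_mem_nil, or_false, not_or] at hul ⊢
      grind) rfl hw
  have houter : {w | w ≠ r ∧ w ∉ K ∧ w ∉ K'}.ncard ≤ snTwo G r := by
    refine ncard_le_snTwo_of_subsingleton_rootNeighbors hbranch (by simp) ?_ ?_
    · refine fun s hs hsf w hw => or_iff_not_imp_right.2 fun hwf => ⟨?_, ?_, ?_⟩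
      · rintro rfl
        exact hwf (.inl (T.root_mem_path x))
      · exact fun hwK => hs.2.1 (hK.2.2 w hwK s hw.symm hsf)
      · exact fun hwK => hs.2.2 (hK'.2.2 w hwK s hw.symm hsf)
    · refine Set.subsingleton_of_forall_eq u fun w hw => ?_
      have hmem := hnbrs hw.2.2
      simp only [List.mem_cons, List.not_mem_nil, or_false] at hmem
      rcases hmem with rfl | rfl | rfl | rfl
      exacts [rfl, (hw.2.1 hxf).elim, (hw.1.2.1 hv.1).elim, (hw.1.2.2 hv'.1).elim]
  have hcard := card_le_ncard_add_one (Q := K ∪ K' ∪ {w | w ≠ r ∧ w ∉ K ∧ w ∉ K'}) (r := r) (by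
    simp only [Set.mem_union, Set.mem_ofPred_eq]
    tauto)
  have hunion := Set.ncard_union_le (K ∪ K') {w | w ≠ r ∧ w ∉ K ∧ w ∉ K'}
  have hunion' := Set.ncard_union_le K K'
  have hle := ncard_le_snTwo_of_isComponent hK hbranch hsub
  have hle' := ncard_le_snTwo_of_isComponent hK' hbranch hsub'
  lia

theorem card_le_of_branch_ne [Finite V] (h : T.IsSplit x z v v' K K')
    (hle : (K ∪ T.rootlessPart x z).ncard ≤ 2 * snTwo G r)
    (hle' : (K' ∪ T.rootlessPart x z).ncard ≤ 2 * snTwo G r) :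
    Nat.card V ≤ 6 * snTwo G r + 1 := by
  have hcard := card_le_ncard_add_one (r := r)
    (Q := (K ∪ T.rootlessPart x z) ∪ (K' ∪ T.rootlessPart x z)) fun w hwr => by
    by_cases hwK : w ∈ K
    · exact .inl (.inl hwK)
    by_cases hwK' : w ∈ K'
    · exact .inr (.inl hwK')
    refine .inl (.inr ⟨hwr, fun L hL hwL => Set.eq_empty_of_forall_notMem fun u hu => ?_⟩)
    rcases h.eq_of_dist_eq_one hu.2.2 with rfl | rfl | rfl | rfl
    · exact hu.2.1 (.inl (T.branch_mem_path x))
    · exact hu.2.1 (.inr (T.branch_mem_path z))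
    · exact hwK (h.isComponent.eq_of_mem hL h.mem hu.1 ▸ hwL)
    · exact hwK' (h.isComponent'.eq_of_mem hL h.mem' hu.1 ▸ hwL)
  have hunion := Set.ncard_union_le (K ∪ T.rootlessPart x z) (K' ∪ T.rootlessPart x z)
  lia

theorem card_le_of_not_isCritical [Finite V] (hx : x ≠ r) (hz : z ≠ r)
    (hK : IsComponent G (T.fence x z) K) (hK' : IsComponent G (T.fence x z) K') (hne : K ≠ K')
    (hv : (T.rootNeighbors x z K).Nonempty) (hv' : (T.rootNeighbors x z K').Nonempty)
    (hcrit : ¬ T.IsCritical x z K) (hcrit' : ¬ T.IsCritical x z K') :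
    Nat.card V ≤ 6 * snTwo G r + 1 := by
  obtain ⟨v, hv⟩ := hv
  obtain ⟨v', hv'⟩ := hv'
  by_cases hbranch : T.branch x = T.branch z
  · exact card_le_of_branch_eq hx hbranch hK hK' hne hv hv'
      (subsingleton_of_not_isCritical hcrit hbranch) (subsingleton_of_not_isCritical hcrit' hbranch)
  · exact card_le_of_branch_ne (isSplit hx hz hbranch hK hK' hne hv hv')
      (ncard_union_rootlessPart_le hcrit hbranch ⟨v, hv⟩)
      (ncard_union_rootlessPart_le hcrit' hbranch ⟨v', hv'⟩)

theorem isCheap_of_forall_not_isCritical [Finite V] (hx : x ≠ r) (hz : z ≠ r) {Q : Set V}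
    (hr : r ∉ Q) (hsub : ∀ K, IsComponent G (T.fence x z) K → (K ∩ Q).Nonempty → K ⊆ Q)
    (hQ : ∀ K, IsComponent G (T.fence x z) K → (K ∩ Q).Nonempty → ¬ T.IsCritical x z K) :
    Nat.card V ≤ 6 * snTwo G r + 1 ∨ T.IsCheap x z Q := by
  have hclosed := fun s hs hsf w hw => mem_union_fence_of_adj hsub (s := s) (w := w) hs hsf hw
  obtain hempty | ⟨v, hv⟩ := (T.rootNeighbors x z Q).eq_empty_or_nonempty
  · exact .inr (.inl (ncard_le_snTwo_of_rootNeighbors_eq_empty hr hclosed hempty))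
  obtain ⟨K, hK, hvK⟩ := exists_isComponent G hv.2.1
  have hcrit := hQ K hK ⟨v, hvK, hv.1⟩
  have hvK' : v ∈ T.rootNeighbors x z K := ⟨hvK, hv.2⟩
  by_cases hone : T.rootNeighbors x z Q ⊆ T.rootNeighbors x z K
  · refine .inr ?_
    by_cases hbranch : T.branch x = T.branch z
    · exact .inl (ncard_le_snTwo_of_subsingleton_rootNeighbors hbranch hr hclosed
        ((subsingleton_of_not_isCritical hcrit hbranch).anti hone))
    · refine .inr ⟨(Set.ncard_le_ncard ?_ (Set.toFinite _)).trans
        (ncard_union_rootlessPart_le hcrit hbranch ⟨v, hvK'⟩), hbranch, v, hv⟩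
      refine fun w hw => or_iff_not_imp_left.2 fun hwK => ⟨ne_of_mem_of_not_mem hw hr, ?_⟩
      refine fun L hL hwL => Set.eq_empty_of_forall_notMem fun u hu => hwK ?_
      have huK := (hone ⟨hsub L hL ⟨w, hwL, hw⟩ hu.1, hu.2⟩).1
      exact hK.eq_of_mem hL huK hu.1 ▸ hwL
  · obtain ⟨u, hu, huK⟩ := Set.not_subset.1 hone
    obtain ⟨L, hL, huL⟩ := exists_isComponent G hu.2.1
    exact .inl (card_le_of_not_isCritical hx hz hK hL (fun hKL => huK ⟨hKL ▸ huL, hu.2⟩) ⟨v, hvK'⟩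
      ⟨u, huL, hu.2⟩ hcrit (hQ L hL ⟨u, huL, hu.1⟩))

theorem isCheap_compl_of_isCritical [Finite V] (hx : x ≠ r) (hz : z ≠ r) {B : Set V}
    (hB : IsComponent G (T.fence x z) B) (hcrit : T.IsCritical x z B) :
    Nat.card V ≤ 6 * snTwo G r + 1 ∨ T.IsCheap x z {w | w ≠ r ∧ w ∉ B} := by
  have hne {K : Set V} (hK : (K ∩ {w | w ≠ r ∧ w ∉ B}).Nonempty) : B ≠ K := by
    rintro rfl
    exact hK.some_mem.2.2 hK.some_mem.1
  exact isCheap_of_forall_not_isCritical hx hz (by simp)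
    (fun K hK hKB => isComponent_subset_compl hB hK (hne hKB))
    (fun K hK hKB hKcrit => hne hKB (eq_of_isCritical hx hz hB hK hcrit hKcrit))

theorem exists_isCritical [Finite V] (hx : x ≠ r) : Nat.card V ≤ 6 * snTwo G r + 1 ∨
    ∃ B, IsComponent G (T.fence x x) B ∧ T.IsCritical x x B := by
  refine or_iff_not_imp_right.2 fun hno => ?_
  push Not at hno
  have hcard := card_le_ncard_add_one (Q := {w | w ≠ r}) (r := r) fun w hw => hw
  rcases isCheap_of_forall_not_isCritical hx hx (Q := {w | w ≠ r}) (by simp)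
    (fun K hK _ a ha => ne_of_mem_of_not_mem ha (T.root_notMem_of_isComponent hK))
    (fun K hK _ => hno K hK) with hle | hle | ⟨-, hne, -⟩
  exacts [hle, by lia, (hne rfl).elim]

end Setting

/-! ### Crossing components -/

/-- The vertices outside `D` that are adjacent to a vertex of `D`. -/
def outerBoundary {V : Type*} (G : SimpleGraph V) (D : Set V) : Set V :=
  {q | q ∉ D ∧ ∃ a ∈ D, G.Adj a q}

section Crossing

variable {V : Type*} {G : SimpleGraph V} {S T X Y D E M N L L' R R' W : Set V}

theorem touches_of_mem_outerBoundary {q : V} (hq : q ∈ outerBoundary G D) : Touches G {q} D :=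
  let ⟨a, ha, haq⟩ := hq.2
  ⟨q, rfl, a, ha, haq.symm⟩

theorem IsComponent.outerBoundary_subset (hD : IsComponent G X D) : outerBoundary G D ⊆ X :=
  fun q ⟨hq, a, ha, haq⟩ => by_contra fun hqX => hq (hD.2.2 a ha q haq hqX)

theorem IsConnectedSet.isComponent (hD : IsConnectedSet G D) (hX : ∀ a ∈ D, a ∉ X)
    (h : outerBoundary G D ⊆ X) : IsComponent G X D :=
  ⟨hD, hX, fun a ha _ hab hb => by_contra fun hbD => hb (h ⟨hbD, a, ha, hab⟩)⟩

theorem IsConnectedSet.union_of_nonempty (hS : IsConnectedSet G S)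
    (h : T.Nonempty → IsConnectedSet G T ∧ Touches G S T) : IsConnectedSet G (S ∪ T) := by
  obtain rfl | hT := T.eq_empty_or_nonempty
  · rwa [Set.union_empty]
  · exact hS.union (h hT).1 (h hT).2

theorem IsComponent.touches_inter_of_notMem (hD : IsComponent G X D) (hne : (D ∩ Y).Nonempty)
    (hE : IsComponent G (X ∪ Y) E) (hED : E ⊆ D) : Touches G E (D ∩ Y) := by
  by_contra hno
  refine hE.2.1 hne.some ?_ (.inr hne.some_mem.2)
  refine hD.1.subset_of_closed ?_ (fun a ha b hb hab => ?_) hne.some_mem.1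
  · exact (Set.inter_eq_left.2 hED).symm ▸ hE.1.nonempty
  · refine hE.2.2 a ha.1 b hab ?_
    rintro (hbX | hbY)
    exacts [hD.2.1 b hb hbX, hno ⟨a, ha.1, b, ⟨hb, hbY⟩, hab⟩]

/-- A connected subset of `D` that contains `D ∩ Y`, touches `T`, and is otherwise covered by
components off `X ∪ Y` that touch both `D ∩ Y` and `T`. -/
structure IsExtension (G : SimpleGraph V) (X Y D T S : Set V) : Prop where
  isConnectedSet : IsConnectedSet G S
  inter_subset : D ∩ Y ⊆ S
  subset : S ⊆ D
  touches : Touches G S T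
  mem_or_exists : ∀ a ∈ S, a ∈ Y ∨
    ∃ F ⊆ D, IsComponent G (X ∪ Y) F ∧ a ∈ F ∧ Touches G F (D ∩ Y) ∧ Touches G F T

theorem IsComponent.exists_isExtension (hD : IsComponent G X D) (hY : IsConnectedSet G (D ∩ Y))
    (hT : Touches G D T) : ∃ S, IsExtension G X Y D T S := by
  obtain ⟨a, ha, u, hu, hau⟩ := hT
  by_cases haY : a ∈ Y
  · exact ⟨D ∩ Y, hY, subset_rfl, Set.inter_subset_left, ⟨a, ⟨ha, haY⟩, u, hu, hau⟩,
      fun b hb => .inl hb.2⟩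
  obtain ⟨F, hF, haF⟩ := exists_isComponent G (X := X ∪ Y) (not_or_intro (hD.2.1 a ha) haY)
  have hFD : F ⊆ D := hD.subset hF.1 (fun b hb hbX => hF.2.1 b hb (.inl hbX)) ⟨a, haF, ha⟩
  have hFY := hD.touches_inter_of_notMem hY.nonempty hF hFD
  refine ⟨D ∩ Y ∪ F, hY.union hF.1 hFY.symm, Set.subset_union_left,
    Set.union_subset Set.inter_subset_left hFD, ⟨a, .inr haF, u, hu, hau⟩, ?_⟩
  rintro b (hb | hb)
  exacts [.inl hb.2, .inr ⟨F, hFD, hF, hb, hFY, a, haF, u, hu, hau⟩]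

/-- A side of a crossing: a connected set `L`, possibly continued by a connected set `L'`, whose
last part is adjacent to both `M` and `N`. -/
structure IsSide (G : SimpleGraph V) (M N L L' : Set V) : Prop where
  isConnectedSet : IsConnectedSet G L
  of_nonempty : L'.Nonempty →
    IsConnectedSet G L' ∧ Touches G L L' ∧ Touches G M L' ∧ Touches G N L'
  of_not_nonempty : ¬ L'.Nonempty → Touches G M L ∧ Touches G N L

namespace IsSide

theorem isConnectedSet_union (h : IsSide G M N L L') : IsConnectedSet G (L ∪ L') :=
  h.isConnectedSet.union_of_nonempty fun hL' =>
    ⟨(h.of_nonempty hL').1, (h.of_nonempty hL').2.1⟩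

theorem touches (h : IsSide G M N L L') : Touches G M (L ∪ L') ∧ Touches G N (L ∪ L') := by
  by_cases hL' : L'.Nonempty
  · obtain ⟨-, -, hM, hN⟩ := h.of_nonempty hL'
    exact ⟨hM.mono subset_rfl Set.subset_union_right, hN.mono subset_rfl Set.subset_union_right⟩
  · obtain ⟨hM, hN⟩ := h.of_not_nonempty hL'
    exact ⟨hM.mono subset_rfl Set.subset_union_left, hN.mono subset_rfl Set.subset_union_left⟩

end IsSide

/-- Components `D` off `X` and `E` off `Y` that cross each other, the part of each that lies on the
boundary of the other being connected, within a frame formed by the two sides and the top `W`. -/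
structure IsCrossing (G : SimpleGraph V) (X Y D E L L' R R' W : Set V) : Prop where
  isComponent : IsComponent G X D
  isComponent' : IsComponent G Y E
  isConnectedSet_inter : IsConnectedSet G (D ∩ Y)
  isConnectedSet_inter' : IsConnectedSet G (E ∩ X)
  left : IsSide G (E ∩ X) (D ∩ Y) L L'
  right : IsSide G (E ∩ X) (D ∩ Y) R R'
  isConnectedSet_top : IsConnectedSet G W
  touches_left_right : Touches G L R
  touches_left_top : Touches G L W
  touches_right_top : Touches G R W
  touches_top : Touches G D W
  touches_top' : Touches G E W
  touches_inter : ¬ L'.Nonempty → ¬ R'.Nonempty → Touches G D (E ∩ X)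
  subset : L ∪ L' ∪ (R ∪ R') ⊆ X ∩ Y
  disjoint_sides : Disjoint (L ∪ L') (R ∪ R')
  disjoint_left : Disjoint L L'
  disjoint_right : Disjoint R R'
  disjoint_top : Disjoint (L ∪ L' ∪ (R ∪ R') ∪ (D ∪ E)) W

namespace IsCrossing

theorem swap_sides (h : IsCrossing G X Y D E L L' R R' W) :
    IsCrossing G X Y D E R R' L L' W where
  __ := h
  left := h.right
  right := h.left
  touches_left_right := h.touches_left_right.symm
  touches_left_top := h.touches_right_top
  touches_right_top := h.touches_left_top
  touches_inter hR hL := h.touches_inter hL hR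
  subset := Set.union_comm (R ∪ R') _ ▸ h.subset
  disjoint_sides := h.disjoint_sides.symm
  disjoint_left := h.disjoint_right
  disjoint_right := h.disjoint_left
  disjoint_top := Set.union_comm (R ∪ R') _ ▸ h.disjoint_top

theorem isMinor_of_isComponent (h : IsCrossing G X Y D E L L' R R' W) {F : Set V}
    (hF : IsComponent G (X ∪ Y) F) (hFD : F ⊆ D) (hM : Touches G F (E ∩ X))
    (hN : Touches G F (D ∩ Y)) (hW : Touches G F W) :
    IsMinor (completeBipartiteGraph (Fin 3) (Fin 3)) G := by
  have hdisj : [F, L ∪ L', R ∪ R', E ∩ X, D ∩ Y, W].Pairwise Disjoint := by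
    have hFavoid := hF.2.1
    have hDavoid := h.isComponent.2.1
    have hEavoid := h.isComponent'.2.1
    have hsub := fun a ha => @h.subset a ha
    have hsides := Set.disjoint_left.1 h.disjoint_sides
    have htop := Set.disjoint_left.1 h.disjoint_top
    simp only [Set.mem_union, Set.mem_inter_iff, not_or] at hFavoid hsub htop hsides
    simp only [List.pairwise_cons, List.forall_mem_cons, List.not_mem_nil, false_imp_iff,
      implies_true, List.Pairwise.nil, and_true, Set.disjoint_left, Set.mem_union]
    and_intros <;> intro a ha ha' <;> grind
  refine isMinor_completeBipartiteGraph ?_ hdisj ?_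
  · simp only [List.forall_mem_cons]
    exact ⟨hF.1, h.left.isConnectedSet_union, h.right.isConnectedSet_union,
      h.isConnectedSet_inter', h.isConnectedSet_inter, h.isConnectedSet_top, by simp⟩
  · simp only [List.forall_mem_cons]
    exact ⟨⟨hM, hN, hW, by simp⟩, ⟨h.left.touches.1.symm, h.left.touches.2.symm,
      h.touches_left_top.mono Set.subset_union_left subset_rfl, by simp⟩,
      ⟨h.right.touches.1.symm, h.right.touches.2.symm,
      h.touches_right_top.mono Set.subset_union_left subset_rfl, by simp⟩, by simp⟩

theorem disjoint_of_isExtension (h : IsCrossing G X Y D E L L' R R' W)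
    (hG : ¬ IsMinor (completeBipartiteGraph (Fin 3) (Fin 3)) G) {D' E' : Set V}
    (hD' : IsExtension G X Y D W D' ∨ IsExtension G X Y D (E ∩ X) D')
    (hE' : IsExtension G Y X E W E') : Disjoint D' E' := by
  have hsub : D' ⊆ D := hD'.elim (·.subset) (·.subset)
  refine Set.disjoint_left.2 fun a haD haE => ?_
  rcases hE'.mem_or_exists a haE with haX | ⟨F', -, hF', haF', hFM, hFW⟩
  · exact h.isComponent.2.1 a (hsub haD) haX
  have hnotMem := h.isComponent'.2.1 a (hE'.subset haE)
  obtain ⟨F, hFD, hF, haF, hFN⟩ : ∃ F ⊆ D, IsComponent G (X ∪ Y) F ∧ a ∈ F ∧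
      Touches G F (D ∩ Y) := by
    rcases hD' with hD' | hD' <;>
      obtain ⟨F, hFD, hF, haF, hFN, -⟩ := (hD'.mem_or_exists a haD).resolve_left hnotMem <;>
      exact ⟨F, hFD, hF, haF, hFN⟩
  obtain rfl := hF.eq_of_mem (Set.union_comm X Y ▸ hF') haF haF'
  exact hG (h.isMinor_of_isComponent hF hFD hFM hFN hFW)

theorem isMinor_of_nonempty_left (h : IsCrossing G X Y D E L L' R R' W) (hL' : L'.Nonempty) :
    IsMinor (completeBipartiteGraph (Fin 3) (Fin 3)) G := by
  by_contra hG
  obtain ⟨D', hD'⟩ := h.isComponent.exists_isExtension h.isConnectedSet_inter h.touches_top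
  obtain ⟨E', hE'⟩ := h.isComponent'.exists_isExtension h.isConnectedSet_inter' h.touches_top'
  obtain ⟨hconn, hLL', hM, hN⟩ := h.left.of_nonempty hL'
  have hdisj : [D', E', L, L', R ∪ R', W].Pairwise Disjoint := by
    have hDE := Set.disjoint_left.1 (h.disjoint_of_isExtension hG (.inl hD') hE')
    have hDavoid := fun a ha => h.isComponent.2.1 a (hD'.subset ha)
    have hEavoid := fun a ha => h.isComponent'.2.1 a (hE'.subset ha)
    have hDsub := hD'.subset
    have hEsub := hE'.subset
    have hsub := fun a ha => @h.subset a ha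
    have hsides := Set.disjoint_left.1 h.disjoint_sides
    have hleft := Set.disjoint_left.1 h.disjoint_left
    have htop := Set.disjoint_left.1 h.disjoint_top
    simp only [Set.mem_union, Set.mem_inter_iff, not_or] at hsub htop hsides
    simp only [List.pairwise_cons, List.forall_mem_cons, List.not_mem_nil, false_imp_iff,
      implies_true, List.Pairwise.nil, and_true, Set.disjoint_left, Set.mem_union]
    and_intros <;> intro a ha ha' <;> grind
  refine hG (isMinor_completeBipartiteGraph ?_ hdisj ?_)
  · simp only [List.forall_mem_cons]
    exact ⟨hD'.isConnectedSet, hE'.isConnectedSet, h.left.isConnectedSet, hconn,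
      h.right.isConnectedSet_union, h.isConnectedSet_top, by simp⟩
  · simp only [List.forall_mem_cons]
    exact ⟨⟨hN.mono hD'.inter_subset subset_rfl,
      h.right.touches.2.mono hD'.inter_subset subset_rfl, hD'.touches, by simp⟩,
      ⟨hM.mono hE'.inter_subset subset_rfl,
      h.right.touches.1.mono hE'.inter_subset subset_rfl, hE'.touches, by simp⟩,
      ⟨hLL', h.touches_left_right.mono subset_rfl Set.subset_union_left, h.touches_left_top,
      by simp⟩, by simp⟩

theorem isMinor_of_not_nonempty (h : IsCrossing G X Y D E L L' R R' W) (hL' : ¬ L'.Nonempty)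
    (hR' : ¬ R'.Nonempty) (hG : ¬ IsMinor (completeBipartiteGraph (Fin 3) (Fin 3)) G) :
    IsMinor (⊤ : SimpleGraph (Fin 5)) G := by
  obtain ⟨E', hE'⟩ := h.isComponent'.exists_isExtension h.isConnectedSet_inter' h.touches_top'
  obtain ⟨D₁, hD₁⟩ := h.isComponent.exists_isExtension h.isConnectedSet_inter h.touches_top
  obtain ⟨D₂, hD₂⟩ := h.isComponent.exists_isExtension h.isConnectedSet_inter
    (h.touches_inter hL' hR')
  have hD₁₂ : IsConnectedSet G (D₁ ∪ D₂) := by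
    obtain ⟨a, ha⟩ := h.isConnectedSet_inter.nonempty
    exact hD₁.isConnectedSet.union_of_inter hD₂.isConnectedSet
      ⟨a, hD₁.inter_subset ha, hD₂.inter_subset ha⟩
  have hN : D ∩ Y ⊆ D₁ ∪ D₂ := hD₁.inter_subset.trans Set.subset_union_left
  obtain ⟨hML, hNL⟩ := h.left.of_not_nonempty hL'
  obtain ⟨hMR, hNR⟩ := h.right.of_not_nonempty hR'
  have hdisj : [L, R, W, D₁ ∪ D₂, E'].Pairwise Disjoint := by
    have hDE := Set.disjoint_left.1 ((h.disjoint_of_isExtension hG (.inl hD₁) hE').union_left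
      (h.disjoint_of_isExtension hG (.inr hD₂) hE'))
    have hDsub := Set.union_subset hD₁.subset hD₂.subset
    have hDavoid := fun a ha => h.isComponent.2.1 a (hDsub ha)
    have hEavoid := fun a ha => h.isComponent'.2.1 a (hE'.subset ha)
    have hEsub := hE'.subset
    have hsub := fun a ha => @h.subset a ha
    have hsides := Set.disjoint_left.1 h.disjoint_sides
    have htop := Set.disjoint_left.1 h.disjoint_top
    simp only [Set.mem_union, Set.mem_inter_iff, not_or] at hsub htop hsides
    simp only [List.pairwise_cons, List.forall_mem_cons, List.not_mem_nil, false_imp_iff,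
      implies_true, List.Pairwise.nil, and_true, Set.disjoint_left]
    and_intros <;> intro a ha ha' <;> grind
  refine isMinor_completeGraph_five ?_ hdisj ?_
  · simp only [List.forall_mem_cons]
    exact ⟨h.left.isConnectedSet, h.right.isConnectedSet, h.isConnectedSet_top, hD₁₂,
      hE'.isConnectedSet, by simp⟩
  · simp only [List.pairwise_cons, List.forall_mem_cons, List.not_mem_nil, false_imp_iff,
      implies_true, List.Pairwise.nil, and_true]
    exact ⟨⟨h.touches_left_right, h.touches_left_top, hNL.symm.mono subset_rfl hN,
      hML.symm.mono subset_rfl hE'.inter_subset⟩, ⟨h.touches_right_top,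
      hNR.symm.mono subset_rfl hN, hMR.symm.mono subset_rfl hE'.inter_subset⟩,
      ⟨(hD₁.touches.mono Set.subset_union_left subset_rfl).symm, hE'.touches.symm⟩,
      hD₂.touches.mono Set.subset_union_right hE'.inter_subset⟩

theorem isMinor_or_isMinor (h : IsCrossing G X Y D E L L' R R' W) :
    IsMinor (completeBipartiteGraph (Fin 3) (Fin 3)) G ∨
      IsMinor (⊤ : SimpleGraph (Fin 5)) G := by
  refine or_iff_not_imp_left.2 fun hG => h.isMinor_of_not_nonempty ?_ ?_ hG
  · exact fun hL' => hG (h.isMinor_of_nonempty_left hL')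
  · exact fun hR' => hG (h.swap_sides.isMinor_of_nonempty_left hR')

end IsCrossing

end Crossing

/-! ### Tree paths leaving a set -/

namespace BFSTree

variable {V : Type*} {G : SimpleGraph V} {r : V} {T : BFSTree G r}

theorem adj_of_mem_path {a b v : V} (ha : a ∈ T.path v) (hb : b ∈ T.path v)
    (h : G.dist r b = G.dist r a + 1) : G.Adj a b := by
  have hbr : b ≠ r := ne_root_of_dist_pos G (by lia)
  have hpar := T.dist_parent b hbr
  rw [← T.injOn_path v (parent_mem_path hb) ha (by lia)]
  exact T.adj_parent b hbr

theorem path_subset_of_parent_mem {S : Set V} {v : V} (hv : v ∈ S)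
    (h : ∀ a ∈ T.path v, a ∈ S → T.parent a ∈ S) : T.path v ⊆ S := by
  rintro _ ⟨k, rfl⟩
  induction k with
  | zero => exact hv
  | succ k ih =>
    rw [Function.iterate_succ_apply']
    exact h _ ⟨k, rfl⟩ ih

/-- The level at which the path of `z` leaves the path of `x`; a junk value if it does not. -/
noncomputable def forkLevel (T : BFSTree G r) (x z : V) : ℕ :=
  sInf (G.dist r '' (T.path z \ T.path x))

section Fork

variable {a x z : V}

theorem exists_dist_eq_forkLevel (hz : z ∉ T.path x) :
    ∃ t ∈ T.path z, t ∉ T.path x ∧ G.dist r t = T.forkLevel x z := by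
  have hne : (T.path z \ T.path x).Nonempty := ⟨z, mem_path_self z, hz⟩
  obtain ⟨t, ⟨htz, htx⟩, ht⟩ := Nat.sInf_mem (hne.image (G.dist r))
  exact ⟨t, htz, htx, ht⟩

theorem mem_path_iff_dist_lt_forkLevel (hz : z ∉ T.path x) (ha : a ∈ T.path z) :
    a ∈ T.path x ↔ G.dist r a < T.forkLevel x z := by
  obtain ⟨t, htz, htx, ht⟩ := exists_dist_eq_forkLevel hz
  constructor
  · intro hax
    by_contra! hle
    exact htx (path_subset_of_mem hax (mem_path_of_dist_le htz ha (by lia)))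
  · intro hlt
    by_contra hax
    exact hlt.not_ge (Nat.sInf_le ⟨a, ⟨ha, hax⟩, rfl⟩)

theorem mem_path_iff_dist_lt_forkLevel' (hz : z ∉ T.path x) (ha : a ∈ T.path x) :
    a ∈ T.path z ↔ G.dist r a < T.forkLevel x z := by
  refine ⟨fun haz => (mem_path_iff_dist_lt_forkLevel hz haz).1 ha, fun hlt => ?_⟩
  obtain ⟨t, htz, -, ht⟩ := exists_dist_eq_forkLevel hz
  obtain ⟨b, hb, hba⟩ := T.exists_mem_path_dist_eq (v := t) (m := G.dist r a) (by lia)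
  have hbz := path_subset_of_mem htz hb
  have hbx := (mem_path_iff_dist_lt_forkLevel hz hbz).2 (hba ▸ hlt)
  rwa [← T.injOn_path x hbx ha hba]

theorem forkLevel_pos (hz : z ∉ T.path x) : 0 < T.forkLevel x z := by
  simpa using (mem_path_iff_dist_lt_forkLevel hz (root_mem_path z)).1 (root_mem_path x)

end Fork

/-- The path of `d` leaves `B` at `e`: above `e` it lies in `B`, and from `e` downwards it avoids
`B`. If `d` itself is outside `B`, then `e = d`. -/
structure IsExit (T : BFSTree G r) (B : Set V) (d e : V) : Prop where
  mem_path : e ∈ T.path d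
  mem_iff : ∀ a ∈ T.path d, a ∈ B ↔ G.dist r e < G.dist r a

/-- The tree paths of the adjacent vertices `b` and `b'` leave `B` at `e` and `e'`. -/
structure IsChord (T : BFSTree G r) (B : Set V) (b b' e e' : V) : Prop where
  adj : G.Adj b b'
  exit : T.IsExit B b e
  exit' : T.IsExit B b' e'

variable {B : Set V}

namespace IsExit

variable {d e a : V}

theorem notMem (h : T.IsExit B d e) : e ∉ B := fun he =>
  lt_irrefl _ ((h.mem_iff e h.mem_path).1 he)

theorem eq_of_notMem (h : T.IsExit B d e) (hd : d ∉ B) : e = d :=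
  eq_of_mem_path_of_le h.mem_path (not_lt.1 (mt (h.mem_iff d (mem_path_self d)).2 hd))

theorem mem_path_of_mem (h : T.IsExit B d e) (ha : a ∈ T.path d) (haB : a ∈ B) : e ∈ T.path a :=
  mem_path_of_dist_le h.mem_path ha ((h.mem_iff a ha).1 haB).le

theorem mem_path_of_notMem (h : T.IsExit B d e) (ha : a ∈ T.path d) (haB : a ∉ B) :
    a ∈ T.path e :=
  mem_path_of_dist_le ha h.mem_path (not_lt.1 (mt (h.mem_iff a ha).2 haB))

theorem mem_of_mem (h : T.IsExit B d e) (ha : a ∈ T.path d) (haB : a ∈ B) : d ∈ B :=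
  (h.mem_iff d (mem_path_self d)).2
    (((h.mem_iff a ha).1 haB).trans_le (dist_le_of_mem_path ha))

theorem exists_adj (h : T.IsExit B d e) (ha : a ∈ T.path d) (haB : a ∈ B) :
    ∃ c ∈ T.path a, c ∈ B ∧ G.Adj c e := by
  have hlt := (h.mem_iff a ha).1 haB
  obtain ⟨c, hc, hce⟩ := T.exists_mem_path_dist_eq (v := a) (m := G.dist r e + 1) hlt
  have hcd := path_subset_of_mem ha hc
  exact ⟨c, hc, (h.mem_iff c hcd).2 (by lia), (adj_of_mem_path h.mem_path hcd hce).symm⟩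

theorem self (hd : ∀ a ∈ T.path d, a ∉ B) : T.IsExit B d d :=
  ⟨mem_path_self d, fun a ha => iff_of_false (hd a ha) (dist_le_of_mem_path ha).not_gt⟩

theorem eq_of_mem {d' e' : V} (h : T.IsExit B d e) (h' : T.IsExit B d' e') (ha : a ∈ T.path d)
    (ha' : a ∈ T.path d') (haB : a ∈ B) : e = e' := by
  have hea := h.mem_path_of_mem ha haB
  have hea' := h'.mem_path_of_mem ha' haB
  by_contra! hne
  rcases lt_or_gt_of_ne (mt (T.injOn_path a hea hea') hne) with hlt | hlt
  · exact h'.notMem ((h.mem_iff e' (path_subset_of_mem ha hea')).2 hlt)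
  · exact h.notMem ((h'.mem_iff e (path_subset_of_mem ha' hea)).2 hlt)

theorem isConnectedSet_sdiff (h : T.IsExit B d e) {F : Set V} (hF : ∀ a ∈ F, T.path a ⊆ F)
    (hne : ((B ∩ T.path d) \ F).Nonempty) : IsConnectedSet G ((B ∩ T.path d) \ F) := by
  refine T.isConnectedSet_of_interval (v := d) hne (fun a ha => ha.1.2) ?_
  rintro a ⟨⟨haB, had⟩, haF⟩ - - c hc hac -
  have hlt := (h.mem_iff a had).1 haB
  exact ⟨⟨(h.mem_iff c hc).2 (hlt.trans_le hac), hc⟩,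
    fun hcF => haF (hF c hcF (mem_path_of_dist_le had hc hac))⟩

theorem isConnectedSet_inter (h : T.IsExit B d e) (b : V)
    (hne : (B ∩ (T.path b ∩ T.path d)).Nonempty) :
    IsConnectedSet G (B ∩ (T.path b ∩ T.path d)) := by
  refine T.isConnectedSet_of_interval (v := d) hne (fun a ha => ha.2.2) ?_
  rintro a ⟨haB, -, had⟩ a' ⟨-, hab', had'⟩ c hc hac hca'
  exact ⟨(h.mem_iff c hc).2 (((h.mem_iff a had).1 haB).trans_le hac),
    path_subset_of_mem hab' (mem_path_of_dist_le hc had' hca'), hc⟩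

theorem touches_inter (h : T.IsExit B d e) {b : V}
    (hne : (B ∩ (T.path b ∩ T.path d)).Nonempty) :
    Touches G {e} (B ∩ (T.path b ∩ T.path d)) := by
  obtain ⟨a, haB, hab, had⟩ := hne
  obtain ⟨c, hca, hcB, hadj⟩ := h.exists_adj had haB
  exact ⟨e, rfl, c, ⟨hcB, path_subset_of_mem hab hca, path_subset_of_mem had hca⟩, hadj.symm⟩

end IsExit

theorem exists_isExit {d : V} (hr : r ∉ B)
    (hB : ∀ q ∈ outerBoundary G B, ∀ a ∈ T.path q, a ∉ B) (hd : d ∈ B) :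
    ∃ e ∈ outerBoundary G B, T.IsExit B d e := by
  classical
  have hexit : ∃ k, T.parent^[k] d ∉ B := by
    obtain ⟨k, hk⟩ := root_mem_path (T := T) d
    exact ⟨k, fun hB => hr (hk ▸ hB)⟩
  obtain ⟨k, hk⟩ : ∃ k, Nat.find hexit = k + 1 :=
    Nat.exists_eq_succ_of_ne_zero fun h0 => (Nat.find_eq_zero hexit).1 h0 hd
  have hkB : T.parent^[k] d ∈ B := not_not.1 (Nat.find_min hexit (by lia))
  have hkr : T.parent^[k] d ≠ r := fun h => hr (h ▸ hkB)
  have hnotMem : T.parent^[k + 1] d ∉ B := hk ▸ Nat.find_spec hexit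
  have hbd : T.parent^[k + 1] d ∈ outerBoundary G B := by
    refine ⟨hnotMem, _, hkB, ?_⟩
    rw [Function.iterate_succ_apply']
    exact (T.adj_parent _ hkr).symm
  have hmem : T.parent^[k + 1] d ∈ T.path d := ⟨k + 1, rfl⟩
  refine ⟨_, hbd, hmem, fun a ha => ⟨fun haB => ?_, fun hlt => ?_⟩⟩
  · by_contra! hle
    exact hB _ hbd a (mem_path_of_dist_le ha hmem hle) haB
  · obtain ⟨j, rfl⟩ := ha
    rw [dist_iterate_parent, dist_iterate_parent] at hlt
    exact not_not.1 (Nat.find_min hexit (m := j) (by lia))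

namespace IsChord

variable {b b' e e' : V}

theorem symm (h : T.IsChord B b b' e e') : T.IsChord B b' b e' e :=
  ⟨h.adj.symm, h.exit', h.exit⟩

variable {F : Set V}

theorem isConnectedSet_sdiff (h : T.IsChord B b b' e e') (hF : ∀ a ∈ F, T.path a ⊆ F)
    (hne : ((B ∩ T.fence b b') \ F).Nonempty) :
    IsConnectedSet G ((B ∩ T.fence b b') \ F) := by
  have hself {d f : V} (hd : T.IsExit B d f) (hne : ((B ∩ T.path d) \ F).Nonempty) :
      d ∈ (B ∩ T.path d) \ F := by
    obtain ⟨a, ⟨haB, had⟩, haF⟩ := hne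
    exact ⟨⟨hd.mem_of_mem had haB, mem_path_self d⟩, fun hdF => haF (hF d hdF had)⟩
  rw [Set.inter_union_distrib_left, Set.union_sdiff_distrib] at hne ⊢
  obtain hempty | hleft := ((B ∩ T.path b) \ F).eq_empty_or_nonempty
  · rw [hempty, Set.empty_union] at hne ⊢
    exact h.exit'.isConnectedSet_sdiff hF hne
  · exact (h.exit.isConnectedSet_sdiff hF hleft).union_of_nonempty fun hright =>
      ⟨h.exit'.isConnectedSet_sdiff hF hright,
        b, hself h.exit hleft, b', hself h.exit' hright, h.adj⟩

theorem mem_sdiff_of_not_nonempty (h : T.IsChord B b b' e e') (hF : ∀ a ∈ F, T.path a ⊆ F)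
    (hne : ((B ∩ T.fence b b') \ F).Nonempty) (hempty : ¬ ((B ∩ T.path b) \ F).Nonempty) :
    b' ∈ (B ∩ T.fence b b') \ F := by
  obtain ⟨a, ⟨haB, hab⟩, haF⟩ := hne
  have hab' : a ∈ T.path b' := hab.resolve_left fun hab => hempty ⟨a, ⟨haB, hab⟩, haF⟩
  exact ⟨⟨h.exit'.mem_of_mem hab' haB, .inr (mem_path_self b')⟩, fun hF' => haF (hF b' hF' hab')⟩

theorem touches_inter (h : T.IsChord B b b' e e') (hF : ∀ a ∈ F, T.path a ⊆ F)
    (hne : ((B ∩ T.fence b b') \ F).Nonempty) (hb : (B ∩ T.path b ∩ F).Nonempty) :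
    Touches G ((B ∩ T.fence b b') \ F) (B ∩ T.path b ∩ F) := by
  obtain ⟨a, ⟨haB, hab⟩, haF⟩ := hb
  by_cases hleft : ((B ∩ T.path b) \ F).Nonempty
  · obtain ⟨p, hp, hpF⟩ := hleft
    by_contra hno
    have hsub : (B ∩ T.path b) \ ∅ ⊆ F := by
      refine (h.exit.isConnectedSet_sdiff (by simp) ⟨a, ⟨haB, hab⟩, by simp⟩).subset_of_closed
        ⟨a, haF, ⟨haB, hab⟩, by simp⟩ fun c hc c' hc' hadj => ?_
      by_contra hcF
      exact hno ⟨c', ⟨⟨hc'.1.1, .inl hc'.1.2⟩, hcF⟩, c, ⟨hc.2.1, hc.1⟩, hadj.symm⟩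
    exact hpF (hsub ⟨hp, by simp⟩)
  · have hbB := h.exit.mem_of_mem hab haB
    have hbF : b ∈ F := by
      by_contra hbF
      exact hleft ⟨b, ⟨hbB, mem_path_self b⟩, hbF⟩
    exact ⟨b', h.mem_sdiff_of_not_nonempty hF hne hleft, b, ⟨⟨hbB, mem_path_self b⟩, hbF⟩,
      h.adj.symm⟩

theorem touches_exit (h : T.IsChord B b b' e e') (hF : ∀ a ∈ F, T.path a ⊆ F)
    (hne : ((B ∩ T.fence b b') \ F).Nonempty) (hb : ¬ (B ∩ T.path b ∩ F).Nonempty) :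
    Touches G ((B ∩ T.fence b b') \ F) {e} := by
  by_cases hleft : ((B ∩ T.path b) \ F).Nonempty
  · obtain ⟨a, ⟨haB, hab⟩, -⟩ := hleft
    obtain ⟨c, hca, hcB, hadj⟩ := h.exit.exists_adj hab haB
    have hcb := path_subset_of_mem hab hca
    exact ⟨c, ⟨⟨hcB, .inl hcb⟩, fun hcF => hb ⟨c, ⟨hcB, hcb⟩, hcF⟩⟩, e, rfl, hadj⟩
  · have hbB : b ∉ B := fun hbB => by
      by_cases hbF : b ∈ F
      · exact hb ⟨b, ⟨hbB, mem_path_self b⟩, hbF⟩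
      · exact hleft ⟨b, ⟨hbB, mem_path_self b⟩, hbF⟩
    exact ⟨b', h.mem_sdiff_of_not_nonempty hF hne hleft, e, rfl,
      h.exit.eq_of_notMem hbB ▸ h.adj.symm⟩

end IsChord

end BFSTree

/-! ### Pockets and gates -/

namespace BFSTree

variable {V : Type*} {G : SimpleGraph V} {r x z s : V} {T : BFSTree G r} {Z B : Set V}

/-- A component `B` off the fence of `x` and `z` is a pocket if the fence can be closed outside `B`
in such a way that `B` does not see anything below `s`: the paths of `x` and `z` share `s`, the
boundary of `B` lies above `s`, and `x` and `z` are joined by an edge or by a connected set `Z`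
that avoids `B` and the part of the fence above `s`. -/
structure IsPocket (T : BFSTree G r) (x z s : V) (Z B : Set V) : Prop where
  left_ne_root : x ≠ r
  right_ne_root : z ≠ r
  isComponent : IsComponent G (T.fence x z) B
  mem_path_left : s ∈ T.path x
  mem_path_right : s ∈ T.path z
  dist_le : ∀ q ∈ outerBoundary G B, G.dist r s ≤ G.dist r q
  notMem_of_mem : ∀ a ∈ Z, a ∉ B
  dist_lt : ∀ a ∈ Z, a ∈ T.fence x z → G.dist r a < G.dist r s
  joined : (Z = ∅ ∧ (x = z ∨ G.Adj x z)) ∨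
    (IsConnectedSet G Z ∧ Touches G Z {x} ∧ Touches G Z {z})

/-- A critical pocket of minimal size. -/
structure IsMinimalPocket (T : BFSTree G r) (x z s : V) (Z B : Set V) : Prop
    extends T.IsPocket x z s Z B where
  isCritical : T.IsCritical x z B
  ncard_le : ∀ x' z' s' Z' B', T.IsPocket x' z' s' Z' B' → T.IsCritical x' z' B' →
    B.ncard ≤ B'.ncard

theorem IsCheap.ncard_le {Q : Set V} (h : T.IsCheap x z Q) : Q.ncard ≤ 2 * snTwo G r := by
  rcases h with h | ⟨h, -⟩ <;> lia

namespace IsPocket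

theorem of_joined (hx : x ≠ r) (hz : z ≠ r) (hB : IsComponent G (T.fence x z) B)
    (hxz : x = z ∨ G.Adj x z) : T.IsPocket x z r ∅ B where
  left_ne_root := hx
  right_ne_root := hz
  isComponent := hB
  mem_path_left := root_mem_path x
  mem_path_right := root_mem_path z
  dist_le := by simp
  notMem_of_mem := by simp
  dist_lt := by simp
  joined := .inl ⟨rfl, hxz⟩

theorem root_notMem (h : T.IsPocket x z s Z B) : r ∉ B :=
  T.root_notMem_of_isComponent h.isComponent

theorem notMem_path_left (h : T.IsPocket x z s Z B) {a : V} (ha : a ∈ B) : a ∉ T.path x :=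
  fun hax => h.isComponent.2.1 a ha (.inl hax)

theorem notMem_path_right (h : T.IsPocket x z s Z B) {a : V} (ha : a ∈ B) : a ∉ T.path z :=
  fun haz => h.isComponent.2.1 a ha (.inr haz)

theorem mem_fence (h : T.IsPocket x z s Z B) {q : V} (hq : q ∈ outerBoundary G B) :
    q ∈ T.fence x z :=
  h.isComponent.outerBoundary_subset hq

theorem exists_isExit (h : T.IsPocket x z s Z B) {d : V} (hd : d ∈ B) :
    ∃ e ∈ outerBoundary G B, T.IsExit B d e := by
  refine BFSTree.exists_isExit h.root_notMem (fun q hq a ha haB => ?_) hd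
  rcases h.mem_fence hq with hq | hq
  · exact h.notMem_path_left haB (path_subset_of_mem hq ha)
  · exact h.notMem_path_right haB (path_subset_of_mem hq ha)

end IsPocket

/-- The vertices whose tree path leaves the path of `z` no later than the path of `x` does. -/
def leftSide (T : BFSTree G r) (x z : V) : Set V :=
  {d | T.path d ∩ T.path z ⊆ T.path x}

/-- A gate is an edge with an end in the pocket, closing up together with the fence: the tree path
of its left end leaves `B` on the path of `x` and that of its right end on the path of `z`, above
the fork. -/
structure IsGate (T : BFSTree G r) (x z s : V) (B : Set V) (b b' e e' : V) : Prop
    extends T.IsChord B b b' e e' where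
  mem_or_mem : b ∈ B ∨ b' ∈ B
  exit_mem_path : e ∈ T.path x
  dist_le_exit : G.dist r s ≤ G.dist r e
  exit_mem_path' : e' ∈ T.path z
  exit_notMem_path' : e' ∉ T.path x

end BFSTree

namespace Setting

open BFSTree

variable {V : Type*} {G : SimpleGraph V} {r x z s : V} {T : Setting G r} {Z B : Set V}

theorem exists_isMinimalPocket [Finite V] (T : Setting G r) :
    Nat.card V ≤ 6 * snTwo G r + 1 ∨ ∃ x z s Z B, T.IsMinimalPocket x z s Z B := by
  classical
  obtain ⟨v, hv, -⟩ := T.exists_dist_eq_one_notMem (l := []) (by simp)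
  have hvr : v ≠ r := ne_root_of_dist_pos G (by lia)
  refine (T.exists_isCritical hvr).imp_right fun ⟨B, hB, hcrit⟩ => ?_
  have hex : ∃ m, ∃ x z s Z B, T.IsPocket x z s Z B ∧ T.IsCritical x z B ∧ B.ncard = m :=
    ⟨_, v, v, r, ∅, B, .of_joined hvr hvr hB (.inl rfl), hcrit, rfl⟩
  obtain ⟨x, z, s, Z, B, hpocket, hcrit, hcard⟩ := Nat.find_spec hex
  exact ⟨x, z, s, Z, B, hpocket, hcrit, fun x' z' s' Z' B' h h' =>
    hcard ▸ Nat.find_min' hex ⟨x', z', s', Z', B', h, h', rfl⟩⟩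

theorem card_le_of_isCheap [Finite V] (h : T.IsMinimalPocket x z s Z B) {p q : V}
    (hB : T.IsCheap p q B) : Nat.card V ≤ 6 * snTwo G r + 1 := by
  rcases isCheap_compl_of_isCritical h.left_ne_root h.right_ne_root h.isComponent h.isCritical with
    hcard | hcompl
  · exact hcard
  have hcard := card_le_ncard_add_one (Q := {w | w ≠ r ∧ w ∉ B} ∪ B) (r := r) fun w hw => by
    by_cases hwB : w ∈ B
    exacts [.inr hwB, .inl ⟨hw, hwB⟩]
  have hunion := Set.ncard_union_le {w | w ≠ r ∧ w ∉ B} B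
  have hle := hB.ncard_le
  have hle' := hcompl.ncard_le
  lia

theorem card_le_of_outerBoundary_subset_path [Finite V] (h : T.IsMinimalPocket x z s Z B) {y : V}
    (hy : outerBoundary G B ⊆ T.path y) : Nat.card V ≤ 6 * snTwo G r + 1 := by
  obtain ⟨d, hd⟩ := h.isComponent.1.nonempty
  obtain ⟨e, he, -⟩ := h.exists_isExit hd
  obtain ⟨q, hq, hmax⟩ := Set.exists_max_image (outerBoundary G B) (G.dist r) (Set.toFinite _)
    ⟨e, he⟩
  obtain ⟨-, c, hc, hcq⟩ := id hq
  have hcr : c ≠ r := ne_of_mem_of_not_mem hc h.root_notMem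
  obtain ⟨p, hpr, hqp, hpc⟩ : ∃ p, p ≠ r ∧ T.path q ⊆ T.path p ∧ (p = c ∨ G.Adj p c) := by
    obtain rfl | hqr := eq_or_ne q r
    · exact ⟨c, hcr, path_subset_of_mem (root_mem_path c), .inl rfl⟩
    · exact ⟨q, hqr, subset_rfl, .inr hcq.symm⟩
  have hsub {K : Set V} (hK : IsComponent G (T.fence p c) K) (hKB : (K ∩ B).Nonempty) :
      K ⊆ B := by
    refine hK.1.subset_of_closed (Set.inter_comm K B ▸ hKB) fun a ha b hb hab => ?_
    by_contra hbB
    have hbd : b ∈ outerBoundary G B := ⟨hbB, a, ha.1, hab⟩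
    exact hK.2.1 b hb (.inl (hqp (mem_path_of_dist_le (hy hbd) (hy hq) (hmax b hbd))))
  refine (isCheap_of_forall_not_isCritical hpr hcr h.root_notMem (fun K hK => hsub hK)
    fun K hK hKB hcrit => ?_).elim id (card_le_of_isCheap h)
  refine (h.ncard_le _ _ _ _ _ (.of_joined hpr hcr hK hpc) hcrit).not_gt ?_
  exact Set.ncard_lt_ncard ⟨hsub hK hKB, fun hBK =>
    hK.2.1 c (hBK hc) (.inr (mem_path_self c))⟩ (Set.toFinite _)

end Setting

namespace BFSTree

variable {V : Type*} {G : SimpleGraph V} {r x z s : V} {T : BFSTree G r} {Z B : Set V}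

theorem exists_adj_leftSide {D : Set V} {y y' : V} (hD : IsConnectedSet G D)
    (hy : y ∈ T.leftSide x z) (hy' : y' ∉ T.leftSide x z) (hyD : Touches G {y} D)
    (hyD' : Touches G {y'} D) :
    ∃ d d', G.Adj d d' ∧ d ∈ T.leftSide x z ∧ d' ∉ T.leftSide x z ∧ (d ∈ D ∨ d = y) ∧
      (d' ∈ D ∨ d' = y') ∧ (d ∈ D ∨ d' ∈ D) := by
  obtain ⟨_, rfl, p, hp, hyp⟩ := hyD
  obtain ⟨_, rfl, p', hp', hyp'⟩ := hyD'
  by_cases hpL : p ∈ T.leftSide x z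
  · by_cases hpL' : p' ∈ T.leftSide x z
    · exact ⟨p', _, hyp'.symm, hpL', hy', .inl hp', .inr rfl, .inl hp'⟩
    · by_contra hno
      refine hpL' (hD.subset_of_closed ⟨p, hpL, hp⟩ (fun a ha b hb hab => ?_) hp')
      by_contra hbL
      exact hno ⟨a, b, hab, ha.1, hbL, .inl ha.2, .inl hb, .inl ha.2⟩
  · exact ⟨_, p, hyp, hy, hpL, .inr rfl, .inl hp, .inr hp⟩

namespace IsPocket

theorem exists_isExit_path_left (h : T.IsPocket x z s Z B) {d : V} (hd : d ∈ T.leftSide x z)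
    (hdB : d ∈ B ∨ d ∈ T.path x ∧ ∃ a ∈ B, G.Adj a d) :
    ∃ e ∈ T.path x, T.IsExit B d e ∧ G.dist r s ≤ G.dist r e := by
  by_cases hdB' : d ∈ B
  · obtain ⟨e, he, hexit⟩ := h.exists_isExit hdB'
    exact ⟨e, (h.mem_fence he).elim id fun hez => hd ⟨hexit.mem_path, hez⟩, hexit, h.dist_le e he⟩
  · obtain ⟨hdx, a, ha, had⟩ := hdB.resolve_left hdB'
    exact ⟨d, hdx, .self fun b hb hbB => h.notMem_path_left hbB (path_subset_of_mem hdx hb),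
      h.dist_le d ⟨hdB', a, ha, had⟩⟩

theorem exists_isExit_path_right (h : T.IsPocket x z s Z B) {d : V} (hd : d ∉ T.leftSide x z)
    (hdB : d ∈ B ∨ d ∈ T.path z ∧ d ∉ T.path x) :
    ∃ e ∈ T.path z, e ∉ T.path x ∧ T.IsExit B d e := by
  by_cases hdB' : d ∈ B
  · obtain ⟨e, he, hexit⟩ := h.exists_isExit hdB'
    have hex : e ∉ T.path x := fun hex => hd fun a ⟨had, haz⟩ =>
      path_subset_of_mem hex (hexit.mem_path_of_notMem had fun haB => h.notMem_path_right haB haz)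
    exact ⟨e, (h.mem_fence he).resolve_left hex, hex, hexit⟩
  · obtain ⟨hdz, hdx⟩ := hdB.resolve_left hdB'
    exact ⟨d, hdz, hdx,
      .self fun b hb hbB => h.notMem_path_right hbB (path_subset_of_mem hdz hb)⟩

theorem exists_isGate (h : T.IsPocket x z s Z B) {D : Set V} (hD : IsConnectedSet G D)
    (hDB : D ⊆ B) {y y' : V} (hyB : y ∈ B ∨ y ∈ T.path x)
    (hyB' : y' ∈ B ∨ y' ∈ T.path z ∧ y' ∉ T.path x) (hy : y ∈ T.leftSide x z)
    (hy' : y' ∉ T.leftSide x z) (hyD : Touches G {y} D) (hyD' : Touches G {y'} D) :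
    ∃ d d' e e', T.IsGate x z s B d d' e e' ∧ d ∈ T.leftSide x z ∧ d' ∉ T.leftSide x z ∧
      (d ∈ D ∨ d = y) ∧ (d' ∈ D ∨ d' = y') ∧ (d ∈ D ∨ d' ∈ D) := by
  obtain ⟨d, d', hadj, hd, hd', hdD, hdD', hone⟩ := exists_adj_leftSide hD hy hy' hyD hyD'
  have hdB : d ∈ B ∨ d ∈ T.path x := hdD.elim (fun hd => .inl (hDB hd)) (fun hd => hd ▸ hyB)
  have hdB' : d' ∈ B ∨ d' ∈ T.path z ∧ d' ∉ T.path x :=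
    hdD'.elim (fun hd => .inl (hDB hd)) (fun hd => hd ▸ hyB')
  have honeB : d ∈ B ∨ d' ∈ B := hone.imp (@hDB d) (@hDB d')
  obtain ⟨e, hex, hexit, hse⟩ := h.exists_isExit_path_left hd <| or_iff_not_imp_left.2 fun hdB₀ =>
    ⟨hdB.resolve_left hdB₀, d', honeB.resolve_left hdB₀, hadj.symm⟩
  obtain ⟨e', hez', hex', hexit'⟩ := h.exists_isExit_path_right hd' hdB'
  exact ⟨d, d', e, e', ⟨⟨hadj, hexit, hexit'⟩, honeB, hex, hse, hez', hex'⟩, hd, hd', hdD, hdD',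
    hone⟩

end IsPocket

end BFSTree

namespace Setting

open BFSTree

theorem exists_isGate {V : Type*} [Finite V] {G : SimpleGraph V} {r x z s : V}
    {T : Setting G r} {Z B : Set V} (h : T.IsMinimalPocket x z s Z B) :
    Nat.card V ≤ 6 * snTwo G r + 1 ∨ ∃ b b' e e', T.IsGate x z s B b b' e e' := by
  refine or_iff_not_imp_left.2 fun hbig => ?_
  have hnot (v : V) : ∃ q ∈ outerBoundary G B, q ∉ T.path v :=
    Set.not_subset.1 (mt (card_le_of_outerBoundary_subset_path h) hbig)
  obtain ⟨y, hy, hyz⟩ := hnot z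
  obtain ⟨y', hy', hyx'⟩ := hnot x
  have hyx := (h.mem_fence hy).resolve_right hyz
  have hyz' := (h.mem_fence hy').resolve_left hyx'
  obtain ⟨b, b', e, e', hgate, -⟩ := h.exists_isGate h.isComponent.1 subset_rfl (.inr hyx)
    (.inr ⟨hyz', hyx'⟩) (fun a ha => path_subset_of_mem hyx ha.1)
    (fun hL => hyx' (hL ⟨mem_path_self y', hyz'⟩)) (touches_of_mem_outerBoundary hy)
    (touches_of_mem_outerBoundary hy')
  exact ⟨b, b', e, e', hgate⟩

end Setting

/-! ### The roof of a gate -/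

section Tail

variable {V : Type*} {G : SimpleGraph V} {x z p q : V} {L R Z : Set V}

/-- `L` is a connected set containing `x` and a neighbour of `p`, where `L` may be empty if
`x = p`. -/
def IsTail (G : SimpleGraph V) (L : Set V) (x p : V) : Prop :=
  (L = ∅ ∧ x = p) ∨ (IsConnectedSet G L ∧ x ∈ L ∧ Touches G L {p})

theorem IsTail.union {Y : Set V} (h : IsTail G L x p) (hY : IsConnectedSet G Y)
    (hx : Touches G Y {x}) : IsConnectedSet G (L ∪ Y) ∧ Touches G (L ∪ Y) {p} := by
  obtain ⟨rfl, rfl⟩ | ⟨hL, hxL, hp⟩ := h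
  · rw [Set.empty_union]
    exact ⟨hY, hx⟩
  · exact ⟨hL.union hY (hx.mono subset_rfl (Set.singleton_subset_iff.2 hxL)).symm,
      hp.mono Set.subset_union_left subset_rfl⟩

theorem IsTail.union_of_adj (hL : IsTail G L x p) (hR : IsTail G R z q) (hxz : G.Adj x z)
    (hne : (L ∪ R).Nonempty) :
    IsConnectedSet G (L ∪ R) ∧ Touches G (L ∪ R) {p} ∧ Touches G (L ∪ R) {q} := by
  obtain ⟨rfl, rfl⟩ | ⟨hLconn, hxL, hp⟩ := id hL
  · obtain ⟨rfl, -⟩ | ⟨hRconn, hzR, hq⟩ := hR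
    · simp at hne
    · rw [Set.empty_union]
      exact ⟨hRconn, ⟨z, hzR, _, rfl, hxz.symm⟩, hq⟩
  · rw [Set.union_comm]
    have h := hR.union hLconn ⟨x, hxL, _, rfl, hxz⟩
    exact ⟨h.1, hp.mono Set.subset_union_right subset_rfl, h.2⟩

theorem IsTail.union_union (hL : IsTail G L x p) (hR : IsTail G R z q) (hZ : IsConnectedSet G Z)
    (hx : Touches G Z {x}) (hz : Touches G Z {z}) :
    IsConnectedSet G (L ∪ R ∪ Z) ∧ Touches G (L ∪ R ∪ Z) {p} ∧ Touches G (L ∪ R ∪ Z) {q} := by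
  have hLZ := hL.union hZ hx
  have h := hR.union hLZ.1 (hz.mono Set.subset_union_right subset_rfl)
  rw [Set.union_comm L R, Set.union_assoc]
  exact ⟨h.1, hLZ.2.mono Set.subset_union_right subset_rfl, h.2⟩

end Tail

namespace BFSTree

variable {V : Type*} {G : SimpleGraph V} {r x z s a b b' e e' : V} {T : BFSTree G r} {Z B : Set V}

theorem isTail_segment {v p : V} (hp : p ∈ T.path v) :
    IsTail G (T.segment v (Set.Ioi (G.dist r p))) v p := by
  obtain hle | hlt := le_or_gt (G.dist r v) (G.dist r p)
  · refine .inl ⟨Set.eq_empty_of_forall_notMem fun a ha => ?_, (eq_of_mem_path_of_le hp hle).symm⟩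
    exact (hle.trans_lt ha.2).not_ge (dist_le_of_mem_path ha.1)
  · have hv : v ∈ T.segment v (Set.Ioi (G.dist r p)) := ⟨mem_path_self v, hlt⟩
    obtain ⟨c, hc, hcp⟩ := T.exists_mem_path_dist_eq (v := v) (m := G.dist r p + 1) hlt
    exact .inr ⟨isConnectedSet_segment Set.ordConnected_Ioi ⟨v, hv⟩, hv, c,
      ⟨hc, hcp.ge⟩, p, rfl, (adj_of_mem_path hp hc hcp).symm⟩

/-- The left foot of a gate ends at this level of the path of `x`: at the exit `e`, or just below
the fork if that is higher. -/
noncomputable def leftLevel (T : BFSTree G r) (x z e : V) : ℕ :=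
  max (G.dist r e) (T.forkLevel x z - 1)

/-- The part of the path of `x` that supports a gate with left exit `e`. -/
def leftFoot (T : BFSTree G r) (x z s e : V) : Set V :=
  T.segment x (Set.Icc (G.dist r s) (T.leftLevel x z e))

/-- The part of the path of `z` that supports a gate with right exit `e'`. -/
def rightFoot (T : BFSTree G r) (x z e' : V) : Set V :=
  T.segment z (Set.Icc (T.forkLevel x z) (G.dist r e'))

/-- The part of the fence of `x` and `z` above the two feet of a gate. -/
def roof (T : BFSTree G r) (x z e e' : V) : Set V :=
  T.segment x (Set.Ioi (T.leftLevel x z e)) ∪ T.segment z (Set.Ioi (G.dist r e'))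

/-- `D` is a component that the fences of `x` and `z` and of `b` and `b'` cut out of `B`, and that
touches the roof of the gate. -/
structure IsAttic (T : BFSTree G r) (x z : V) (B : Set V) (b b' e e' : V) (D : Set V) : Prop where
  isComponent : IsComponent G (T.fence x z ∪ T.fence b b') D
  subset : D ⊆ B
  touches_roof : Touches G D (T.roof x z e e')

namespace IsGate

theorem right_notMem_path (g : T.IsGate x z s B b b' e e') : z ∉ T.path x := fun hz =>
  g.exit_notMem_path' (path_subset_of_mem hz g.exit_mem_path')

theorem mem_path_left_iff (g : T.IsGate x z s B b b' e e') (ha : a ∈ T.path z) :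
    a ∈ T.path x ↔ G.dist r a < T.forkLevel x z :=
  mem_path_iff_dist_lt_forkLevel g.right_notMem_path ha

theorem mem_path_right_iff (g : T.IsGate x z s B b b' e e') (ha : a ∈ T.path x) :
    a ∈ T.path z ↔ G.dist r a < T.forkLevel x z :=
  mem_path_iff_dist_lt_forkLevel' g.right_notMem_path ha

theorem forkLevel_le_dist (g : T.IsGate x z s B b b' e e') : T.forkLevel x z ≤ G.dist r e' :=
  not_lt.1 (mt (g.mem_path_left_iff g.exit_mem_path').2 g.exit_notMem_path')

theorem dist_lt_forkLevel (g : T.IsGate x z s B b b' e e') (h : T.IsPocket x z s Z B) :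
    G.dist r s < T.forkLevel x z :=
  (g.mem_path_left_iff h.mem_path_right).1 h.mem_path_left

theorem exists_mem_path_fork (g : T.IsGate x z s B b b' e e') :
    ∃ u ∈ T.path z, u ∈ T.path x ∧ G.dist r u = T.forkLevel x z - 1 := by
  have hpos := forkLevel_pos g.right_notMem_path
  have hle := g.forkLevel_le_dist
  obtain ⟨u, hu, hud⟩ := T.exists_mem_path_dist_eq (v := e') (m := T.forkLevel x z - 1) (by lia)
  have huz := path_subset_of_mem g.exit_mem_path' hu
  exact ⟨u, huz, (g.mem_path_left_iff huz).2 (by lia), hud⟩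

theorem exists_mem_path_leftLevel (g : T.IsGate x z s B b b' e e') :
    ∃ p ∈ T.path x, G.dist r p = T.leftLevel x z e := by
  obtain ⟨u, -, hux, hu⟩ := g.exists_mem_path_fork
  rcases max_choice (G.dist r e) (T.forkLevel x z - 1) with h | h
  exacts [⟨e, g.exit_mem_path, h.symm⟩, ⟨u, hux, hu.trans h.symm⟩]

theorem isConnectedSet_inter_fence (g : T.IsGate x z s B b b' e e') :
    IsConnectedSet G (B ∩ T.fence b b') := by
  have hne : ((B ∩ T.fence b b') \ ∅).Nonempty := by
    rw [Set.sdiff_empty]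
    exact g.mem_or_mem.elim (fun hb => ⟨b, hb, .inl (mem_path_self b)⟩)
      fun hb => ⟨b', hb, .inr (mem_path_self b')⟩
  simpa using g.toIsChord.isConnectedSet_sdiff (by simp) hne

theorem touches_exit (g : T.IsGate x z s B b b' e e') : Touches G (B ∩ T.fence b b') {e} := by
  have hne : ((B ∩ T.fence b b') \ ∅).Nonempty := by
    simpa using g.isConnectedSet_inter_fence.nonempty
  simpa using g.toIsChord.touches_exit (F := ∅) (by simp) hne (by simp)

theorem touches_exit' (g : T.IsGate x z s B b b' e e') : Touches G (B ∩ T.fence b b') {e'} := by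
  have hne : ((B ∩ T.fence b' b) \ ∅).Nonempty := by
    rw [T.fence_comm]
    simpa using g.isConnectedSet_inter_fence.nonempty
  rw [T.fence_comm]
  simpa using g.toIsChord.symm.touches_exit (F := ∅) (by simp) hne (by simp)

theorem touches_inter_fence (g : T.IsGate x z s B b b' e e') (h : T.IsPocket x z s Z B)
    {D : Set V}
    (hD : IsComponent G (T.fence x z ∪ T.fence b b') D) (hDB : D ⊆ B) :
    Touches G D (B ∩ T.fence b b') := by
  obtain ⟨w, hwB, hw⟩ := g.isConnectedSet_inter_fence.nonempty
  obtain ⟨d, hd⟩ := hD.1.nonempty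
  by_contra hnot
  refine hD.2.1 w (h.isComponent.1.subset_of_closed ⟨d, hd, hDB hd⟩ (fun a ha c hc hac => ?_) hwB)
    (.inr hw)
  refine hD.2.2 a ha.1 c hac fun hcX => ?_
  rcases hcX with hcX | hcX
  exacts [h.isComponent.2.1 c hc hcX, hnot ⟨a, ha.1, c, ⟨hc, hcX⟩, hac⟩]

theorem exit_mem_leftFoot (g : T.IsGate x z s B b b' e e') : e ∈ T.leftFoot x z s e :=
  ⟨g.exit_mem_path, g.dist_le_exit, le_max_left _ _⟩

theorem isConnectedSet_leftFoot (g : T.IsGate x z s B b b' e e') :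
    IsConnectedSet G (T.leftFoot x z s e) :=
  isConnectedSet_segment Set.ordConnected_Icc ⟨e, g.exit_mem_leftFoot⟩

theorem exit_mem_rightFoot (g : T.IsGate x z s B b b' e e') : e' ∈ T.rightFoot x z e' :=
  ⟨g.exit_mem_path', g.forkLevel_le_dist, le_rfl⟩

theorem isConnectedSet_rightFoot (g : T.IsGate x z s B b b' e e') :
    IsConnectedSet G (T.rightFoot x z e') :=
  isConnectedSet_segment Set.ordConnected_Icc ⟨e', g.exit_mem_rightFoot⟩

theorem touches_leftFoot (g : T.IsGate x z s B b b' e e') (h : T.IsPocket x z s Z B) {m : ℕ}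
    (hm : T.forkLevel x z ≤ m) (hmz : m ≤ G.dist r z) :
    Touches G (T.leftFoot x z s e) (T.segment z (Set.Icc (T.forkLevel x z) m)) := by
  obtain ⟨u, huz, hux, hu⟩ := g.exists_mem_path_fork
  obtain ⟨t, htz, ht⟩ := T.exists_mem_path_dist_eq (v := z) (hm.trans hmz)
  have hs := g.dist_lt_forkLevel h
  exact ⟨u, ⟨hux, by lia, hu.trans_le (le_max_right _ _)⟩, t, ⟨htz, ht.ge, ht.trans_le hm⟩,
    adj_of_mem_path huz htz (by lia)⟩

theorem roof_union (g : T.IsGate x z s B b b' e e') (h : T.IsPocket x z s Z B)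
    (hne : (T.roof x z e e').Nonempty) :
    IsConnectedSet G (T.roof x z e e' ∪ Z) ∧ Touches G (T.roof x z e e' ∪ Z) {e'} ∧
      ∀ p ∈ T.path x, G.dist r p = T.leftLevel x z e → Touches G (T.roof x z e e' ∪ Z) {p} := by
  obtain ⟨p, hp, hpl⟩ := g.exists_mem_path_leftLevel
  have hleft : IsTail G (T.segment x (Set.Ioi (T.leftLevel x z e))) x p := hpl ▸ isTail_segment hp
  have hright := isTail_segment g.exit_mem_path'
  suffices hsuff : IsConnectedSet G (T.roof x z e e' ∪ Z) ∧
      Touches G (T.roof x z e e' ∪ Z) {p} ∧ Touches G (T.roof x z e e' ∪ Z) {e'} by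
    refine ⟨hsuff.1, hsuff.2.2, fun q hq hql => ?_⟩
    rw [T.injOn_path x hq hp (hql.trans hpl.symm)]
    exact hsuff.2.1
  obtain ⟨rfl, hxz⟩ | ⟨hZ, hx, hz⟩ := h.joined
  · rw [Set.union_empty]
    have hxz' := hxz.resolve_left fun hxz => g.right_notMem_path (hxz ▸ mem_path_self x)
    exact hleft.union_of_adj hright hxz' hne
  · exact hleft.union_union hright hZ hx hz

theorem isConnectedSet_below (g : T.IsGate x z s B b b' e e') (h : T.IsPocket x z s Z B)
    (he : T.forkLevel x z ≤ G.dist r e) :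
    IsConnectedSet G (T.segment x (Set.Ico (G.dist r s) (G.dist r e)) ∪
      T.segment z (Set.Ico (T.forkLevel x z) (G.dist r e'))) := by
  have hs := g.dist_lt_forkLevel h
  obtain ⟨u, huz, hux, hu⟩ := g.exists_mem_path_fork
  have huY : u ∈ T.segment x (Set.Ico (G.dist r s) (G.dist r e)) := ⟨hux, by lia, by lia⟩
  refine (isConnectedSet_segment Set.ordConnected_Ico ⟨u, huY⟩).union_of_nonempty fun hne => ?_
  refine ⟨isConnectedSet_segment Set.ordConnected_Ico hne, ?_⟩
  obtain ⟨y, -, hky, hye⟩ := hne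
  obtain ⟨t, htz, ht⟩ := T.exists_mem_path_dist_eq (v := z)
    (g.forkLevel_le_dist.trans (dist_le_of_mem_path g.exit_mem_path'))
  exact ⟨u, huY, t, ⟨htz, ht.ge, by lia⟩, adj_of_mem_path huz htz (by lia)⟩

theorem touches_exit_below (g : T.IsGate x z s B b b' e e') (h : T.IsPocket x z s Z B)
    (he : T.forkLevel x z ≤ G.dist r e) :
    Touches G {e'} (T.segment x (Set.Ico (G.dist r s) (G.dist r e)) ∪
      T.segment z (Set.Ico (T.forkLevel x z) (G.dist r e'))) := by
  have hs := g.dist_lt_forkLevel h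
  have hez := dist_le_of_mem_path g.exit_mem_path'
  have hfork := g.forkLevel_le_dist
  obtain ⟨c, hc, hce⟩ := T.exists_mem_path_dist_eq (v := z) (m := G.dist r e' - 1) (by lia)
  refine ⟨e', rfl, c, ?_, (adj_of_mem_path hc g.exit_mem_path' (by lia)).symm⟩
  obtain hlt | hge := lt_or_ge (G.dist r c) (T.forkLevel x z)
  · exact .inl ⟨(g.mem_path_left_iff hc).2 hlt, by lia, by lia⟩
  · exact .inr ⟨hc, hge, by lia⟩

theorem pairwise_disjoint_below (g : T.IsGate x z s B b b' e e') (h : T.IsPocket x z s Z B)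
    {A D Y : Set V} (hD : T.IsAttic x z B b b' e e' D) (hAsub : A ⊆ T.leftFoot x z s e)
    (hYsub : Y ⊆ T.leftFoot x z s e ∪ T.rightFoot x z e') (hdisjA : Disjoint A Y) (heY' : e' ∉ Y) :
    [A, {e'}, D, B ∩ T.fence b b', Y, T.roof x z e e' ∪ Z].Pairwise Disjoint := by
  have hA := fun a ha => @hAsub a ha
  have hYs := fun a ha => @hYsub a ha
  have hDB := fun a ha => @hD.subset a ha
  have hDf := hD.isComponent.2.1
  have hAY := Set.disjoint_left.1 hdisjA
  have hx (a : V) (ha : a ∈ B) := h.notMem_path_left ha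
  have hz (a : V) (ha : a ∈ B) := h.notMem_path_right ha
  have hfork_iff (a : V) (ha : a ∈ T.path x) := g.mem_path_right_iff ha
  have hZB := h.notMem_of_mem
  have hZs := h.dist_lt
  have hex := g.exit_notMem_path'
  have hez := g.exit_mem_path'
  have hfork := g.forkLevel_le_dist
  have hs := g.dist_lt_forkLevel h
  simp only [leftFoot, rightFoot, BFSTree.segment, Set.mem_union, Set.mem_ofPred_eq,
    Set.mem_Icc] at hA hYs hDf hZs
  simp only [List.pairwise_cons, List.forall_mem_cons, List.not_mem_nil, false_imp_iff,
    implies_true, List.Pairwise.nil, and_true, Set.disjoint_left, roof, BFSTree.segment,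
    Set.mem_union, Set.mem_inter_iff, Set.mem_singleton_iff, Set.mem_ofPred_eq, Set.mem_Ioi]
  and_intros <;> intro a ha ha' <;> grind

end IsGate

end BFSTree

namespace Setting

open BFSTree

variable {V : Type*} {G : SimpleGraph V} {r x z s b b' e e' : V} {T : Setting G r} {Z B D : Set V}

theorem not_touches_below (h : T.IsPocket x z s Z B) (g : T.IsGate x z s B b b' e e')
    (hD : T.IsAttic x z B b b' e e' D) {A Y : Set V}
    (hA : IsConnectedSet G A) (hAsub : A ⊆ T.leftFoot x z s e) (heA : e ∈ A)
    (hAtop : ∀ p ∈ T.path x, G.dist r p = T.leftLevel x z e → p ∈ A)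
    (hY : IsConnectedSet G Y) (hYsub : Y ⊆ T.leftFoot x z s e ∪ T.rightFoot x z e')
    (hAY : Touches G A Y) (hdisjA : Disjoint A Y) (heY : Touches G {e'} Y) (heY' : e' ∉ Y) :
    ¬ Touches G D Y := by
  intro hDY
  obtain ⟨u, hu, -⟩ := hD.touches_roof.symm
  obtain ⟨hroof, hroofe, hrooftop⟩ := g.roof_union h ⟨u, hu⟩
  have hAroof : Touches G A (T.roof x z e e' ∪ Z) := by
    obtain ⟨p, hp, hpl⟩ := g.exists_mem_path_leftLevel
    exact ((hrooftop p hp hpl).mono subset_rfl (Set.singleton_subset_iff.2 (hAtop p hp hpl))).symm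
  have hdisj := g.pairwise_disjoint_below h hD hAsub hYsub hdisjA heY'
  refine T.not_isMinor_bipartite (isMinor_completeBipartiteGraph ?_ hdisj ?_)
  · simp only [List.forall_mem_cons]
    exact ⟨hA, .singleton e', hD.isComponent.1, g.isConnectedSet_inter_fence, hY, hroof, by simp⟩
  · simp only [List.forall_mem_cons]
    exact ⟨⟨(g.touches_exit.mono subset_rfl (Set.singleton_subset_iff.2 heA)).symm, hAY, hAroof,
      by simp⟩, ⟨g.touches_exit'.symm, heY, hroofe.symm, by simp⟩,
      ⟨g.touches_inter_fence h hD.isComponent hD.subset, hDY,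
        hD.touches_roof.mono subset_rfl Set.subset_union_left, by simp⟩,
      by simp⟩

theorem dist_exit_le_of_touches_roof (h : T.IsPocket x z s Z B) (g : T.IsGate x z s B b b' e e')
    (hD : T.IsAttic x z B b b' e e' D) {q : V} (hq : q ∈ outerBoundary G D)
    (hqz : q ∈ T.path z) (hqx : q ∉ T.path x) :
    G.dist r e' ≤ G.dist r q := by
  by_contra! hlt
  have hkq : T.forkLevel x z ≤ G.dist r q := not_lt.1 (mt (g.mem_path_left_iff hqz).2 hqx)
  have hez := dist_le_of_mem_path g.exit_mem_path'
  obtain ⟨c, hc, hce⟩ := T.exists_mem_path_dist_eq (v := z) (m := G.dist r e' - 1) (by lia)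
  obtain ⟨-, a, ha, haq⟩ := hq
  let Y := T.segment z (Set.Icc (T.forkLevel x z) (G.dist r e' - 1))
  have hqY : q ∈ Y := ⟨hqz, hkq, by lia⟩
  refine not_touches_below (Y := Y) h g hD g.isConnectedSet_leftFoot subset_rfl
    g.exit_mem_leftFoot (fun p hp hpl => ⟨hp, ?_, hpl.le⟩)
    (isConnectedSet_segment Set.ordConnected_Icc ⟨q, hqY⟩) (fun y hy => .inr ⟨hy.1, hy.2.1, ?_⟩)
    (g.touches_leftFoot h (by lia) (by lia)) (Set.disjoint_left.2 fun y hy hyY => ?_)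
    ⟨e', rfl, c, ⟨hc, by lia, hce.le⟩, (adj_of_mem_path hc g.exit_mem_path' (by lia)).symm⟩
    (fun he => ?_) ⟨a, ha, q, hqY, haq⟩
  · exact hpl ▸ g.dist_le_exit.trans (le_max_left _ _)
  · exact hy.2.2.trans (Nat.sub_le _ _)
  · exact ((g.mem_path_left_iff hyY.1).1 hy.1).not_ge hyY.2.1
  · have := he.2.2
    lia

theorem leftLevel_le_of_touches_roof (h : T.IsPocket x z s Z B) (g : T.IsGate x z s B b b' e e')
    (hD : T.IsAttic x z B b b' e e' D) {q : V} (hq : q ∈ outerBoundary G D)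
    (hqB : q ∈ outerBoundary G B) (hqx : q ∈ T.path x) :
    T.leftLevel x z e ≤ T.leftLevel x z q := by
  refine max_le ?_ (le_max_right _ _)
  by_contra! hlt
  obtain ⟨hqe, hke⟩ := max_lt_iff.1 hlt
  have hlevel : T.leftLevel x z e = G.dist r e := max_eq_left hke.le
  have hle : T.forkLevel x z ≤ G.dist r e := by lia
  have hs := g.dist_lt_forkLevel h
  have hsq := h.dist_le q hqB
  have hex := dist_le_of_mem_path g.exit_mem_path
  let Y := T.segment x (Set.Ico (G.dist r s) (G.dist r e)) ∪
    T.segment z (Set.Ico (T.forkLevel x z) (G.dist r e'))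
  have heY : Touches G {e} Y := by
    obtain ⟨c, hc, hce⟩ := T.exists_mem_path_dist_eq (v := x) (m := G.dist r e - 1) (by lia)
    exact ⟨e, rfl, c, .inl ⟨hc, by lia, by lia⟩,
      (adj_of_mem_path hc g.exit_mem_path (by lia)).symm⟩
  obtain ⟨-, a, ha, haq⟩ := hq
  refine not_touches_below (A := {e}) (Y := Y) h g hD (.singleton e)
    (Set.singleton_subset_iff.2 g.exit_mem_leftFoot) rfl
    (fun p hp hpl => T.injOn_path x hp g.exit_mem_path (hpl.trans hlevel))
    (g.isConnectedSet_below h hle) ?_ heY ?_ (g.touches_exit_below h hle) ?_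
    ⟨a, ha, q, .inl ⟨hqx, hsq, hqe⟩, haq⟩
  · exact Set.union_subset_union (fun y hy => ⟨hy.1, hy.2.1, hy.2.2.le.trans (le_max_left _ _)⟩)
      fun y hy => ⟨hy.1, hy.2.1, hy.2.2.le⟩
  · refine Set.disjoint_singleton_left.2 ?_
    rintro (⟨-, -, hlt⟩ | ⟨hz, -, -⟩)
    · exact lt_irrefl _ hlt
    · have := (g.mem_path_right_iff g.exit_mem_path).1 hz
      lia
  · rintro (⟨hx, -⟩ | ⟨-, -, hlt⟩)
    exacts [g.exit_notMem_path' hx, lt_irrefl _ hlt]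

end Setting

/-! ### Crossing gates -/

namespace BFSTree

variable {V : Type*} {G : SimpleGraph V} {r x z s b b' e e' d d' f f' : V} {T : BFSTree G r}
  {Z B : Set V}

theorem path_subset_fence {a : V} (ha : a ∈ T.fence x z) : T.path a ⊆ T.fence x z := by
  rcases ha with ha | ha
  exacts [(path_subset_of_mem ha).trans Set.subset_union_left,
    (path_subset_of_mem ha).trans Set.subset_union_right]

namespace IsChord

theorem inter_fence (hcross : ∀ a ∈ B, a ∈ T.path b → a ∉ T.path d') :
    B ∩ T.path b ∩ T.fence d d' = B ∩ (T.path b ∩ T.path d) := by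
  ext a
  have := hcross a
  simp only [Set.mem_inter_iff, Set.mem_union]
  tauto

theorem touches_inter_path (c : T.IsChord B b b' e e')
    (hcross : ∀ a ∈ B, a ∈ T.path b → a ∉ T.path d')
    (hM : ((B ∩ T.fence b b') \ T.fence d d').Nonempty)
    (hne : (B ∩ (T.path b ∩ T.path d)).Nonempty) :
    Touches G ((B ∩ T.fence b b') \ T.fence d d') (B ∩ (T.path b ∩ T.path d)) := by
  rw [← inter_fence hcross] at hne ⊢
  exact c.touches_inter (fun _ => path_subset_fence) hM hne

theorem touches_exit_of_not_nonempty (c : T.IsChord B b b' e e')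
    (hcross : ∀ a ∈ B, a ∈ T.path b → a ∉ T.path d')
    (hM : ((B ∩ T.fence b b') \ T.fence d d').Nonempty)
    (hempty : ¬ (B ∩ (T.path b ∩ T.path d)).Nonempty) :
    Touches G ((B ∩ T.fence b b') \ T.fence d d') {e} :=
  c.touches_exit (fun _ => path_subset_fence) hM (inter_fence hcross ▸ hempty)

theorem exit_eq_or_touches_exit (c : T.IsChord B b b' e e') (c' : T.IsChord B d d' f f')
    (hcross : ∀ a ∈ B, a ∈ T.path b → a ∉ T.path d')
    (hM : ((B ∩ T.fence b b') \ T.fence d d').Nonempty) :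
    e = f ∨ Touches G ((B ∩ T.fence b b') \ T.fence d d') {e} := by
  refine (em (B ∩ (T.path b ∩ T.path d)).Nonempty).imp (fun ⟨a, haB, hab, had⟩ => ?_)
    (c.touches_exit_of_not_nonempty hcross hM)
  exact c.exit.eq_of_mem c'.exit hab had haB

theorem isSide (c : T.IsChord B b b' e e') (c' : T.IsChord B d d' f f')
    (hcross : ∀ a ∈ B, a ∈ T.path b → a ∉ T.path d')
    (hcross' : ∀ a ∈ B, a ∈ T.path d → a ∉ T.path b')
    (hM : ((B ∩ T.fence b b') \ T.fence d d').Nonempty)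
    (hN : ((B ∩ T.fence d d') \ T.fence b b').Nonempty)
    {L : Set V} (hL : IsConnectedSet G L) (he : e ∈ L) (hf : f ∈ L) :
    IsSide G ((B ∩ T.fence b b') \ T.fence d d') ((B ∩ T.fence d d') \ T.fence b b') L
      (B ∩ (T.path b ∩ T.path d)) where
  isConnectedSet := hL
  of_nonempty hne := by
    have hne' : (B ∩ (T.path d ∩ T.path b)).Nonempty := by rwa [Set.inter_comm (T.path d)]
    refine ⟨c'.exit.isConnectedSet_inter b hne,
      (c'.exit.touches_inter hne).mono (Set.singleton_subset_iff.2 hf) subset_rfl,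
      c.touches_inter_path hcross hM hne, ?_⟩
    rw [Set.inter_comm (T.path b)]
    exact c'.touches_inter_path hcross' hN hne'
  of_not_nonempty hempty := by
    refine ⟨(c.touches_exit_of_not_nonempty hcross hM hempty).mono subset_rfl
      (Set.singleton_subset_iff.2 he), ?_⟩
    rw [Set.inter_comm (T.path b)] at hempty
    exact (c'.touches_exit_of_not_nonempty hcross' hN hempty).mono subset_rfl
      (Set.singleton_subset_iff.2 hf)

end IsChord

namespace IsGate

theorem notMem_path_right (g : T.IsGate x z s B b b' e e') (g' : T.IsGate x z s B d d' f f')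
    {a : V} (haB : a ∈ B) (hab : a ∈ T.path b) : a ∉ T.path d' := fun had =>
  g'.exit_notMem_path' (g.exit.eq_of_mem g'.exit' hab had haB ▸ g.exit_mem_path)

theorem isSide_left (g : T.IsGate x z s B b b' e e') (g' : T.IsGate x z s B d d' f f')
    (hM : ((B ∩ T.fence b b') \ T.fence d d').Nonempty)
    (hN : ((B ∩ T.fence d d') \ T.fence b b').Nonempty)
    {L : Set V} (hL : IsConnectedSet G L) (he : e ∈ L) (hf : f ∈ L) :
    IsSide G ((B ∩ T.fence b b') \ T.fence d d') ((B ∩ T.fence d d') \ T.fence b b') L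
      (B ∩ (T.path b ∩ T.path d)) :=
  g.toIsChord.isSide g'.toIsChord (fun _ => g.notMem_path_right g')
    (fun _ => g'.notMem_path_right g) hM hN hL he hf

theorem isSide_right (g : T.IsGate x z s B b b' e e') (g' : T.IsGate x z s B d d' f f')
    (hM : ((B ∩ T.fence b b') \ T.fence d d').Nonempty)
    (hN : ((B ∩ T.fence d d') \ T.fence b b').Nonempty)
    {R : Set V} (hR : IsConnectedSet G R) (he' : e' ∈ R) (hf' : f' ∈ R) :
    IsSide G ((B ∩ T.fence b b') \ T.fence d d') ((B ∩ T.fence d d') \ T.fence b b') R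
      (B ∩ (T.path b' ∩ T.path d')) := by
  rw [T.fence_comm b, T.fence_comm d] at *
  exact g.toIsChord.symm.isSide g'.toIsChord.symm
    (fun _ haB hab had => g'.notMem_path_right g haB had hab)
    (fun _ haB had hab => g.notMem_path_right g' haB hab had) hM hN hR he' hf'

theorem inter_fence_sdiff (g : T.IsGate x z s B b b' e e') (g' : T.IsGate x z s B d d' f f')
    (hL : ¬ (B ∩ (T.path b ∩ T.path d)).Nonempty)
    (hR : ¬ (B ∩ (T.path b' ∩ T.path d')).Nonempty) :
    B ∩ T.fence b b' = (B ∩ T.fence b b') \ T.fence d d' := by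
  refine (sdiff_eq_left.2 <| Set.disjoint_left.2 fun a ha had => ?_).symm
  rcases ha.2 with hab | hab <;> rcases had with had | had
  exacts [hL ⟨a, ha.1, hab, had⟩, g.notMem_path_right g' ha.1 hab had,
    g'.notMem_path_right g ha.1 had hab, hR ⟨a, ha.1, hab, had⟩]

theorem disjoint_feet (g : T.IsGate x z s B b b' e e') :
    Disjoint (T.leftFoot x z s e) (T.rightFoot x z e') :=
  Set.disjoint_left.2 fun _ ha ha' => ((g.mem_path_left_iff ha'.1).1 ha.1).not_ge ha'.2.1

theorem disjoint_feet_roof (g : T.IsGate x z s B b b' e e') (h : T.IsPocket x z s Z B) :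
    Disjoint (T.leftFoot x z s e ∪ T.rightFoot x z e') (T.roof x z e e' ∪ Z) := by
  have hfork (a : V) (ha : a ∈ T.path x) := g.mem_path_right_iff ha
  have hfork_le := g.forkLevel_le_dist
  have hZ := h.dist_lt
  have hs := g.dist_lt_forkLevel h
  simp only [Set.mem_union] at hZ
  simp only [Set.disjoint_left, leftFoot, rightFoot, leftLevel, roof, segment, Set.mem_union,
    Set.mem_ofPred_eq, Set.mem_Icc, Set.mem_Ioi]
  intro a ha ha'
  grind

end IsGate

namespace IsPocket

theorem disjoint_feet (h : T.IsPocket x z s Z B) (e e' : V) :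
    Disjoint B (T.leftFoot x z s e ∪ T.rightFoot x z e') :=
  Set.disjoint_left.2 fun _ haB ha => h.isComponent.2.1 _ haB (ha.imp And.left And.left)

theorem disjoint_roof (h : T.IsPocket x z s Z B) (e e' : V) : Disjoint B (T.roof x z e e' ∪ Z) := by
  refine Set.disjoint_left.2 fun a haB ha => ?_
  rcases ha with ha | ha
  exacts [h.isComponent.2.1 a haB (ha.imp And.left And.left), h.notMem_of_mem a ha haB]

end IsPocket

theorem sides_subset :
    T.leftFoot x z s e ∪ B ∩ (T.path b ∩ T.path d) ∪
      (T.rightFoot x z e' ∪ B ∩ (T.path b' ∩ T.path d')) ⊆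
      (T.fence x z ∪ T.fence b b') ∩ (T.fence x z ∪ T.fence d d') :=
  Set.union_subset
    (Set.union_subset (fun _ ha => ⟨.inl (.inl ha.1), .inl (.inl ha.1)⟩)
      fun _ ha => ⟨.inr (.inl ha.2.1), .inr (.inl ha.2.2)⟩)
    (Set.union_subset (fun _ ha => ⟨.inl (.inr ha.1), .inl (.inr ha.1)⟩)
      fun _ ha => ⟨.inr (.inr ha.2.1), .inr (.inr ha.2.2)⟩)

theorem IsGate.disjoint_sides (g : T.IsGate x z s B b b' e e') (g' : T.IsGate x z s B d d' f f')
    (h : T.IsPocket x z s Z B) :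
    Disjoint (T.leftFoot x z s e ∪ B ∩ (T.path b ∩ T.path d))
      (T.rightFoot x z e' ∪ B ∩ (T.path b' ∩ T.path d')) := by
  have hfeetB := Set.disjoint_union_right.1 (h.disjoint_feet e e')
  refine .union_left (.union_right g.disjoint_feet ?_) (.union_right ?_ ?_)
  · exact hfeetB.1.symm.mono_right Set.inter_subset_left
  · exact hfeetB.2.mono_left Set.inter_subset_left
  · exact Set.disjoint_left.2 fun a ha ha' => g.notMem_path_right g' ha.1 ha.2.1 ha'.2.2

theorem IsGate.disjoint_sides_roof (g : T.IsGate x z s B b b' e e') (h : T.IsPocket x z s Z B)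
    {S S' D E : Set V} (hD : D ⊆ B) (hE : E ⊆ B) :
    Disjoint (T.leftFoot x z s e ∪ B ∩ S ∪ (T.rightFoot x z e' ∪ B ∩ S') ∪ (D ∪ E))
      (T.roof x z e e' ∪ Z) := by
  obtain ⟨hleft, hright⟩ := Set.disjoint_union_left.1 (g.disjoint_feet_roof h)
  have hB {S : Set V} (hS : S ⊆ B) := (h.disjoint_roof e e').mono_left hS
  exact ((hleft.union_left (hB Set.inter_subset_left)).union_left
    (hright.union_left (hB Set.inter_subset_left))).union_left ((hB hD).union_left (hB hE))

theorem IsAttic.inter_eq {D : Set V} (hD : T.IsAttic x z B b b' e e' D)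
    (hND : (B ∩ T.fence d d') \ T.fence b b' ⊆ D) :
    D ∩ (T.fence x z ∪ T.fence d d') = (B ∩ T.fence d d') \ T.fence b b' := by
  refine Set.Subset.antisymm (fun a ⟨ha, haY⟩ => ?_) fun a ha => ⟨hND ha, .inr ha.1.2⟩
  have haX := hD.isComponent.2.1 a ha
  exact ⟨⟨hD.subset ha, haY.resolve_left (mt .inl haX)⟩, mt .inr haX⟩

end BFSTree

namespace Setting

open BFSTree

variable {V : Type*} {G : SimpleGraph V} {r x z s b b' e e' d d' f f' : V} {T : Setting G r}
  {Z B D E : Set V}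

theorem exits_le_of_isAttic (h : T.IsPocket x z s Z B) (g : T.IsGate x z s B b b' e e')
    (g' : T.IsGate x z s B d d' f f') (hE : T.IsAttic x z B d d' f f' E)
    (hM : ((B ∩ T.fence b b') \ T.fence d d').Nonempty)
    (hME : (B ∩ T.fence b b') \ T.fence d d' ⊆ E) :
    T.leftLevel x z f ≤ T.leftLevel x z e ∧ G.dist r f' ≤ G.dist r e' := by
  have hbd (q : V) (hq : q ∈ T.fence x z)
      (ht : Touches G ((B ∩ T.fence b b') \ T.fence d d') {q}) :
      q ∈ outerBoundary G B ∧ q ∈ outerBoundary G E := by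
    obtain ⟨a, ha, c, hc, haq⟩ := ht
    rw [Set.mem_singleton_iff.1 hc] at haq
    have hqB : q ∉ B := fun hqB => h.isComponent.2.1 q hqB hq
    exact ⟨⟨hqB, a, ha.1.1, haq⟩, fun hqE => hqB (hE.subset hqE), a, hME ha, haq⟩
  have hM' : ((B ∩ T.fence b' b) \ T.fence d' d).Nonempty := by
    rwa [T.fence_comm b', T.fence_comm d']
  constructor
  · obtain rfl | ht := g.toIsChord.exit_eq_or_touches_exit g'.toIsChord
      (fun _ => g.notMem_path_right g') hM
    · rfl
    · obtain ⟨heB, heE⟩ := hbd e (.inl g.exit_mem_path) ht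
      exact leftLevel_le_of_touches_roof h g' hE heE heB g.exit_mem_path
  · obtain heq | ht := g.toIsChord.symm.exit_eq_or_touches_exit g'.toIsChord.symm
      (fun a haB hab had => g'.notMem_path_right g haB had hab) hM'
    · rw [heq]
    · rw [T.fence_comm b', T.fence_comm d'] at ht
      exact dist_exit_le_of_touches_roof h g' hE (hbd e' (.inr g.exit_mem_path') ht).2
        g.exit_mem_path' g.exit_notMem_path'

theorem isCrossing (h : T.IsPocket x z s Z B) (g : T.IsGate x z s B b b' e e')
    (g' : T.IsGate x z s B d d' f e') (hD : T.IsAttic x z B b b' e e' D)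
    (hE : T.IsAttic x z B d d' f e' E) (hlevel : T.leftLevel x z e = T.leftLevel x z f)
    (hM : ((B ∩ T.fence b b') \ T.fence d d').Nonempty)
    (hME : (B ∩ T.fence b b') \ T.fence d d' ⊆ E)
    (hN : ((B ∩ T.fence d d') \ T.fence b b').Nonempty)
    (hND : (B ∩ T.fence d d') \ T.fence b b' ⊆ D) :
    IsCrossing G (T.fence x z ∪ T.fence b b') (T.fence x z ∪ T.fence d d') D E
      (T.leftFoot x z s e) (B ∩ (T.path b ∩ T.path d))
      (T.rightFoot x z e') (B ∩ (T.path b' ∩ T.path d')) (T.roof x z e e' ∪ Z) := by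
  have hroof : T.roof x z f e' = T.roof x z e e' := by rw [roof, roof, hlevel]
  obtain ⟨u, hu, -⟩ := hD.touches_roof.symm
  obtain ⟨hW, hWe, hWtop⟩ := g.roof_union h ⟨u, hu⟩
  obtain ⟨p, hp, hpl⟩ := g.exists_mem_path_leftLevel
  have hpL : p ∈ T.leftFoot x z s e := ⟨hp, hpl ▸ g.dist_le_exit.trans (le_max_left _ _), hpl.le⟩
  have hfL : f ∈ T.leftFoot x z s e :=
    ⟨g'.exit_mem_path, g'.dist_le_exit, hlevel ▸ le_max_left _ _⟩
  have hDN := hD.inter_eq hND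
  have hEM := hE.inter_eq hME
  exact
    { isComponent := hD.isComponent
      isComponent' := hE.isComponent
      isConnectedSet_inter :=
        hDN ▸ g'.toIsChord.isConnectedSet_sdiff (fun _ => path_subset_fence) hN
      isConnectedSet_inter' :=
        hEM ▸ g.toIsChord.isConnectedSet_sdiff (fun _ => path_subset_fence) hM
      left := hDN ▸ hEM ▸ g.isSide_left g' hM hN g.isConnectedSet_leftFoot g.exit_mem_leftFoot hfL
      right := hDN ▸ hEM ▸ g.isSide_right g' hM hN g.isConnectedSet_rightFoot
        g.exit_mem_rightFoot g.exit_mem_rightFoot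
      isConnectedSet_top := hW
      touches_left_right := g.touches_leftFoot h g.forkLevel_le_dist
        (dist_le_of_mem_path g.exit_mem_path')
      touches_left_top := (hWtop p hp hpl).symm.mono (Set.singleton_subset_iff.2 hpL) subset_rfl
      touches_right_top := hWe.symm.mono (Set.singleton_subset_iff.2 g.exit_mem_rightFoot)
        subset_rfl
      touches_top := hD.touches_roof.mono subset_rfl Set.subset_union_left
      touches_top' := (hroof ▸ hE.touches_roof).mono subset_rfl Set.subset_union_left
      touches_inter := fun hL hR => hEM ▸ g.inter_fence_sdiff g' hL hR ▸
        g.touches_inter_fence h hD.isComponent hD.subset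
      subset := sides_subset
      disjoint_sides := g.disjoint_sides g' h
      disjoint_left := (h.disjoint_feet e e').symm.mono Set.subset_union_left Set.inter_subset_left
      disjoint_right :=
        (h.disjoint_feet e e').symm.mono Set.subset_union_right Set.inter_subset_left
      disjoint_top := g.disjoint_sides_roof h hD.subset hE.subset }

theorem not_sdiff_subset_of_isAttic (h : T.IsPocket x z s Z B) (g : T.IsGate x z s B b b' e e')
    (g' : T.IsGate x z s B d d' f f') (hD : T.IsAttic x z B b b' e e' D)
    (hE : T.IsAttic x z B d d' f f' E) (hlevel : T.leftLevel x z e ≤ T.leftLevel x z f)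
    (hdist : G.dist r e' ≤ G.dist r f') (hM : ((B ∩ T.fence b b') \ T.fence d d').Nonempty)
    (hME : (B ∩ T.fence b b') \ T.fence d d' ⊆ E)
    (hN : ((B ∩ T.fence d d') \ T.fence b b').Nonempty) :
    ¬ (B ∩ T.fence d d') \ T.fence b b' ⊆ D := by
  intro hND
  obtain ⟨hlevel', hdist'⟩ := exits_le_of_isAttic h g g' hE hM hME
  obtain rfl : e' = f' :=
    T.injOn_path z g.exit_mem_path' g'.exit_mem_path' (hdist.antisymm hdist')
  rcases (isCrossing h g g' hD hE (hlevel.antisymm hlevel') hM hME hN hND).isMinor_or_isMinor with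
    hminor | hminor
  exacts [T.not_isMinor_bipartite hminor, T.not_isMinor_five hminor]

end Setting

/-! ### A topmost gate -/

namespace BFSTree

variable {V : Type*} {G : SimpleGraph V} {r x z s b b' e e' d d' f f' y y' : V} {T : BFSTree G r}
  {Z B D : Set V}

/-- The vertices of `B` that lie in an attic of the gate. -/
def above (T : BFSTree G r) (x z : V) (B : Set V) (b b' e e' : V) : Set V :=
  {w | ∃ D, T.IsAttic x z B b b' e e' D ∧ w ∈ D}

/-- The boundary of `D` is contained in one of the fences of `b` and `b'` and of `x` and `b`, or
avoids the latter. -/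
def IsResolved (T : BFSTree G r) (x b b' : V) (D : Set V) : Prop :=
  outerBoundary G D ⊆ T.fence b b' ∨ outerBoundary G D ⊆ T.fence x b ∨
    Disjoint (outerBoundary G D) (T.fence x b)

theorem path_subset_leftSide (hd : d ∈ T.leftSide x z) : T.path d ⊆ T.leftSide x z :=
  fun _ ha _ hq => hd ⟨path_subset_of_mem ha hq.1, hq.2⟩

theorem roof_anti (hlevel : T.leftLevel x z e ≤ T.leftLevel x z f)
    (hdist : G.dist r e' ≤ G.dist r f') : T.roof x z f f' ⊆ T.roof x z e e' :=
  Set.union_subset_union (fun _ ha => ⟨ha.1, hlevel.trans_lt ha.2⟩)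
    fun _ ha => ⟨ha.1, hdist.trans_lt ha.2⟩

theorem IsExit.eq_or_mem_outerBoundary (h : T.IsExit B b e) (h' : T.IsExit B d f) (hDB : D ⊆ B)
    (hsub : B ∩ T.path d ⊆ D ∪ T.path b) (hd : d ∈ D ∨ d ∈ outerBoundary G D) :
    e = f ∨ f ∈ outerBoundary G D ∧ f ∈ outerBoundary G B := by
  have hbd {a : V} (haD : a ∈ D) (haf : G.Adj a f) :
      f ∈ outerBoundary G D ∧ f ∈ outerBoundary G B :=
    ⟨⟨fun hf => h'.notMem (hDB hf), a, haD, haf⟩, h'.notMem, a, hDB haD, haf⟩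
  by_cases hdB : d ∈ B
  · obtain ⟨c, hc, hcB, hcf⟩ := h'.exists_adj (mem_path_self d) hdB
    rcases hsub ⟨hcB, hc⟩ with hcD | hcb
    exacts [.inr (hbd hcD hcf), .inl (h.eq_of_mem h' hcb hc hcB)]
  · obtain ⟨-, a, ha, had⟩ := hd.resolve_left fun hdD => hdB (hDB hdD)
    exact .inr (hbd ha (h'.eq_of_notMem hdB ▸ had))

namespace IsGate

theorem mem_or_mem_path_left (g : T.IsGate x z s B b b' e e') (hy : y ∈ T.path b) :
    y ∈ B ∨ y ∈ T.path x :=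
  or_iff_not_imp_left.2 fun hyB =>
    path_subset_of_mem g.exit_mem_path (g.exit.mem_path_of_notMem hy hyB)

theorem mem_or_mem_path_right (g : T.IsGate x z s B b b' e e') (hy : y ∈ T.path b') :
    y ∈ B ∨ y ∈ T.path z :=
  or_iff_not_imp_left.2 fun hyB =>
    path_subset_of_mem g.exit_mem_path' (g.exit'.mem_path_of_notMem hy hyB)

theorem left_mem_leftSide (g : T.IsGate x z s B b b' e e') (h : T.IsPocket x z s Z B) :
    b ∈ T.leftSide x z := fun _ ha =>
  (g.mem_or_mem_path_left ha.1).resolve_left fun haB => h.notMem_path_right haB ha.2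

theorem notMem_leftSide (g : T.IsGate x z s B b b' e e') (hy : y ∈ T.path b') (hyB : y ∈ B) :
    y ∉ T.leftSide x z := fun hyL =>
  g.exit_notMem_path' (hyL ⟨g.exit'.mem_path_of_mem hy hyB, g.exit_mem_path'⟩)

theorem mem_roof (g : T.IsGate x z s B b b' e e') (hy : y ∈ T.fence x z)
    (hyb : y ∉ T.fence b b') : y ∈ T.roof x z e e' := by
  have hright (hyz : y ∈ T.path z) : G.dist r e' < G.dist r y := by
    by_contra! hle
    exact hyb (.inr (path_subset_of_mem g.exit'.mem_path
      (mem_path_of_dist_le hyz g.exit_mem_path' hle)))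
  by_cases hyx : y ∈ T.path x
  · refine .inl ⟨hyx, Set.mem_Ioi.2 (max_lt ?_ ?_)⟩
    · by_contra! hle
      exact hyb (.inl (path_subset_of_mem g.exit.mem_path
        (mem_path_of_dist_le hyx g.exit_mem_path hle)))
    · by_contra! hle
      have hpos := forkLevel_pos g.right_notMem_path
      have hfork := g.forkLevel_le_dist
      have := hright ((g.mem_path_right_iff hyx).2 (by lia))
      lia
  · have hyz := hy.resolve_left hyx
    exact .inr ⟨hyz, hright hyz⟩

theorem inter_path_subset_left (g : T.IsGate x z s B b b' e e') (h : T.IsPocket x z s Z B)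
    (hD : IsComponent G (T.fence x z ∪ T.fence b b') D) (hDB : D ⊆ B) (hd : d ∈ T.leftSide x z)
    (hdD : d ∈ D ∨ d ∈ T.fence x b) : B ∩ T.path d ⊆ D ∪ T.path b := by
  have hsub : T.path d ⊆ D ∪ T.fence x b := by
    refine path_subset_of_parent_mem hdD fun a ha haD => ?_
    rcases haD with haD | haD
    · have har : a ≠ r := ne_of_mem_of_not_mem (hDB haD) h.root_notMem
      have hside := path_subset_leftSide hd (parent_mem_path ha)
      by_contra hpar
      have hX := not_not.1 <|
        mt (hD.2.2 a haD _ (T.adj_parent a har).symm) fun hmem => hpar (.inl hmem)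
      have hz (haz : T.parent a ∈ T.path z) : False :=
        hpar (.inr (.inl (hside ⟨mem_path_self _, haz⟩)))
      rcases hX with (hX | hX) | hX | hX
      · exact hpar (.inr (.inl hX))
      · exact hz hX
      · exact hpar (.inr (.inr hX))
      · exact (g.mem_or_mem_path_right hX).elim (fun haB => g.notMem_leftSide hX haB hside) hz
    · exact .inr (path_subset_fence haD (parent_mem_path (mem_path_self a)))
  rintro a ⟨haB, had⟩
  rcases hsub had with haD | hax | hab
  exacts [.inl haD, absurd hax (h.notMem_path_left haB), .inr hab]

theorem inter_path_subset_right (g : T.IsGate x z s B b b' e e') (h : T.IsPocket x z s Z B)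
    (hD : IsComponent G (T.fence x z ∪ T.fence b b') D) (hDB : D ⊆ B) (hd : d ∉ T.leftSide x z)
    (hdD : d ∈ D ∨ d ∈ T.fence z b') : B ∩ T.path d ⊆ D ∪ T.path b' := by
  obtain ⟨q, ⟨hqd, hqz⟩, hqx⟩ := Set.not_subset.1 hd
  have hqb : q ∉ T.path b := fun hqb => hqx (g.left_mem_leftSide h ⟨hqb, hqz⟩)
  have hsub : T.path d ⊆ D ∪ T.fence z b' := by
    refine path_subset_of_parent_mem hdD fun a ha haD => ?_
    rcases haD with haD | haD
    · have haz := h.notMem_path_right (hDB haD)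
      have har : a ≠ r := ne_of_mem_of_not_mem (hDB haD) h.root_notMem
      have hqa : q ∈ T.path a := mem_path_of_dist_le hqd ha <| le_of_not_ge fun hle =>
        haz (path_subset_of_mem hqz (mem_path_of_dist_le ha hqd hle))
      have hqpar : q ∈ T.path (T.parent a) :=
        ((eq_or_mem_path_parent hqa).resolve_left fun heq => haz (heq ▸ hqz)).2
      by_contra hpar
      have hX := not_not.1 <|
        mt (hD.2.2 a haD _ (T.adj_parent a har).symm) fun hmem => hpar (.inl hmem)
      rcases hX with (hX | hX) | hX | hX
      · exact hqx (path_subset_of_mem hX hqpar)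
      · exact hpar (.inr (.inl hX))
      · exact hqb (path_subset_of_mem hX hqpar)
      · exact hpar (.inr (.inr hX))
    · exact .inr (path_subset_fence haD (parent_mem_path (mem_path_self a)))
  rintro a ⟨haB, had⟩
  rcases hsub had with haD | haz | hab
  exacts [.inl haD, absurd haz (h.notMem_path_right haB), .inr hab]

theorem exists_isGate_of_mem_outerBoundary (g : T.IsGate x z s B b b' e e')
    (h : T.IsPocket x z s Z B) (hD : IsComponent G (T.fence x z ∪ T.fence b b') D) (hDB : D ⊆ B)
    (hy : y ∈ outerBoundary G D) (hyb : y ∈ T.fence x b) (hy' : y' ∈ outerBoundary G D)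
    (hyb' : y' ∉ T.fence x b) :
    ∃ d d' f f', T.IsGate x z s B d d' f f' ∧ B ∩ T.path d ⊆ D ∪ T.path b ∧
      B ∩ T.path d' ⊆ D ∪ T.path b' ∧ (d ∈ D ∨ d ∈ outerBoundary G D) ∧
      (d' ∈ D ∨ d' ∈ outerBoundary G D) ∧ (d ∈ D ∨ d' ∈ D) := by
  have hyx' : y' ∉ T.path x := fun hyx => hyb' (.inl hyx)
  have hyz' : y' ∈ T.fence z b' := by
    rcases hD.outerBoundary_subset hy' with (hyX | hyX) | hyX | hyX
    exacts [absurd hyX hyx', .inl hyX, absurd (.inr hyX) hyb', .inr hyX]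
  have hyB' : y' ∈ B ∨ y' ∈ T.path z := hyz'.elim .inr g.mem_or_mem_path_right
  have hyside : y ∈ T.leftSide x z := by
    rcases hyb with hyx | hyb
    exacts [fun a ha => path_subset_of_mem hyx ha.1,
      path_subset_leftSide (g.left_mem_leftSide h) hyb]
  have hyside' : y' ∉ T.leftSide x z := by
    by_cases hyz : y' ∈ T.path z
    · exact fun hL => hyx' (hL ⟨mem_path_self y', hyz⟩)
    · exact g.notMem_leftSide (hyz'.resolve_left hyz) (hyB'.resolve_right hyz)
  obtain ⟨d, d', f, f', g', hd, hd', hdD, hdD', hone⟩ := h.exists_isGate hD.1 hDB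
    (hyb.elim .inr g.mem_or_mem_path_left) (hyB'.imp_right fun hyz => ⟨hyz, hyx'⟩) hyside hyside'
    (touches_of_mem_outerBoundary hy) (touches_of_mem_outerBoundary hy')
  refine ⟨d, d', f, f', g', g.inter_path_subset_left h hD hDB hd ?_,
    g.inter_path_subset_right h hD hDB hd' ?_, ?_, ?_, hone⟩
  · exact hdD.imp_right fun heq : d = y => heq ▸ hyb
  · exact hdD'.imp_right fun heq : d' = y' => heq ▸ hyz'
  · exact hdD.imp_right fun heq : d = y => heq ▸ hy
  · exact hdD'.imp_right fun heq : d' = y' => heq ▸ hy'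

end IsGate

end BFSTree

namespace Setting

open BFSTree

variable {V : Type*} {G : SimpleGraph V} {r x z s b b' e e' d d' f f' : V} {T : Setting G r}
  {Z B D : Set V}

theorem above_ssubset (h : T.IsPocket x z s Z B) (g : T.IsGate x z s B b b' e e')
    (g' : T.IsGate x z s B d d' f f') (hD : T.IsAttic x z B b b' e e' D)
    (hlevel : T.leftLevel x z e ≤ T.leftLevel x z f) (hdist : G.dist r e' ≤ G.dist r f')
    (hN : ((B ∩ T.fence d d') \ T.fence b b').Nonempty)
    (hND : (B ∩ T.fence d d') \ T.fence b b' ⊆ D) :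
    T.above x z B d d' f f' ⊂ T.above x z B b b' e e' := by
  refine ⟨?_, fun hsub => ?_⟩
  · rintro w ⟨E, hE, hwE⟩
    have hEX (a : V) (ha : a ∈ E) : a ∉ T.fence x z ∪ T.fence b b' := by
      have hax : a ∉ T.fence x z := h.isComponent.2.1 a (hE.subset ha)
      have had : a ∉ T.fence d d' := fun had => hE.isComponent.2.1 a ha (.inr had)
      rintro (haX | hab)
      · exact hax haX
      have haM : a ∈ (B ∩ T.fence b b') \ T.fence d d' := ⟨⟨hE.subset ha, hab⟩, had⟩
      refine not_sdiff_subset_of_isAttic h g g' hD hE hlevel hdist ⟨a, haM⟩ ?_ hN hND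
      refine hE.isComponent.subset (g.toIsChord.isConnectedSet_sdiff
        (fun _ => path_subset_fence) ⟨a, haM⟩) (fun c hc hcY => ?_) ⟨a, haM, ha⟩
      exact hcY.elim (h.isComponent.2.1 c hc.1.1) hc.2
    obtain ⟨D', hD', hwD'⟩ := exists_isComponent G (hEX w hwE)
    have hsub : E ⊆ D' := hD'.subset hE.isComponent.1 hEX ⟨w, hwE, hwD'⟩
    refine ⟨D', ⟨hD', ?_, hE.touches_roof.mono hsub (roof_anti hlevel hdist)⟩, hwD'⟩
    exact h.isComponent.subset hD'.1 (fun a ha hax => hD'.2.1 a ha (.inl hax))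
      ⟨w, hwD', hE.subset hwE⟩
  · obtain ⟨n, hn⟩ := hN
    obtain ⟨E, hE, hnE⟩ := hsub ⟨D, hD, hND hn⟩
    exact hE.isComponent.2.1 n hnE (.inr hn.1.2)

theorem exists_isGate_above_ssubset (h : T.IsPocket x z s Z B) (g : T.IsGate x z s B b b' e e')
    (hD : IsComponent G (T.fence x z ∪ T.fence b b') D) (hDB : D ⊆ B)
    (hres : ¬ T.IsResolved x b b' D) :
    ∃ d d' f f', T.IsGate x z s B d d' f f' ∧
      T.above x z B d d' f f' ⊂ T.above x z B b b' e e' := by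
  simp only [IsResolved, not_or, Set.not_subset, Set.not_disjoint_iff] at hres
  obtain ⟨⟨p, hp, hpb⟩, ⟨y', hy', hyb'⟩, y, hy, hyb⟩ := hres
  have hattic : T.IsAttic x z B b b' e e' D := by
    obtain ⟨a, ha, hap⟩ := hp.2
    exact ⟨hD, hDB, a, ha, p,
      g.mem_roof ((hD.outerBoundary_subset hp).resolve_right hpb) hpb, hap⟩
  obtain ⟨d, d', f, f', g', hleft, hright, hd, hd', hone⟩ :=
    g.exists_isGate_of_mem_outerBoundary h hD hDB hy hyb hy' hyb'
  have hlevel : T.leftLevel x z e ≤ T.leftLevel x z f := by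
    obtain rfl | ⟨hfD, hfB⟩ := g.exit.eq_or_mem_outerBoundary g'.exit hDB hleft hd
    exacts [le_rfl, leftLevel_le_of_touches_roof h g hattic hfD hfB g'.exit_mem_path]
  have hdist : G.dist r e' ≤ G.dist r f' := by
    obtain rfl | ⟨hfD, -⟩ := g.exit'.eq_or_mem_outerBoundary g'.exit' hDB hright hd'
    exacts [le_rfl, dist_exit_le_of_touches_roof h g hattic hfD g'.exit_mem_path'
      g'.exit_notMem_path']
  refine ⟨d, d', f, f', g', above_ssubset h g g' hattic hlevel hdist ?_ ?_⟩
  · rcases hone with hd | hd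
    · exact ⟨d, ⟨hDB hd, .inl (mem_path_self d)⟩, fun hdb => hD.2.1 d hd (.inr hdb)⟩
    · exact ⟨d', ⟨hDB hd, .inr (mem_path_self d')⟩, fun hdb => hD.2.1 d' hd (.inr hdb)⟩
  · rintro a ⟨⟨haB, had | had⟩, hab⟩
    · exact (hleft ⟨haB, had⟩).resolve_right fun hab' => hab (.inl hab')
    · exact (hright ⟨haB, had⟩).resolve_right fun hab' => hab (.inr hab')

theorem exists_isGate_forall_isResolved [Finite V] (h : T.IsMinimalPocket x z s Z B) :
    Nat.card V ≤ 6 * snTwo G r + 1 ∨ ∃ b b' e e', T.IsGate x z s B b b' e e' ∧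
      ∀ D, IsComponent G (T.fence x z ∪ T.fence b b') D → D ⊆ B → T.IsResolved x b b' D := by
  refine (exists_isGate h).imp_right fun ⟨b, b', e, e', g⟩ => ?_
  obtain ⟨⟨b, b', e, e'⟩, hg, hmin⟩ := Set.exists_min_image
    {p : V × V × V × V | T.IsGate x z s B p.1 p.2.1 p.2.2.1 p.2.2.2}
    (fun p => (T.above x z B p.1 p.2.1 p.2.2.1 p.2.2.2).ncard) (Set.toFinite _)
    ⟨(b, b', e, e'), g⟩
  refine ⟨b, b', e, e', hg, fun D hD hDB => ?_⟩
  by_contra hres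
  obtain ⟨d, d', f, f', g', hlt⟩ := exists_isGate_above_ssubset h.toIsPocket hg hD hDB hres
  exact (hmin (d, d', f, f') g').not_gt (Set.ncard_lt_ncard hlt (Set.toFinite _))

end Setting

/-! ### Pockets inside a resolved gate -/

namespace BFSTree

variable {V : Type*} {G : SimpleGraph V} {r x z s b b' d e e' : V} {T : BFSTree G r}
  {A Z B D : Set V}

theorem IsExit.isConnectedSet_union_inter (h : T.IsExit B d e) (hA : IsConnectedSet G A)
    (he : e ∈ A) : IsConnectedSet G (A ∪ B ∩ T.path d) := by
  obtain hempty | hne := (B ∩ T.path d).eq_empty_or_nonempty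
  · rwa [hempty, Set.union_empty]
  · rw [← Set.inter_self (T.path d)] at hne ⊢
    exact hA.union (h.isConnectedSet_inter d hne)
      ((h.touches_inter hne).mono (Set.singleton_subset_iff.2 he) subset_rfl)

theorem IsExit.mem_union_inter (h : T.IsExit B d e) (he : e ∈ A) : d ∈ A ∪ B ∩ T.path d := by
  by_cases hd : d ∈ B
  exacts [.inr ⟨hd, mem_path_self d⟩, .inl (h.eq_of_notMem hd ▸ he)]

namespace IsPocket

theorem symm (h : T.IsPocket x z s Z B) : T.IsPocket z x s Z B where
  left_ne_root := h.right_ne_root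
  right_ne_root := h.left_ne_root
  isComponent := T.fence_comm x z ▸ h.isComponent
  mem_path_left := h.mem_path_right
  mem_path_right := h.mem_path_left
  dist_le := h.dist_le
  notMem_of_mem := h.notMem_of_mem
  dist_lt a ha hax := h.dist_lt a ha (T.fence_comm x z ▸ hax)
  joined := h.joined.imp (fun hj => ⟨hj.1, hj.2.imp Eq.symm SimpleGraph.Adj.symm⟩)
    fun hj => ⟨hj.1, hj.2.2, hj.2.1⟩

theorem isConnectedSet_union (h : T.IsPocket x z s Z B) (hA : IsConnectedSet G A) (hz : z ∈ A) :
    IsConnectedSet G (A ∪ Z) := by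
  obtain ⟨rfl, -⟩ | ⟨hZ, -, hZz⟩ := h.joined
  · rwa [Set.union_empty]
  · exact hA.union hZ (hZz.mono subset_rfl (Set.singleton_subset_iff.2 hz)).symm

theorem touches_union (h : T.IsPocket x z s Z B) (hxz : x ≠ z) (hz : z ∈ A) :
    Touches G (A ∪ Z) {x} := by
  obtain ⟨-, hadj⟩ | ⟨-, hZx, -⟩ := h.joined
  · exact ⟨z, .inl hz, x, rfl, (hadj.resolve_left hxz).symm⟩
  · exact hZx.mono Set.subset_union_right subset_rfl

end IsPocket

namespace IsGate

theorem left_ne_right (g : T.IsGate x z s B b b' e e') : x ≠ z :=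
  ne_of_mem_of_not_mem (mem_path_self x) g.right_notMem_path

theorem exit_ne_root' (g : T.IsGate x z s B b b' e e') : e' ≠ r :=
  (ne_of_mem_of_not_mem (root_mem_path x) g.exit_notMem_path').symm

theorem right_ne_root (g : T.IsGate x z s B b b' e e') : b' ≠ r := fun hb' =>
  g.exit_ne_root' (eq_root_of_mem_path_root (hb' ▸ g.exit'.mem_path))

theorem left_ne_root (g : T.IsGate x z s B b b' e e') (h : T.IsPocket x z s Z B) : b ≠ r := by
  rintro rfl
  have hb' : b' ∈ B := g.mem_or_mem.resolve_left h.root_notMem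
  have hdist : G.dist b b' = 1 := SimpleGraph.dist_eq_one_iff_adj.2 g.adj
  have hlt := (g.exit'.mem_iff b' (mem_path_self b')).1 hb'
  exact g.exit_ne_root' (T.dist_eq_zero_iff.1 (by lia))

theorem mem_path_left (g : T.IsGate x z s B b b' e e') (h : T.IsPocket x z s Z B) :
    s ∈ T.path b :=
  path_subset_of_mem g.exit.mem_path
    (mem_path_of_dist_le h.mem_path_left g.exit_mem_path g.dist_le_exit)

theorem mem_path_right (g : T.IsGate x z s B b b' e e') (h : T.IsPocket x z s Z B) :
    s ∈ T.path b' :=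
  path_subset_of_mem g.exit'.mem_path <| mem_path_of_dist_le h.mem_path_right g.exit_mem_path'
    ((g.dist_lt_forkLevel h).le.trans g.forkLevel_le_dist)

theorem dist_le_of_mem_outerBoundary (g : T.IsGate x z s B b b' e e') (h : T.IsPocket x z s Z B)
    (hD : IsComponent G (T.fence x z ∪ T.fence b b') D) (hDB : D ⊆ B) {q : V}
    (hq : q ∈ outerBoundary G D) : G.dist r s ≤ G.dist r q := by
  by_cases hqB : q ∈ B
  · rcases (hD.outerBoundary_subset hq).resolve_left (h.isComponent.2.1 q hqB) with hqb | hqb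
    · exact g.dist_le_exit.trans (dist_le_of_mem_path (g.exit.mem_path_of_mem hqb hqB))
    · exact (g.dist_lt_forkLevel h).le.trans <|
        g.forkLevel_le_dist.trans (dist_le_of_mem_path (g.exit'.mem_path_of_mem hqb hqB))
  · obtain ⟨-, a, ha, haq⟩ := hq
    exact h.dist_le q ⟨hqB, a, hDB ha, haq⟩

theorem isPocket_of_subset_fence (g : T.IsGate x z s B b b' e e') (h : T.IsPocket x z s Z B)
    (hD : IsComponent G (T.fence x z ∪ T.fence b b') D) (hDB : D ⊆ B)
    (hsub : outerBoundary G D ⊆ T.fence b b') : T.IsPocket b b' s ∅ D where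
  left_ne_root := g.left_ne_root h
  right_ne_root := g.right_ne_root
  isComponent := hD.1.isComponent (fun a ha hab => hD.2.1 a ha (.inr hab)) hsub
  mem_path_left := g.mem_path_left h
  mem_path_right := g.mem_path_right h
  dist_le _ := g.dist_le_of_mem_outerBoundary h hD hDB
  notMem_of_mem := by simp
  dist_lt := by simp
  joined := .inl ⟨rfl, .inr g.adj⟩

theorem notMem_of_mem_union (h : T.IsPocket x z s Z B)
    (hD : IsComponent G (T.fence x z ∪ T.fence b b') D) (hDB : D ⊆ B)
    (hA : A ⊆ T.fence x z) (hd : d = b ∨ d = b') {a : V} (ha : a ∈ A ∪ B ∩ T.path d ∪ Z) :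
    a ∉ D := by
  intro haD
  rcases ha with (ha | ha) | ha
  · exact hD.2.1 a haD (.inl (hA ha))
  · rcases hd with rfl | rfl
    exacts [hD.2.1 a haD (.inr (.inl ha.2)), hD.2.1 a haD (.inr (.inr ha.2))]
  · exact h.notMem_of_mem a ha (hDB haD)

theorem exists_isPocket_left (g : T.IsGate x z s B b b' e e') (h : T.IsPocket x z s Z B)
    (hD : IsComponent G (T.fence x z ∪ T.fence b b') D) (hDB : D ⊆ B)
    (hsub : outerBoundary G D ⊆ T.fence x b) : ∃ Z', T.IsPocket x b s Z' D := by
  set A := T.segment z (Set.Ici (T.forkLevel x z))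
  have hAx (a : V) (ha : a ∈ A) : a ∉ T.path x := mt (g.mem_path_left_iff ha.1).1 (not_lt.2 ha.2)
  have he : e' ∈ A := ⟨g.exit_mem_path', g.forkLevel_le_dist⟩
  have hz : z ∈ A := ⟨mem_path_self z,
    g.forkLevel_le_dist.trans (dist_le_of_mem_path g.exit_mem_path')⟩
  have hconn := g.exit'.isConnectedSet_union_inter
    (isConnectedSet_segment Set.ordConnected_Ici ⟨e', he⟩) he
  refine ⟨A ∪ B ∩ T.path b' ∪ Z, h.left_ne_root, g.left_ne_root h,
    hD.1.isComponent (fun a ha hab => ?_) hsub, h.mem_path_left, g.mem_path_left h,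
    fun _ => g.dist_le_of_mem_outerBoundary h hD hDB,
    fun a => notMem_of_mem_union h hD hDB (fun c hc => .inr hc.1) (.inr rfl), fun a ha hab => ?_,
    .inr ⟨h.isConnectedSet_union hconn (.inl hz), h.touches_union g.left_ne_right (.inl hz), ?_⟩⟩
  · exact hD.2.1 a ha (hab.imp .inl .inl)
  · have hbx (hb : a ∈ T.path b) (haB : a ∉ B) : a ∈ T.path x :=
      (g.mem_or_mem_path_left hb).resolve_left haB
    rcases ha with (ha | ha) | ha
    · exact absurd (hab.elim id fun hb => hbx hb fun haB => h.notMem_path_right haB ha.1)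
        (hAx a ha)
    · rcases hab with hax | hb
      exacts [absurd hax (h.notMem_path_left ha.1), absurd ha.2 (g.notMem_path_right g ha.1 hb)]
    · exact h.dist_lt a ha (.inl (hab.elim id fun hb => hbx hb (h.notMem_of_mem a ha)))
  · exact ⟨b', .inl (g.exit'.mem_union_inter he), b, rfl, g.adj.symm⟩

theorem forkLevel_le_of_mem_fence (g : T.IsGate x z s B b b' e e') {q : V}
    (hq : q ∈ T.fence z b') (hqx : q ∉ T.path x) : T.forkLevel x z ≤ G.dist r q := by
  have hpath (hqz : q ∈ T.path z) : T.forkLevel x z ≤ G.dist r q :=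
    not_lt.1 (mt (g.mem_path_left_iff hqz).2 hqx)
  rcases hq with hq | hqb
  · exact hpath hq
  · rcases g.mem_or_mem_path_right hqb with hqB | hq
    exacts [g.forkLevel_le_dist.trans (dist_le_of_mem_path (g.exit'.mem_path_of_mem hqb hqB)),
      hpath hq]

theorem exists_isPocket_right (g : T.IsGate x z s B b b' e e') (h : T.IsPocket x z s Z B)
    (hD : IsComponent G (T.fence x z ∪ T.fence b b') D) (hDB : D ⊆ B)
    (hdisj : Disjoint (outerBoundary G D) (T.fence x b)) : ∃ t Z', T.IsPocket z b' t Z' D := by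
  obtain ⟨t, htz, -, ht⟩ := exists_dist_eq_forkLevel g.right_notMem_path
  have hst := g.dist_lt_forkLevel h
  set A := T.segment x (Set.Ici (G.dist r s))
  have he : e ∈ A := ⟨g.exit_mem_path, g.dist_le_exit⟩
  have hx : x ∈ A := ⟨mem_path_self x, dist_le_of_mem_path h.mem_path_left⟩
  have hconn := g.exit.isConnectedSet_union_inter
    (isConnectedSet_segment Set.ordConnected_Ici ⟨e, he⟩) he
  have hsub : outerBoundary G D ⊆ T.fence z b' := fun q hq => by
    have hqn := Set.disjoint_left.1 hdisj hq
    rcases hD.outerBoundary_subset hq with (hqx | hqz) | hqb | hqb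
    exacts [absurd (.inl hqx) hqn, .inl hqz, absurd (.inr hqb) hqn, .inr hqb]
  have htb : t ∈ T.path b' := path_subset_of_mem g.exit'.mem_path
    (mem_path_of_dist_le htz g.exit_mem_path' (ht.trans_le g.forkLevel_le_dist))
  refine ⟨t, A ∪ B ∩ T.path b ∪ Z, h.right_ne_root, g.right_ne_root,
    hD.1.isComponent (fun a ha hab => hD.2.1 a ha (hab.imp .inr .inr)) hsub, htz, htb,
    fun q hq => ht ▸ g.forkLevel_le_of_mem_fence (hsub hq) fun hqx =>
      Set.disjoint_left.1 hdisj hq (.inl hqx),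
    fun a => notMem_of_mem_union h hD hDB (fun c hc => .inl hc.1) (.inl rfl), fun a ha hab => ?_,
    .inr ⟨h.symm.isConnectedSet_union hconn (.inl hx),
      h.symm.touches_union g.left_ne_right.symm (.inl hx), ?_⟩⟩
  · have hbz (hb : a ∈ T.path b') (haB : a ∉ B) : a ∈ T.path z :=
      (g.mem_or_mem_path_right hb).resolve_left haB
    rw [ht]
    rcases ha with (ha | ha) | ha
    · exact (g.mem_path_right_iff ha.1).1 <|
        hab.elim id fun hb => hbz hb fun haB => h.notMem_path_left haB ha.1
    · rcases hab with haz | hb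
      exacts [absurd haz (h.notMem_path_right ha.1), absurd hb (g.notMem_path_right g ha.1 ha.2)]
    · exact (h.dist_lt a ha
        (.inr (hab.elim id fun hb => hbz hb (h.notMem_of_mem a ha)))).trans hst
  · exact ⟨b, .inl (g.exit.mem_union_inter he), b', rfl, g.adj⟩

end IsGate

end BFSTree

/-! ### Counting the vertices -/

namespace BFSTree

variable {V : Type*} {G : SimpleGraph V} {r x z s b b' e e' : V} {T : BFSTree G r}
  {Z B D X : Set V} {P P' low left right : Set V → Prop}

/-- The union of the components off `X` that satisfy `P` and meet `B`, restricted to `B`. -/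
def cell (G : SimpleGraph V) (X B : Set V) (P : Set V → Prop) : Set V :=
  {w ∈ B | ∃ D, IsComponent G X D ∧ w ∈ D ∧ P D}

theorem disjoint_cell (h : ∀ D, P D → ¬ P' D) : Disjoint (cell G X B P) (cell G X B P') :=
  Set.disjoint_left.2 fun _ ⟨_, D, hD, hwD, hP⟩ ⟨_, _, hD', hwD', hP'⟩ =>
    h D hP (hD.eq_of_mem hD' hwD hwD' ▸ hP')

theorem disjoint_cell_self : Disjoint (cell G X B P) X :=
  Set.disjoint_left.2 fun w ⟨_, _, hD, hwD, _⟩ => hD.2.1 w hwD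

/-- The four regions into which the vertices other than `r` are divided: the outside of `B`, the
part of `X` in `B` together with the cell of `low`, and the cells of `left` and `right`. -/
def region (G : SimpleGraph V) (r : V) (X B : Set V) (low left right : Set V → Prop) :
    Fin 4 → Set V :=
  ![{w | w ≠ r ∧ w ∉ B}, B ∩ X ∪ cell G X B low, cell G X B left, cell G X B right]

theorem exists_mem_region (hall : ∀ D, low D ∨ left D ∨ right D) {w : V} (hw : w ≠ r) :
    ∃ i, w ∈ region G r X B low left right i := by
  by_cases hwB : w ∈ B
  · by_cases hwX : w ∈ X
    · exact ⟨1, .inl ⟨hwB, hwX⟩⟩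
    · obtain ⟨D, hD, hwD⟩ := exists_isComponent G hwX
      obtain hlow | hleft | hright := hall D
      · exact ⟨1, .inr ⟨hwB, D, hD, hwD, hlow⟩⟩
      · exact ⟨2, hwB, D, hD, hwD, hleft⟩
      · exact ⟨3, hwB, D, hD, hwD, hright⟩
  · exact ⟨0, hw, hwB⟩

theorem pairwise_disjoint_region (hll : ∀ D, low D → ¬ left D) (hlr : ∀ D, low D → ¬ right D)
    (hlr' : ∀ D, left D → ¬ right D) :
    Pairwise fun i j => Disjoint (region G r X B low left right i)
      (region G r X B low left right j) := by
  have hcompl {Q : Set V} (hQ : Q ⊆ B) : Disjoint {w | w ≠ r ∧ w ∉ B} Q :=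
    Set.disjoint_left.2 fun w hw hwQ => hw.2 (hQ hwQ)
  have hcell (P : Set V → Prop) : cell G X B P ⊆ B := fun w hw => hw.1
  have hX (P : Set V → Prop) : Disjoint (B ∩ X) (cell G X B P) :=
    (disjoint_cell_self.mono_right Set.inter_subset_right).symm
  refine (pairwise_disjoint_on _).2 fun i j hij => ?_
  fin_cases i <;> fin_cases j <;> try exact absurd hij (by decide)
  · exact hcompl (Set.union_subset Set.inter_subset_left (hcell low))
  · exact hcompl (hcell left)
  · exact hcompl (hcell right)
  · exact (hX left).union_left (disjoint_cell hll)
  · exact (hX right).union_left (disjoint_cell hlr)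
  · exact disjoint_cell hlr'

theorem IsPocket.subset_of_mem (h : T.IsPocket x z s Z B)
    (hD : IsComponent G (T.fence x z ∪ X) D) {w : V} (hwD : w ∈ D) (hwB : w ∈ B) : D ⊆ B :=
  h.isComponent.subset hD.1 (fun a ha hax => hD.2.1 a ha (.inl hax)) ⟨w, hwD, hwB⟩

theorem IsGate.ssubset (g : T.IsGate x z s B b b' e e')
    (hD : IsComponent G (T.fence x z ∪ T.fence b b') D) (hDB : D ⊆ B) : D ⊂ B := by
  obtain ⟨w, hwB, hw⟩ := g.isConnectedSet_inter_fence.nonempty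
  exact ⟨hDB, fun hBD => hD.2.1 w (hBD hwB) (.inr hw)⟩

end BFSTree

namespace Setting

open BFSTree

variable {V : Type*} {G : SimpleGraph V} {r x z s b b' e e' p q : V} {T : Setting G r}
  {Z B F Q X : Set V} {P : Set V → Prop}

theorem isCheap_of_forall_isPocket [Finite V] (h : T.IsMinimalPocket x z s Z B) (hp : p ≠ r)
    (hq : q ≠ r) (hr : r ∉ Q) (hQ : ∀ w ∈ Q, w ∉ T.fence p q → ∃ D t Z',
      T.IsPocket p q t Z' D ∧ w ∈ D ∧ D ⊆ Q ∧ D ⊂ B) :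
    Nat.card V ≤ 6 * snTwo G r + 1 ∨ T.IsCheap p q Q := by
  have hpocket {K : Set V} (hK : IsComponent G (T.fence p q) K) (hKQ : (K ∩ Q).Nonempty) :
      K ⊆ Q ∧ ¬ T.IsCritical p q K := by
    obtain ⟨w, hwK, hwQ⟩ := hKQ
    obtain ⟨D, t, Z', hD, hwD, hDQ, hDB⟩ := hQ w hwQ (hK.2.1 w hwK)
    obtain rfl := hK.eq_of_mem hD.isComponent hwK hwD
    exact ⟨hDQ, fun hcrit => (h.ncard_le _ _ _ _ _ hD hcrit).not_gt
      (Set.ncard_lt_ncard hDB (Set.toFinite _))⟩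
  exact isCheap_of_forall_not_isCritical hp hq hr (fun K hK hKQ => (hpocket hK hKQ).1)
    fun K hK hKQ => (hpocket hK hKQ).2

theorem isCheap_union_cell [Finite V] (h : T.IsMinimalPocket x z s Z B)
    (g : T.IsGate x z s B b b' e e') (hp : p ≠ r) (hq : q ≠ r) (hFB : F ⊆ B)
    (hF : F ⊆ T.fence p q) (hP : ∀ D, IsComponent G (T.fence x z ∪ T.fence b b') D → D ⊆ B →
      P D → ∃ t Z', T.IsPocket p q t Z' D) :
    Nat.card V ≤ 6 * snTwo G r + 1 ∨
      T.IsCheap p q (F ∪ cell G (T.fence x z ∪ T.fence b b') B P) := by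
  refine isCheap_of_forall_isPocket h hp hq (fun hr => ?_) fun w hw hwf => ?_
  · exact h.root_notMem (hr.elim (@hFB r) And.left)
  · obtain ⟨hwB, D, hD, hwD, hPD⟩ := hw.resolve_left fun hwF => hwf (hF hwF)
    have hDB := h.subset_of_mem hD hwD hwB
    obtain ⟨t, Z', hpocket⟩ := hP D hD hDB hPD
    exact ⟨D, t, Z', hpocket, hwD, fun a ha => .inr ⟨hDB ha, D, hD, ha, hPD⟩, g.ssubset hD hDB⟩

theorem card_le_two_of_forall_rootNeighbors_nonempty {ι : Type*} (T : Setting G r)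
    {Q : ι → Set V} {p q : ι → V}
    (hp : ∀ i, p i ≠ r) (hq : ∀ i, q i ≠ r) (hdisj : Pairwise fun i j => Disjoint (Q i) (Q j))
    (hX : ∀ i, T.fence (p i) (q i) ⊆ X) (hQX : ∀ i, Q i ∩ X ⊆ T.fence (p i) (q i))
    {S : Finset ι} (hbranch : ∀ i ∈ S, T.branch (p i) ≠ T.branch (q i))
    (hne : ∀ i ∈ S, (T.rootNeighbors (p i) (q i) (Q i)).Nonempty) : S.card ≤ 2 := by
  by_contra! hlt
  obtain ⟨i, hi, j, hj, k, hk, hij, hik, hjk⟩ := Finset.two_lt_card.1 hlt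
  have hwitness (m : ι) (hm : m ∈ S) : ∃ v ∈ Q m, v ∉ X ∧ G.dist r v = 1 := by
    obtain ⟨v, hvQ, hvf, hv⟩ := hne m hm
    exact ⟨v, hvQ, fun hvX => hvf (hQX m ⟨hvQ, hvX⟩), hv⟩
  obtain ⟨u, huQ, huX, hu⟩ := hwitness i hi
  obtain ⟨v, hvQ, hvX, hv⟩ := hwitness j hj
  obtain ⟨w, hwQ, hwX, hw⟩ := hwitness k hk
  have hpX := hX i (.inl (T.branch_mem_path (p i)))
  have hqX := hX i (.inr (T.branch_mem_path (q i)))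
  have hfive := T.length_le_four (l := [T.branch (p i), T.branch (q i), u, v, w])
    (by simp only [List.forall_mem_cons]
        exact ⟨T.dist_branch (hp i), T.dist_branch (hq i), hu, hv, hw, by simp⟩)
    (by simp only [List.nodup_cons, List.mem_cons, List.not_mem_nil, or_false, not_or]
        exact ⟨⟨hbranch i hi, ne_of_mem_of_not_mem hpX huX, ne_of_mem_of_not_mem hpX hvX,
          ne_of_mem_of_not_mem hpX hwX⟩, ⟨ne_of_mem_of_not_mem hqX huX,
          ne_of_mem_of_not_mem hqX hvX, ne_of_mem_of_not_mem hqX hwX⟩,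
          ⟨(hdisj hij).ne_of_mem huQ hvQ, (hdisj hik).ne_of_mem huQ hwQ⟩,
          (hdisj hjk).ne_of_mem hvQ hwQ, by simp⟩)
  simp at hfive

theorem card_le_of_forall_isCheap [Finite V] {ι : Type*} [Fintype ι] (T : Setting G r)
    {Q : ι → Set V} {p q : ι → V} (hcover : ∀ w ≠ r, ∃ i, w ∈ Q i)
    (hdisj : Pairwise fun i j => Disjoint (Q i) (Q j)) (hp : ∀ i, p i ≠ r) (hq : ∀ i, q i ≠ r)
    (hX : ∀ i, T.fence (p i) (q i) ⊆ X) (hQX : ∀ i, Q i ∩ X ⊆ T.fence (p i) (q i))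
    (hcheap : ∀ i, T.IsCheap (p i) (q i) (Q i)) :
    Nat.card V ≤ (Fintype.card ι + 2) * snTwo G r + 1 := by
  classical
  set S : Finset ι := {i | snTwo G r < (Q i).ncard}
  have hS (i : ι) (hi : i ∈ S) := (hcheap i).resolve_left (by simpa [S] using hi)
  have hcard : S.card ≤ 2 := T.card_le_two_of_forall_rootNeighbors_nonempty hp hq hdisj hX hQX
    (fun i hi => (hS i hi).2.1) fun i hi => (hS i hi).2.2
  have hle (i : ι) : (Q i).ncard ≤ snTwo G r + if i ∈ S then snTwo G r else 0 := by
    split_ifs with hi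
    · exact (hcheap i).ncard_le.trans (by lia)
    · simpa [S] using hi
  calc Nat.card V ≤ (⋃ i, Q i).ncard + 1 :=
        card_le_ncard_add_one fun w hw => Set.mem_iUnion.2 (hcover w hw)
    _ ≤ (∑ i, (Q i).ncard) + 1 := by
        simpa using Finset.set_ncard_biUnion_le Finset.univ Q
    _ ≤ (∑ i, (snTwo G r + if i ∈ S then snTwo G r else 0)) + 1 := by
        gcongr with i
        exact hle i
    _ = (Fintype.card ι + S.card) * snTwo G r + 1 := by
        simp [Finset.sum_add_distrib, add_mul]
    _ ≤ (Fintype.card ι + 2) * snTwo G r + 1 := by gcongr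

theorem card_le_of_forall_isCheap_region [Finite V] (h : T.IsPocket x z s Z B) (hx : x ≠ r)
    (hz : z ≠ r) (g : T.IsGate x z s B b b' e e') {low left right : Set V → Prop}
    (hll : ∀ D, low D → ¬ left D) (hlr : ∀ D, low D → ¬ right D) (hlr' : ∀ D, left D → ¬ right D)
    (hall : ∀ D, low D ∨ left D ∨ right D)
    (hcheap : ∀ i, T.IsCheap (![x, b, x, z] i) (![z, b', b, b'] i)
      (region G r (T.fence x z ∪ T.fence b b') B low left right i)) :
    Nat.card V ≤ 6 * snTwo G r + 1 := by
  set X := T.fence x z ∪ T.fence b b'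
  have hcell (P : Set V → Prop) (F : Set V) : cell G X B P ∩ X ⊆ F := by
    simp only [disjoint_cell_self.inter_eq, Set.empty_subset]
  have hcompl : {w | w ≠ r ∧ w ∉ B} ∩ X ⊆ T.fence x z := by
    rintro w ⟨⟨-, hwB⟩, hwf | hwb | hwb'⟩
    · exact hwf
    · exact .inl ((g.mem_or_mem_path_left hwb).resolve_left hwB)
    · exact .inr ((g.mem_or_mem_path_right hwb').resolve_left hwB)
  have hlow : (B ∩ X ∪ cell G X B low) ∩ X ⊆ T.fence b b' := by
    rw [Set.union_inter_distrib_right]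
    exact Set.union_subset (fun w hw => hw.2.resolve_left (h.isComponent.2.1 w hw.1.1)) (hcell _ _)
  have hb := g.left_ne_root h
  have hb' := g.right_ne_root
  refine T.card_le_of_forall_isCheap (X := X) (fun w => exists_mem_region hall)
    (pairwise_disjoint_region hll hlr hlr') ?_ ?_ ?_ ?_ hcheap
  · simp [Fin.forall_fin_succ, hx, hz, hb]
  · simp [Fin.forall_fin_succ, hz, hb, hb']
  · intro i
    fin_cases i
    exacts [Set.subset_union_left, Set.subset_union_right,
      Set.union_subset_union Set.subset_union_left Set.subset_union_left,
      Set.union_subset_union Set.subset_union_right Set.subset_union_right]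
  · intro i
    fin_cases i
    exacts [hcompl, hlow, hcell _ _, hcell _ _]

theorem card_le [Finite V] (T : Setting G r) : Nat.card V ≤ 6 * snTwo G r + 1 := by
  obtain hcard | ⟨x, z, s, Z, B, h⟩ := T.exists_isMinimalPocket
  · exact hcard
  obtain hcard | ⟨b, b', e, e', g, hres⟩ := exists_isGate_forall_isResolved h
  · exact hcard
  have hpocket := h.toIsPocket
  have hb := g.left_ne_root hpocket
  have hb' := g.right_ne_root
  set X := T.fence x z ∪ T.fence b b'
  set low := fun D => outerBoundary G D ⊆ T.fence b b'
  set left := fun D => ¬ low D ∧ outerBoundary G D ⊆ T.fence x b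
  set right := fun D => ¬ low D ∧ ¬ left D
  obtain hcard | hcompl :=
    isCheap_compl_of_isCritical h.left_ne_root h.right_ne_root h.isComponent h.isCritical
  · exact hcard
  obtain hcard | hlow := isCheap_union_cell (F := B ∩ X) (P := low) h g hb hb'
    Set.inter_subset_left (fun w hw => hw.2.resolve_left (h.isComponent.2.1 w hw.1))
    fun D hD hDB hlow => ⟨s, ∅, g.isPocket_of_subset_fence hpocket hD hDB hlow⟩
  · exact hcard
  obtain hcard | hleft := isCheap_union_cell (P := left) h g h.left_ne_root hb (Set.empty_subset _)
    (Set.empty_subset _) fun D hD hDB hleft =>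
      ⟨s, g.exists_isPocket_left hpocket hD hDB hleft.2⟩
  · exact hcard
  obtain hcard | hright := isCheap_union_cell (P := right) h g h.right_ne_root hb'
    (Set.empty_subset _) (Set.empty_subset _) fun D hD hDB hright =>
      g.exists_isPocket_right hpocket hD hDB <| ((hres D hD hDB).resolve_left hright.1).resolve_left
        fun hsub => hright.2 ⟨hright.1, hsub⟩
  · exact hcard
  rw [Set.empty_union] at hleft hright
  refine card_le_of_forall_isCheap_region (left := left) (right := right) hpocket h.left_ne_root
    h.right_ne_root g (fun _ hD hD' => hD'.1 hD) (fun _ hD hD' => hD'.1 hD)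
    (fun _ hD hD' => hD'.2 hD)
    (fun D => (em (low D)).imp_right fun hD => (em (left D)).imp_right fun hD' => ⟨hD, hD'⟩)
    fun i => ?_
  fin_cases i
  exacts [hcompl, hlow, hleft, hright]

end Setting

/-! ### Existence of a suitable breadth-first search tree -/

section Existence

variable {V α : Type*} {G : SimpleGraph V} {r v : V}

theorem exists_adj_dist_add_one (hconn : G.Connected) (hv : v ≠ r) :
    ∃ u, G.Adj u v ∧ G.dist r u + 1 = G.dist r v := by
  obtain ⟨p, hp⟩ := hconn.exists_walk_length_eq_dist v r
  cases p with
  | nil => exact absurd rfl hv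
  | @cons _ u _ hvu q =>
    have hle := dist_le_of_adj (r := r) hvu.symm
    have hq := SimpleGraph.dist_le q
    rw [SimpleGraph.Walk.length_cons, SimpleGraph.dist_comm] at hp
    rw [SimpleGraph.dist_comm] at hq
    exact ⟨u, hvu.symm, by lia⟩

/- The parent is the predecessor on a geodesic through the best neighbour of `r`, so that this
neighbour stays available one level down. -/
theorem exists_adj_forall_exists_rank_le [LinearOrder α] [WellFoundedLT α] (hconn : G.Connected)
    (rank : V → α) (hv : v ≠ r) :
    ∃ u, G.Adj u v ∧ G.dist r u + 1 = G.dist r v ∧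
      (u ≠ r → ∀ w, G.Adj r w → G.dist w v < G.dist r v →
        ∃ w', G.Adj r w' ∧ G.dist w' u < G.dist r u ∧ rank w' ≤ rank w) := by
  obtain ⟨w₀, hw₀, hdist⟩ := exists_adj_dist_add_one hconn hv.symm
  rw [SimpleGraph.dist_comm, SimpleGraph.dist_comm (v := r)] at hdist
  obtain ⟨w, ⟨hrw, hwv⟩, hmin⟩ := exists_minimalFor_of_wellFoundedLT
    (fun w => G.Adj r w ∧ G.dist w v < G.dist r v) rank ⟨w₀, hw₀.symm, by lia⟩
  obtain rfl | hvw := eq_or_ne v w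
  · exact ⟨r, hrw, by simp [SimpleGraph.dist_eq_one_iff_adj.2 hrw], fun h => absurd rfl h⟩
  obtain ⟨u, huv, hwu⟩ := exists_adj_dist_add_one hconn hvw
  have htriangle := hconn.dist_triangle (u := r) (v := w) (w := u)
  rw [SimpleGraph.dist_eq_one_iff_adj.2 hrw] at htriangle
  have hle := dist_le_of_adj (r := r) huv
  exact ⟨u, huv, by lia, fun _ w' hrw' hwv' => ⟨w, hrw, by lia,
    (le_total (rank w) (rank w')).elim id (hmin ⟨hrw', hwv'⟩)⟩⟩

theorem exists_bfsTree_rank_branch_le [LinearOrder α] [WellFoundedLT α] (hconn : G.Connected)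
    (r : V) (rank : V → α) : ∃ T : BFSTree G r,
      ∀ v ≠ r, ∀ w, G.Adj r w → G.dist w v < G.dist r v → rank (T.branch v) ≤ rank w := by
  classical
  choose! parent hadj hdist hrank using
    fun v (hv : v ≠ r) => exists_adj_forall_exists_rank_le hconn rank hv
  set T : BFSTree G r :=
    { parent := Function.update parent r r
      parent_root := Function.update_self ..
      adj_parent := fun v hv => by rw [Function.update_of_ne hv]; exact hadj v hv
      dist_parent := fun v hv => by rw [Function.update_of_ne hv]; exact hdist v hv }
  have hparent {v : V} (hv : v ≠ r) : T.parent v = parent v := Function.update_of_ne hv ..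
  refine ⟨T, fun v hv w hrw hwv => ?_⟩
  induction hn : G.dist r v generalizing v w with
  | zero => lia
  | succ n ih =>
    obtain hpar | hpar := eq_or_ne (T.parent v) r
    · have hrv := hdist v hv
      rw [← hparent hv, hpar, SimpleGraph.dist_self] at hrv
      have hwv' : w = v := hconn.dist_eq_zero_iff.1 (by lia)
      simp [BFSTree.branch, ← hrv, hwv']
    · obtain ⟨w', hrw', hlt, hle⟩ := hrank v hv (hparent hv ▸ hpar) w hrw hwv
      rw [← hparent hv] at hlt
      have := T.dist_parent v hv
      rw [← T.branch_eq_of_mem_path (T.parent_mem_path (T.mem_path_self v)) hpar]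
      exact (ih _ hpar w' hrw' hlt (by lia)).trans hle

theorem exists_setting [Finite V] (hconn : G.Connected)
    (h33 : ¬ IsMinor (completeBipartiteGraph (Fin 3) (Fin 3)) G)
    (h5 : ¬ IsMinor (⊤ : SimpleGraph (Fin 5)) G) (hr : (G.neighborSet r).ncard = 4)
    (hnbr : {w | G.Adj r w ∧ 5 < (G.neighborSet w).ncard}.Subsingleton) :
    Nonempty (Setting G r) := by
  obtain ⟨n, ⟨e⟩⟩ := Finite.exists_equiv_fin V
  set rank : V → ℕ := fun w => if 5 < (G.neighborSet w).ncard then n else e w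
  obtain ⟨T, hT⟩ := exists_bfsTree_rank_branch_le hconn r rank
  refine ⟨{ T with
    rank := rank
    rank_injOn := fun a ha b hb hab => ?_
    ncard_neighborSet_le := fun a _ b _ hab => ?_
    rank_branch_le := hT
    not_isMinor_bipartite := h33
    not_isMinor_five := h5
    ncard_neighborSet_root := hr }⟩
  · simp only [rank] at hab
    split_ifs at hab with hlarge hlarge' hlarge'
    · exact hnbr ⟨ha, hlarge⟩ ⟨hb, hlarge'⟩
    · lia
    · lia
    · exact e.injective (Fin.ext hab)
  · simp only [rank] at hab
    split_ifs at hab <;> lia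

end Existence

end Firefighter

theorem sn_two_of_degree_eq_four_general {V : Type*} [Fintype V] {G : SimpleGraph V}
    [DecidableRel G.Adj] (hconn : G.Connected)
    (h33 : ¬ Firefighter.IsMinor (completeBipartiteGraph (Fin 3) (Fin 3)) G)
    (h5 : ¬ Firefighter.IsMinor (⊤ : SimpleGraph (Fin 5)) G) {r : V} (hr : G.degree r = 4)
    (hnbr : ((G.neighborFinset r).filter fun w => 5 < G.degree w).card ≤ 1) :
    (Fintype.card V : ℝ) ≤ 6 * sn G (fun _ => 2) r + 1 := by
  have hdegree (v : V) : (G.neighborSet v).ncard = G.degree v := by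
    rw [Set.ncard_eq_toFinset_card', ← G.neighborFinset_def, G.card_neighborFinset_eq_degree]
  have hlarge : {w | G.Adj r w ∧ 5 < (G.neighborSet w).ncard}.Subsingleton :=
    fun a ha b hb => Finset.card_le_one.1 hnbr a (by simpa [hdegree] using ha) b
      (by simpa [hdegree] using hb)
  obtain ⟨T⟩ := Firefighter.exists_setting hconn h33 h5 ((hdegree r).trans hr) hlarge
  rw [← Nat.card_eq_fintype_card]
  exact mod_cast T.card_le

/-- Lemma 3.2: if the fire starts at a vertex of degree 4 with at most one neighbour of
degree greater than 5, in a connected planar graph on `n ≥ 5` vertices, two firefighters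
can save more than `n/6 - 1` vertices. -/
theorem sn_two_of_degree_eq_four {V : Type} [Fintype V] [DecidableEq V] (G : SimpleGraph V)
    [DecidableRel G.Adj] (hconn : G.Connected) (hplanar : IsPlanar G)
    (hn : 5 ≤ Fintype.card V) (r : V) (hr : G.degree r = 4)
    (hnbr : ((G.neighborFinset r).filter fun w => 5 < G.degree w).card ≤ 1) :
    ((sn G (fun _ => 2) r : ℝ)) > (Fintype.card V : ℝ) / 6 - 1 := by
  linarith [sn_two_of_degree_eq_four_general hconn
    (Firefighter.not_isMinor_completeBipartiteGraph hplanar)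
    (Firefighter.not_isMinor_completeGraph_five hplanar) hr hnbr]
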